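/- arXiv:2010.01860 — 2 statements merged into one kernel-verified Lean document; each statement's English description precedes it below -/
import Mathlib

section
/- Let d = 3 and r = 1, and let σ₀, σ₁ be permutations of {1, 2, 3} such that one of them is a transposition and the other is a 3-cycle. For every irrational α ∈ (0,1) with bounded partial quotients, there exists an irrational β ∈ (0,1) with β ∉ ℤ + αℤ (in particular β ≠ 1 − α) such that the generalized Veech–Sataev system T built from α, the single marked point β, and the permutations σ₀, σ₁ is rigid with respect to every T-invariant Borel probability measure. -/
open MeasureTheory Filter Set
open scoped ENNReal symmDiff Classical

noncomputable section

/-! ### Generic measurable dynamics -/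

/-- `(X, T, μ)` is rigid: for some sequence `q n → ∞`, `μ (T^[q n] '' A ∆ A) → 0`
for every measurable set `A`. -/
def Rigid {X : Type*} [MeasurableSpace X] (T : X → X) (μ : Measure X) : Prop :=
  ∃ q : ℕ → ℕ, Tendsto q atTop atTop ∧
    ∀ A : Set X, MeasurableSet A →
      Tendsto (fun n => μ (((T^[q n]) '' A) ∆ A)) atTop (nhds 0)

/-- `T` is uniquely ergodic: it admits exactly one invariant Borel probability measure. -/
def UniquelyErgodicMap {X : Type*} [MeasurableSpace X] (T : X → X) : Prop :=
  ∃! μ : Measure X, IsProbabilityMeasure μ ∧ MeasurePreserving T μ μ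

/-- `(X, T, μ)` is of rank one. -/
def RankOne {X : Type*} [MeasurableSpace X] (T : X → X) (μ : Measure X) : Prop :=
  ∃ F : ℕ → Set X, ∃ h : ℕ → ℕ, (∀ n, 1 ≤ h n) ∧ (∀ n, MeasurableSet (F n)) ∧
    (∀ n, ∀ i < h n, ∀ j < h n, i ≠ j → Disjoint ((T^[i]) '' F n) ((T^[j]) '' F n)) ∧
    ∀ A : Set X, MeasurableSet A → ∀ ε : ℝ≥0∞, 0 < ε → ∃ n : ℕ, ∃ s : Finset ℕ, ∃ rem : Bool,
      (∀ i ∈ s, i < h n) ∧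
      μ (A ∆ ((⋃ i ∈ s, (T^[i]) '' F n) ∪
        (if rem then (⋃ i ∈ Finset.range (h n), (T^[i]) '' F n)ᶜ else (∅ : Set X)))) < ε

/-! ### Words, languages, symbolic systems -/

/-- `w` is a factor of `v`. -/
def IsFactor {A : Type*} (w v : List A) : Prop := ∃ u u' : List A, v = u ++ w ++ u'

/-- `L` is a language: nonempty, closed under factors, and every word extends to a longer one. -/
def IsLanguage {A : Type*} (L : Set (List A)) : Prop :=
  L.Nonempty ∧ (∀ v ∈ L, ∀ w : List A, IsFactor w v → w ∈ L) ∧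
    (∀ w ∈ L, ∃ v ∈ L, w.length < v.length ∧ IsFactor w v)

/-- `L` is linearly recurrent: for some `K`, every word of length `n` occurs in
every word of length at least `K n`. -/
def LinearlyRecurrent {A : Type*} (L : Set (List A)) : Prop :=
  ∃ K : ℕ, 1 ≤ K ∧ ∀ w ∈ L, ∀ v ∈ L, K * w.length ≤ v.length → IsFactor w v

/-- `L` is minimal. -/
def MinimalLang {A : Type*} (L : Set (List A)) : Prop :=
  ∀ w ∈ L, ∃ n : ℕ, ∀ v ∈ L, v.length = n → IsFactor w v

/-- The factor of a sequence starting at `i`, of length `s`. -/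
def wordAt {A : Type*} (x : ℕ → A) (i s : ℕ) : List A := List.ofFn fun j : Fin s => x (i + j)

/-- The subshift `X_L`: sequences all of whose finite factors lie in `L`. -/
def XL {A : Type*} (L : Set (List A)) : Set (ℕ → A) := {x | ∀ i s : ℕ, wordAt x i s ∈ L}

/-- The one-sided shift `S` on `X_L`. -/
def shiftXL {A : Type*} (L : Set (List A)) (x : XL L) : XL L :=
  ⟨fun n => x.1 (n + 1), fun i s => by
    have h := x.2 (i + 1) s
    have e : wordAt (fun n => x.1 (n + 1)) i s = wordAt x.1 (i + 1) s := by
      unfold wordAt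
      refine congrArg List.ofFn (funext fun j => congrArg x.1 ?_)
      omega
    rw [e]
    exact h⟩

/-- The cylinder `[w] ⊆ X_L` of a word `w`. -/
def langCylinder {A : Type*} (L : Set (List A)) (w : List A) : Set (XL L) :=
  {x | ∀ i : Fin w.length, x.1 i = w.get i}

/-- `e_n(S, μ)`: the smallest positive measure of a cylinder of a word of `L` of length `n`. -/
def cylMinMeasure {A : Type*} [MeasurableSpace A] (L : Set (List A))
    (μ : Measure (XL L)) (n : ℕ) : ℝ≥0∞ :=
  sInf {v : ℝ≥0∞ | ∃ w ∈ L, w.length = n ∧ v = μ (langCylinder L w) ∧ 0 < v}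

/-! ### Continued fraction data of `α` -/

/-- `ℤ + αℤ`. -/
def ZPlusAlphaZ (α : ℝ) : Set ℝ := {x | ∃ m k : ℤ, x = (m : ℝ) + (k : ℝ) * α}

/-- `(α_{n-1}, α_n)` computed by the Euclidean algorithm, with `α_{-1} = 1`, `α_0 = α`. -/
def cfPair (α : ℝ) : ℕ → ℝ × ℝ
  | 0 => (1, α)
  | n + 1 =>
    ((cfPair α n).2, (cfPair α n).1 - (⌊(cfPair α n).1 / (cfPair α n).2⌋ : ℝ) * (cfPair α n).2)

/-- `α_n = |q_n α - p_n|`. -/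
def alphaSeq (α : ℝ) (n : ℕ) : ℝ := (cfPair α n).2

/-- The partial quotient `a_n = ⌊α_{n-2} / α_{n-1}⌋` (meaningful for `n ≥ 1`). -/
def pq (α : ℝ) (n : ℕ) : ℕ := (⌊(cfPair α (n - 1)).1 / (cfPair α (n - 1)).2⌋).toNat

/-- `(q_{n-1}, q_n)`, with `q_{-1} = 0`, `q_0 = 1` and `q_{n+1} = a_{n+1} q_n + q_{n-1}`. -/
def qPair (α : ℝ) : ℕ → ℕ × ℕ
  | 0 => (0, 1)
  | n + 1 => ((qPair α n).2, pq α (n + 1) * (qPair α n).2 + (qPair α n).1)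

/-- `q_n`. -/
def qDen (α : ℝ) (n : ℕ) : ℕ := (qPair α n).2

/-- `α` has bounded partial quotients. -/
def BoundedPartialQuotients (α : ℝ) : Prop := ∃ C : ℕ, ∀ n : ℕ, 1 ≤ n → pq α n ≤ C

/-! ### Rokhlin towers for the rotation and Ostrowski digits -/

/-- `x` lies in the arc `[a, a + l)` modulo 1. -/
def inArc (x a l : ℝ) : Prop := ∃ m : ℤ, a ≤ x + m ∧ x + m < a + l

/-- Left endpoint of the basis `B_n` of the large `n`-tower. -/
def largeBase (α : ℝ) (n : ℕ) : ℝ :=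
  if Odd n then α - alphaSeq α (n - 1) + alphaSeq α n else α - alphaSeq α n

/-- Left endpoint of the basis `B'_n` of the small `n`-tower. -/
def smallBase (α : ℝ) (n : ℕ) : ℝ :=
  if Odd n then α - alphaSeq α (n - 1) else α + alphaSeq α (n - 1) - alphaSeq α n

/-- Membership in the basis `B_n` of the large `n`-tower. -/
def InLargeBase (α : ℝ) (n : ℕ) (x : ℝ) : Prop := inArc x (largeBase α n) (alphaSeq α (n - 1))

/-- Distance from `x` to the reference endpoint (left endpoint for `n` odd, right
endpoint for `n` even) of the level `k` of the large `n`-tower. -/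
def levelDist (α : ℝ) (n k : ℕ) (x : ℝ) : ℝ :=
  if Odd n then x - (largeBase α n + (k : ℝ) * α)
  else (largeBase α n + alphaSeq α (n - 1) + (k : ℝ) * α) - x

/-- `x` lies in column `(b)` of the large `n`-tower. -/
def InLargeColumn (α : ℝ) (n b : ℕ) (x : ℝ) : Prop :=
  ∃ k : ℕ, k < qDen α n ∧
    inArc (levelDist α n k x) ((b : ℝ) * alphaSeq α n)
      (if b = pq α (n + 1) then alphaSeq α (n - 1) - (pq α (n + 1) : ℝ) * alphaSeq α n
       else alphaSeq α n)

/-- `x` lies in the small `n`-tower. -/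
def InSmallTower (α : ℝ) (n : ℕ) (x : ℝ) : Prop :=
  ∃ k : ℕ, k < (qPair α n).1 ∧ inArc x (smallBase α n + (k : ℝ) * α) (alphaSeq α n)

/-- The Ostrowski digit `b_m(β)` (meaningful for `m ≥ 2`), read in the towers at stage `m - 1`:
it is `b` if `β` lies in column `(b)` of the large `(m-1)`-tower with `b ≥ 1`, and `0`
otherwise. -/
def ostB (α β : ℝ) (m : ℕ) : ℕ :=
  if h : ∃ b : ℕ, 1 ≤ b ∧ InLargeColumn α (m - 1) b β then h.choose else 0

/-! ### Isolation and clustering of marked points -/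

/-- The marked point `β_j` (with `β_j ≠ 1 - α`) is `(n, M)`-isolated. -/
def BetaIsolated {r : ℕ} (α : ℝ) (β : Fin r → ℝ) (j : Fin r) (n M : ℕ) : Prop :=
  (∃ m₁ : ℕ, n - M ≤ m₁ ∧ m₁ ≤ n ∧ ostB α (β j) m₁ ≠ pq α m₁ - 1) ∧
  (∃ m₂ : ℕ, n - M ≤ m₂ ∧ m₂ ≤ n ∧ Odd m₂ ∧ ostB α (β j) m₂ ≠ pq α m₂) ∧
  (∃ m₃ : ℕ, n - M ≤ m₃ ∧ m₃ ≤ n ∧ Even m₃ ∧ ostB α (β j) m₃ ≠ pq α m₃) ∧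
  ∀ i : Fin r, i ≠ j → β i ≠ 1 - α →
    ∃ m' : ℕ, n - M ≤ m' ∧ m' ≤ n ∧ ostB α (β j) m' ≠ ostB α (β i) m'

/-- The point `α` is `(n, M)`-isolated. -/
def AlphaIsolated {r : ℕ} (α : ℝ) (β : Fin r → ℝ) (n M : ℕ) : Prop :=
  ∀ i : Fin r, β i ≠ 1 - α →
    (∃ m : ℕ, n - M ≤ m ∧ m ≤ n ∧ ostB α (β i) m ≠ pq α m - 1) ∧
    (∃ m' : ℕ, n - M ≤ m' ∧ m' ≤ n ∧ Odd m' ∧ ostB α (β i) m' ≠ pq α m') ∧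
    (∃ m'' : ℕ, n - M ≤ m'' ∧ m'' ≤ n ∧ Even m'' ∧ ostB α (β i) m'' ≠ pq α m'')

/-- All the marked points `β_i` (with `β_i ≠ 1 - α`) cluster on `α`. -/
def ClusterOnAlpha {r : ℕ} (α : ℝ) (β : Fin r → ℝ) : Prop :=
  ∃ m N : ℕ → ℕ, Tendsto m atTop atTop ∧ Tendsto N atTop atTop ∧
    (∀ k : ℕ, m k + N k < m (k + 1)) ∧
    ∀ k : ℕ, ∀ i : Fin r, β i ≠ 1 - α →
      (∀ n, m k ≤ n → n ≤ m k + N k → ostB α (β i) n = pq α n - 1) ∨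
      (∀ n, m k ≤ n → n ≤ m k + N k → Even n → ostB α (β i) n = pq α n) ∨
      (∀ n, m k ≤ n → n ≤ m k + N k → Odd n → ostB α (β i) n = pq α n)

/-! ### The generalized Veech–Sataev system -/

instance : Fact ((0 : ℝ) < 1) := ⟨zero_lt_one⟩

/-- The representative in `[0, 1)` of a point of the circle `ℝ/ℤ`. -/
def circleRepr (x : AddCircle (1 : ℝ)) : ℝ := (AddCircle.equivIco 1 0 x).1

/-- The rotation `R` of angle `α` on the circle. -/
def rotMap (α : ℝ) : AddCircle (1 : ℝ) → AddCircle (1 : ℝ) := fun x => x + (α : AddCircle (1 : ℝ))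

/-- The index `j ∈ {0, …, r}` such that `β_j ≤ x < β_{j+1}` (with `β_0 = 0`,
`β_{r+1} = 1`), i.e. the number of marked points `≤ x`. -/
def atomIdx {r : ℕ} (β : Fin r → ℝ) (x : ℝ) : Fin (r + 1) :=
  ⟨(Finset.univ.filter fun i => β i ≤ x).card,
    Nat.lt_succ_of_le (le_trans (Finset.card_filter_le _ _) (by simp))⟩

/-- The permutation `σ(x)`. -/
def sigmaOf {r d : ℕ} (β : Fin r → ℝ) (σ : Fin (r + 1) → Equiv.Perm (Fin d)) (x : ℝ) :
    Equiv.Perm (Fin d) := σ (atomIdx β x)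

/-- The generalized Veech–Sataev map `T(x, s) = (Rx, σ(x) s)` on `(ℝ/ℤ) × {1, …, d}`. -/
def VST {r d : ℕ} (α : ℝ) (β : Fin r → ℝ) (σ : Fin (r + 1) → Equiv.Perm (Fin d)) :
    AddCircle (1 : ℝ) × Fin d → AddCircle (1 : ℝ) × Fin d :=
  fun p => (rotMap α p.1, sigmaOf β σ (circleRepr p.1) p.2)

/-- Standing conditions on the marked points `β_1 < … < β_r`. -/
def MarkedPointsCond {r : ℕ} (α : ℝ) (β : Fin r → ℝ) : Prop :=
  (∀ i : Fin r, Irrational (β i) ∧ 0 < β i ∧ β i < 1) ∧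
  StrictMono β ∧
  (∀ i : Fin r, β i ≠ 1 - α → β i ∉ ZPlusAlphaZ α) ∧
  (∀ i j : Fin r, i ≠ j → β i ≠ 1 - α → β j ≠ 1 - α → β i - β j ∉ ZPlusAlphaZ α)

/-- Adjacent permutations are distinct: `σ_j ≠ σ_{j+1}` for `0 ≤ j ≤ r - 1`. -/
def SigmaAdjacentCond {r d : ℕ} (σ : Fin (r + 1) → Equiv.Perm (Fin d)) : Prop :=
  ∀ j : Fin r, σ j.castSucc ≠ σ j.succ

/-- The minimality condition: no nonempty proper subset of `{1, …, d}` is invariant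
under all the `σ_i`. -/
def MinimalityCondition {r d : ℕ} (σ : Fin (r + 1) → Equiv.Perm (Fin d)) : Prop :=
  ¬ ∃ A : Set (Fin d), A.Nonempty ∧ A ≠ Set.univ ∧ ∀ j : Fin (r + 1), (σ j) '' A = A

/-- The product inequality. -/
def ProductInequality {r d : ℕ} (α : ℝ) (β : Fin r → ℝ)
    (σ : Fin (r + 1) → Equiv.Perm (Fin d)) : Prop :=
  (∀ t : Fin r, β t = 1 - α → σ (Fin.last r) * σ t.castSucc ≠ σ 0 * σ t.succ) ∧
  ((∀ i : Fin r, β i ≠ 1 - α) → σ (Fin.last r) ≠ σ 0)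

/-! ### Codings -/

/-- The letter read by the rotation with marked points at time `i`. -/
def rotCode {r : ℕ} (α : ℝ) (β : Fin r → ℝ) (x : AddCircle (1 : ℝ)) (i : ℕ) : Fin (r + 1) :=
  atomIdx β (circleRepr ((rotMap α)^[i] x))

/-- The language `L'` of the rotation with marked points `β_1, …, β_r`. -/
def LRot {r : ℕ} (α : ℝ) (β : Fin r → ℝ) : Set (List (Fin (r + 1))) :=
  {w | ∃ x : AddCircle (1 : ℝ), ∀ i : Fin w.length, w.get i = rotCode α β x i.1}

/-- The letter of the natural coding of `T` at a point. -/
def vsCode {r d : ℕ} (β : Fin r → ℝ) (p : AddCircle (1 : ℝ) × Fin d) : Fin (r + 1) × Fin d :=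
  (atomIdx β (circleRepr p.1), p.2)

/-- The language `L(T)` of the natural coding of the generalized Veech–Sataev system. -/
def LVST {r d : ℕ} (α : ℝ) (β : Fin r → ℝ) (σ : Fin (r + 1) → Equiv.Perm (Fin d)) :
    Set (List (Fin (r + 1) × Fin d)) :=
  {w | ∃ p : AddCircle (1 : ℝ) × Fin d,
    ∀ i : Fin w.length, w.get i = vsCode β ((VST α β σ)^[i.1] p)}

/-- Bounded runs: there is a bound on the number of consecutive integers satisfying `P`. -/
def BoundedRun (P : ℕ → Prop) : Prop :=
  ∃ B : ℕ, ∀ m : ℕ, ∃ n : ℕ, m ≤ n ∧ n ≤ m + B ∧ ¬ P n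

end

/-! For the marked point `β = (k + 1) α` mod `1`, an orbit passing near `0` passes near `β` exactly
`k + 1` steps later. Call `k` resonant if the two jumps of the cocycle cancel. Then the cocycle over
`q` steps, with `q α` close to an integer, is constant along `x, x + q α, …` away from a small
neighbourhood of finitely many points; raising this constant to the order `c` of the group kills it,
so `c q` is an almost period of the skew product. Almost periods persist under small perturbations
of `β`.

If `k` is resonant, `q α - p` is a small one-sided best approximation and the cocycle over `q` steps
from `0` is trivial, then `k + q` is resonant, and the marked point moves by `q α - p`. The values
of the cocycle at the denominators `q`, `q'` of consecutive approximations commute, and two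
commuting permutations `x`, `y` of three letters satisfy `x = 1`, `y = 1`, `xy = 1` or
`x²y = xy² = 1`, so one of `q`, `q'`, `q + q'`, `2q + q'`, `q + 2q'` qualifies. Hence the resonant
marked points have no isolated point, and Baire's theorem in their closure yields an irrational
`β ∉ ℤ + αℤ` with almost periods of arbitrary quality. Every invariant measure projects to Lebesgue
measure, by unique ergodicity of the rotation, so almost periods force rigidity. -/

namespace VeechSataev

section MultiplesModOne

variable {α δ ε : ℝ} {k : ℕ}

theorem norm_coe_le_abs_sub_intCast (x : ℝ) (m : ℤ) : ‖(x : UnitAddCircle)‖ ≤ |x - m| :=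
  UnitAddCircle.norm_eq (x := x) ▸ round_le x m

theorem norm_coe_pos_of_irrational {x : ℝ} (hx : Irrational x) : 0 < ‖(x : UnitAddCircle)‖ := by
  rw [UnitAddCircle.norm_eq, abs_pos, sub_ne_zero]
  exact hx.ne_int _

theorem floor_eq_of_abs_sub_lt_norm {x y : ℝ} (h : |y - x| < ‖(x : UnitAddCircle)‖) :
    ⌊y⌋ = ⌊x⌋ := by
  have below := h.trans_le (norm_coe_le_abs_sub_intCast x ⌊x⌋)
  have above := h.trans_le (norm_coe_le_abs_sub_intCast x (⌊x⌋ + 1))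
  have := Int.floor_le x
  have := Int.lt_floor_add_one x
  push_cast at above
  rw [abs_of_nonneg (a := x - _) (by linarith), abs_lt] at below
  rw [abs_of_neg (a := x - _) (by linarith), abs_lt] at above
  rw [Int.floor_eq_iff]
  constructor <;> linarith

/-- The multiples `α, 2α, …, kα` stay at distance more than `δ` from the integers. -/
def Separated (α : ℝ) (k : ℕ) (δ : ℝ) : Prop :=
  ∀ j : ℕ, 0 < j → j ≤ k → δ < ‖((j * α : ℝ) : UnitAddCircle)‖

theorem exists_separated (hα : Irrational α) (k : ℕ) : ∃ δ > 0, Separated α k δ := by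
  induction k with
  | zero => exact ⟨1, one_pos, fun j hj hj' => by omega⟩
  | succ k ih =>
    obtain ⟨δ, hδ, hsep⟩ := ih
    have hpos : 0 < ‖(((k + 1 : ℕ) * α : ℝ) : UnitAddCircle)‖ :=
      norm_coe_pos_of_irrational (hα.natCast_mul k.succ_ne_zero)
    refine ⟨min δ (_ / 2), lt_min hδ (half_pos hpos), fun j hj hjk => ?_⟩
    rcases hjk.lt_or_eq with h | rfl
    · exact (min_le_left _ _).trans_lt (hsep j hj (by omega))
    · exact (min_le_right _ _).trans_lt (half_lt_self hpos)

theorem Separated.lt_abs_sub (h : Separated α k δ) {j : ℤ} (hj : j ≠ 0) (hjk : |j| ≤ k) (m : ℤ) :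
    δ < |j * α - m| := by
  obtain ⟨n, rfl | rfl⟩ := j.eq_nat_or_neg
  · exact (h n (by omega) (by simpa using hjk)).trans_le
      (by simpa using norm_coe_le_abs_sub_intCast (n * α) m)
  · rw [← abs_neg]
    exact (h n (by omega) (by simpa using hjk)).trans_le
      (by simpa [sub_eq_add_neg, add_comm] using norm_coe_le_abs_sub_intCast (n * α) (-m))

theorem denseRange_nsmul_coe (hα : Irrational α) :
    DenseRange fun n : ℕ => n • (α : UnitAddCircle) :=
  denseRange_zsmul_iff_nsmul.1 (AddCircle.denseRange_zsmul_coe_iff.2 (by rwa [div_one]))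

theorem exists_nat_mul_sub_int_mem_Ioo (hα : Irrational α) {a b : ℝ} (hab : a < b) :
    ∃ (n : ℕ) (m : ℤ), n * α - m ∈ Ioo a b := by
  obtain ⟨n, x, hx, hxn⟩ := (denseRange_nsmul_coe hα).exists_mem_open
    (QuotientAddGroup.isOpenMap_coe (Ioo a b) isOpen_Ioo) ((nonempty_Ioo.2 hab).image _)
  rw [← AddCircle.coe_nsmul, ← sub_eq_zero, ← AddCircle.coe_sub, AddCircle.coe_eq_zero_iff] at hxn
  obtain ⟨m, hm⟩ := hxn
  refine ⟨n, -m, ?_⟩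
  simp only [zsmul_eq_mul, mul_one, nsmul_eq_mul] at hm
  rwa [Int.cast_neg, sub_neg_eq_add, hm, add_sub_cancel]

/-- Two consecutive one-sided best approximations of `α`: `q α - p` and `q' α - p'` are the nearest
points on either side of `0` among all the `i α - m` with `0 < i < q + q'`. -/
structure IsFareyPair (α : ℝ) (q : ℕ) (p : ℤ) (q' : ℕ) (p' : ℤ) : Prop where
  pos : 0 < q
  pos' : 0 < q'
  right_pos : 0 < q * α - p
  left_neg : q' * α - p' < 0
  gap : ∀ i : ℕ, 0 < i → i < q + q' → ∀ m : ℤ, i * α - m ∉ Ioo (q' * α - p') (q * α - p)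

theorem isFareyPair_floor (hα : Irrational α) : IsFareyPair α 1 ⌊α⌋ 1 (⌊α⌋ + 1) where
  pos := one_pos
  pos' := one_pos
  right_pos := by
    have := (Int.floor_le α).lt_of_ne (hα.ne_int _).symm
    rwa [Nat.cast_one, one_mul, sub_pos]
  left_neg := by
    have := Int.lt_floor_add_one α
    push_cast
    linarith
  gap i hi hi' m := by
    obtain rfl : i = 1 := by omega
    rintro ⟨hl, hr⟩
    simp only [Nat.cast_one, one_mul, sub_lt_sub_iff_left, Int.cast_lt] at hl hr
    omega

namespace IsFareyPair

variable {q q' : ℕ} {p p' : ℤ}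

theorem add_left (h : IsFareyPair α q p q' p')
    (hpos : 0 < ((q + q' : ℕ) : ℝ) * α - (p + p' : ℤ)) :
    IsFareyPair α (q + q') (p + p') q' p' where
  pos := Nat.add_pos_left h.pos _
  pos' := h.pos'
  right_pos := hpos
  left_neg := h.left_neg
  gap i hi hi' m := by
    have := h.right_pos
    have := h.left_neg
    rintro ⟨hl, hr⟩
    push_cast at hr
    rcases lt_or_ge i (q + q') with hlt | hge
    · exact h.gap i hi hlt m ⟨hl, by linarith⟩
    · have := h.pos
      refine h.gap (i - q') (by omega) (by omega) (m - p') ?_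
      rw [Nat.cast_sub (by omega), Int.cast_sub]
      constructor <;> linarith

theorem add_right (h : IsFareyPair α q p q' p')
    (hneg : ((q + q' : ℕ) : ℝ) * α - (p + p' : ℤ) < 0) :
    IsFareyPair α q p (q + q') (p + p') where
  pos := h.pos
  pos' := Nat.add_pos_left h.pos _
  right_pos := h.right_pos
  left_neg := hneg
  gap i hi hi' m := by
    have := h.right_pos
    have := h.left_neg
    rintro ⟨hl, hr⟩
    push_cast at hl
    rcases lt_or_ge i (q + q') with hlt | hge
    · exact h.gap i hi hlt m ⟨by linarith, hr⟩
    · have := h.pos'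
      refine h.gap (i - q) (by omega) (by omega) (m - p) ?_
      rw [Nat.cast_sub (by omega), Int.cast_sub]
      constructor <;> linarith

theorem add_left_or_add_right (hα : Irrational α) (h : IsFareyPair α q p q' p') :
    IsFareyPair α (q + q') (p + p') q' p' ∨ IsFareyPair α q p (q + q') (p + p') := by
  have hne : ((q + q' : ℕ) : ℝ) * α - (p + p' : ℤ) ≠ 0 :=
    sub_ne_zero.2 ((hα.natCast_mul (Nat.add_pos_left h.pos q').ne').ne_int _)
  exact hne.lt_or_gt.symm.imp h.add_left h.add_right

end IsFareyPair

theorem exists_isFareyPair_le_add (hα : Irrational α) (N : ℕ) :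
    ∃ q p q' p', IsFareyPair α q p q' p' ∧ N ≤ q + q' := by
  induction N with
  | zero => exact ⟨_, _, _, _, isFareyPair_floor hα, Nat.zero_le _⟩
  | succ N ih =>
    obtain ⟨q, p, q', p', h, hN⟩ := ih
    have := h.pos
    have := h.pos'
    rcases h.add_left_or_add_right hα with h' | h'
    · exact ⟨_, _, _, _, h', by omega⟩
    · exact ⟨_, _, _, _, h', by omega⟩

theorem exists_isFareyPair_lt (hα : Irrational α) (hε : 0 < ε) :
    ∃ q p q' p', IsFareyPair α q p q' p' ∧ q * α - p < ε ∧ -ε < q' * α - p' := by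
  obtain ⟨n, m, hn⟩ :=
    exists_nat_mul_sub_int_mem_Ioo hα (show 0 < min ε 1 from lt_min hε one_pos)
  obtain ⟨n', m', hn'⟩ :=
    exists_nat_mul_sub_int_mem_Ioo hα (show -min ε 1 < 0 by simpa using hε)
  have pos_of_abs_lt_one {i : ℕ} {l : ℤ} (h0 : i * α - l ≠ 0) (h1 : |i * α - l| < 1) : 0 < i := by
    rcases i.eq_zero_or_pos with rfl | hi
    · simp only [CharP.cast_eq_zero, zero_mul, zero_sub, abs_neg, ne_eq, neg_eq_zero,
        Int.cast_eq_zero] at h0 h1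
      exact absurd (Int.abs_lt_one_iff.1 (by exact_mod_cast h1)) h0
    · exact hi
  have hn0 : 0 < n := pos_of_abs_lt_one hn.1.ne'
    (abs_lt.2 ⟨by linarith [hn.1], hn.2.trans_le (min_le_right _ _)⟩)
  have hn0' : 0 < n' := pos_of_abs_lt_one hn'.2.ne
    (abs_lt.2 ⟨(neg_le_neg (min_le_right ε 1)).trans_lt hn'.1, by linarith [hn'.2]⟩)
  obtain ⟨q, p, q', p', h, hN⟩ := exists_isFareyPair_le_add hα (n + n')
  refine ⟨q, p, q', p', h, lt_of_not_ge fun hge => ?_, lt_of_not_ge fun hge => ?_⟩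
  · exact h.gap n hn0 (by omega) m
      ⟨h.left_neg.trans hn.1, (hn.2.trans_le (min_le_left _ _)).trans_le hge⟩
  · exact h.gap n' hn0' (by omega) m'
      ⟨hge.trans_lt ((neg_le_neg (min_le_left ε 1)).trans_lt hn'.1), hn'.2.trans h.right_pos⟩

theorem exists_lt_norm_mul_lt (hα : Irrational α) (N : ℕ) (hε : 0 < ε) :
    ∃ q : ℕ, N < q ∧ ‖((q * α : ℝ) : UnitAddCircle)‖ < ε := by
  obtain ⟨δ, hδ, hsep⟩ := exists_separated hα N
  obtain ⟨q, p, _, _, h, hq, -⟩ := exists_isFareyPair_lt hα (lt_min hε hδ)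
  have hlt := (norm_coe_le_abs_sub_intCast _ _).trans_lt ((abs_of_pos h.right_pos).trans_lt hq)
  exact ⟨q, lt_of_not_ge fun hN => (hsep q h.pos hN).not_gt (hlt.trans_le (min_le_right _ _)),
    hlt.trans_le (min_le_left _ _)⟩

/-- `q α - p` is a one-sided best approximation: no earlier multiple of `α` lies, modulo `1`,
strictly between `0` and `q α`. -/
def IsBestOneSided (α : ℝ) (q : ℕ) (p : ℤ) : Prop :=
  0 < q ∧ ∀ i : ℕ, 0 < i → i < q → ∀ m : ℤ, i * α - m ∉ uIoo 0 (q * α - p)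

namespace IsFareyPair

variable {q q' n : ℕ} {p p' m : ℤ}

theorem isBestOneSided (h : IsFareyPair α q p q' p') (hn : 0 < n) (hnq : n ≤ q + q')
    (hm : n * α - m ∈ Icc (q' * α - p') (q * α - p)) : IsBestOneSided α n m := by
  refine ⟨hn, fun i hi hin l hl => h.gap i hi (hin.trans_le hnq) l ?_⟩
  have hzero : (0 : ℝ) ∈ Icc (q' * α - p') (q * α - p) := ⟨h.left_neg.le, h.right_pos.le⟩
  exact ⟨(le_inf hzero.1 hm.1).trans_lt hl.1, hl.2.trans_le (sup_le hzero.2 hm.2)⟩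

theorem isBestOneSided_right (h : IsFareyPair α q p q' p') : IsBestOneSided α q p :=
  h.isBestOneSided h.pos (Nat.le_add_right _ _) ⟨(h.left_neg.trans h.right_pos).le, le_rfl⟩

theorem isBestOneSided_left (h : IsFareyPair α q p q' p') : IsBestOneSided α q' p' :=
  h.isBestOneSided h.pos' (Nat.le_add_left _ _) ⟨le_rfl, (h.left_neg.trans h.right_pos).le⟩

theorem isBestOneSided_add (h : IsFareyPair α q p q' p') :
    IsBestOneSided α (q + q') (p + p') := by
  have := h.right_pos
  have := h.left_neg
  refine h.isBestOneSided (Nat.add_pos_left h.pos _) le_rfl ?_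
  push_cast
  constructor <;> linarith

end IsFareyPair

end MultiplesModOne

section Cocycle

variable {G : Type*} (σ₀ σ₁ : G) (α β : ℝ)

/-- The `1`-periodic function equal to `σ₀` on `[0, β)` and to `σ₁` on `[β, 1)`. -/
noncomputable def step (x : ℝ) : G := if Int.fract x < β then σ₀ else σ₁

variable {β} in
theorem step_of_fract_lt {x : ℝ} (h : Int.fract x < β) : step σ₀ σ₁ β x = σ₀ := if_pos h

variable {β} in
theorem step_of_le_fract {x : ℝ} (h : β ≤ Int.fract x) : step σ₀ σ₁ β x = σ₁ := if_neg h.not_gt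

@[simp]
theorem step_add_intCast (x : ℝ) (m : ℤ) : step σ₀ σ₁ β (x + m) = step σ₀ σ₁ β x := by
  simp [step]

variable {β} in
theorem step_eq_of_floor_eq {β' x y : ℝ} (h : ⌊x⌋ = ⌊y⌋) (hβ : ⌊x - β⌋ = ⌊y - β'⌋) :
    step σ₀ σ₁ β x = step σ₀ σ₁ β' y := by
  have fract_lt_iff (z γ : ℝ) : Int.fract z < γ ↔ ⌊z - γ⌋ < ⌊z⌋ := by
    rw [Int.floor_lt, Int.fract, sub_lt_comm]
  simp only [step, fract_lt_iff, h, hβ]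

variable [Group G]

/-- The cocycle of the rotation by `α` generated by `step`: the permutation applied to the fibre
over `x` by the `n`-th iterate of the skew product. -/
noncomputable def cocycle : ℕ → ℝ → G
  | 0, _ => 1
  | n + 1, x => step σ₀ σ₁ β (x + n * α) * cocycle n x

theorem cocycle_succ (n : ℕ) (x : ℝ) :
    cocycle σ₀ σ₁ α β (n + 1) x = step σ₀ σ₁ β (x + n * α) * cocycle σ₀ σ₁ α β n x := rfl

theorem cocycle_add (m n : ℕ) (x : ℝ) : cocycle σ₀ σ₁ α β (m + n) x =
    cocycle σ₀ σ₁ α β m (x + n * α) * cocycle σ₀ σ₁ α β n x := by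
  induction m with
  | zero => simp [cocycle]
  | succ m ih =>
    rw [Nat.add_right_comm, cocycle_succ, cocycle_succ, ih, mul_assoc]
    congr 2
    push_cast
    ring

theorem cocycle_succ' (n : ℕ) (x : ℝ) :
    cocycle σ₀ σ₁ α β (n + 1) x = cocycle σ₀ σ₁ α β n (x + α) * step σ₀ σ₁ β x := by
  simpa [cocycle] using cocycle_add σ₀ σ₁ α β n 1 x

theorem cocycle_add_intCast (n : ℕ) (x : ℝ) (m : ℤ) :
    cocycle σ₀ σ₁ α β n (x + m) = cocycle σ₀ σ₁ α β n x := by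
  induction n with
  | zero => rfl
  | succ n ih => rw [cocycle_succ, cocycle_succ, ih, add_right_comm, step_add_intCast]

variable {σ₀ σ₁ α β} in
theorem cocycle_congr {τ₀ τ₁ : G} {α' β' x x' : ℝ} {n : ℕ}
    (h : ∀ i < n, step σ₀ σ₁ β (x + i * α) = step τ₀ τ₁ β' (x' + i * α')) :
    cocycle σ₀ σ₁ α β n x = cocycle τ₀ τ₁ α' β' n x' := by
  induction n with
  | zero => rfl
  | succ n ih =>
    rw [cocycle_succ, cocycle_succ, h n n.lt_succ_self,
      ih fun i hi => h i (hi.trans n.lt_succ_self)]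

end Cocycle

section Resonance

variable {G : Type*} (σ₀ σ₁ : G) (α : ℝ)

/-- The marked point `(k + 1) α` modulo `1`; the orbit of `0` visits `k` points before reaching
it. -/
noncomputable def mark (k : ℕ) : ℝ := Int.fract (((k + 1 : ℕ) : ℝ) * α)

variable {α} {δ x y z : ℝ} {k : ℕ}

theorem step_mark_eq_of_floor_eq (h : ⌊x⌋ = ⌊y⌋)
    (hk : ⌊x - (k + 1 : ℕ) * α⌋ = ⌊y - (k + 1 : ℕ) * α⌋) :
    step σ₀ σ₁ (mark α k) x = step σ₀ σ₁ (mark α k) y := by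
  have floor_sub_mark (t : ℝ) :
      ⌊t - mark α k⌋ = ⌊t - (k + 1 : ℕ) * α⌋ + ⌊((k + 1 : ℕ) : ℝ) * α⌋ := by
    rw [← Int.floor_add_intCast, mark, Int.fract, sub_sub_eq_add_sub, add_sub_right_comm]
  exact step_eq_of_floor_eq _ _ h (by rw [floor_sub_mark, floor_sub_mark, hk])

theorem Separated.mark_mem_Ioo (h : Separated α (k + 1) δ) : mark α k ∈ Ioo δ (1 - δ) := by
  have hk := h (k + 1) k.succ_pos le_rfl
  have below := hk.trans_le (norm_coe_le_abs_sub_intCast _ ⌊((k + 1 : ℕ) : ℝ) * α⌋)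
  have above := hk.trans_le (norm_coe_le_abs_sub_intCast _ (⌊((k + 1 : ℕ) : ℝ) * α⌋ + 1))
  have := Int.fract_nonneg (((k + 1 : ℕ) : ℝ) * α)
  have := Int.fract_lt_one (((k + 1 : ℕ) : ℝ) * α)
  rw [Int.self_sub_floor, abs_of_nonneg (by linarith)] at below
  rw [Int.cast_add, Int.cast_one, ← sub_sub, Int.self_sub_floor, abs_of_neg (by linarith)] at above
  constructor <;> simp only [mark] <;> linarith

theorem step_mark_of_nonneg (h : Separated α (k + 1) δ) (hz : 0 ≤ z) (hzδ : z ≤ δ) :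
    step σ₀ σ₁ (mark α k) z = σ₀ := by
  obtain ⟨hδ, hδ'⟩ := h.mark_mem_Ioo
  refine step_of_fract_lt _ _ ?_
  rw [Int.fract_eq_self.2 ⟨hz, by linarith⟩]
  linarith

theorem step_mark_of_neg (h : Separated α (k + 1) δ) (hz : z < 0) (hzδ : -δ ≤ z) :
    step σ₀ σ₁ (mark α k) z = σ₁ := by
  obtain ⟨hδ, hδ'⟩ := h.mark_mem_Ioo
  refine step_of_le_fract _ _ ?_
  rw [← Int.fract_add_one, Int.fract_eq_self.2 ⟨by linarith, by linarith⟩]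
  linarith

theorem step_mark_near (h : Separated α (k + 1) δ) {j : ℕ} (hj : 0 < j) (hjk : j ≤ k)
    (hz : |z| ≤ δ) : step σ₀ σ₁ (mark α k) (z + j * α) = step σ₀ σ₁ (mark α k) (j * α) := by
  refine step_mark_eq_of_floor_eq _ _ (floor_eq_of_abs_sub_lt_norm ?_)
    (floor_eq_of_abs_sub_lt_norm ?_)
  · simpa only [add_sub_cancel_right] using hz.trans_lt (h j hj (by omega))
  · have hlt := hz.trans_lt (h (k + 1 - j) (by omega) (by omega))
    rw [← norm_neg, ← AddCircle.coe_neg, Nat.cast_sub (by omega)] at hlt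
    rwa [sub_sub_sub_cancel_right, add_sub_cancel_right, ← neg_sub, ← sub_mul]

variable [Group G]

/-- The product of `step` over the `k` points `α, …, k α` between `0` and the marked point
`mark α k`. -/
noncomputable def arcProduct (α : ℝ) (k : ℕ) : G := cocycle σ₀ σ₁ α (mark α k) k α

/-- The jump of the cocycle when a point crosses `0` is undone `k + 1` steps later, when its orbit
crosses the marked point `mark α k`. -/
def IsResonant (α : ℝ) (k : ℕ) : Prop :=
  σ₁ * arcProduct σ₀ σ₁ α k * σ₀ = σ₀ * arcProduct σ₀ σ₁ α k * σ₁

theorem cocycle_mark_near (h : Separated α (k + 1) δ) (hz : |z| ≤ δ) :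
    cocycle σ₀ σ₁ α (mark α k) k (z + α) = arcProduct σ₀ σ₁ α k := by
  refine cocycle_congr fun i hi => ?_
  convert step_mark_near σ₀ σ₁ h i.succ_pos (show i + 1 ≤ k by omega) hz using 2 <;>
    push_cast <;> ring

theorem cocycle_mark_succ (h : Separated α (k + 1) δ) (hz : |z| ≤ δ) :
    cocycle σ₀ σ₁ α (mark α k) (k + 1) z =
      arcProduct σ₀ σ₁ α k * step σ₀ σ₁ (mark α k) z := by
  rw [cocycle_succ', cocycle_mark_near σ₀ σ₁ h hz]

theorem cocycle_mark_add_two (h : Separated α (k + 1) δ) (hz : |z| ≤ δ) :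
    cocycle σ₀ σ₁ α (mark α k) (k + 2) z =
      step σ₀ σ₁ (mark α k) (z + mark α k) * arcProduct σ₀ σ₁ α k *
        step σ₀ σ₁ (mark α k) z := by
  rw [cocycle_succ, cocycle_mark_succ σ₀ σ₁ h hz, mul_assoc,
    ← step_add_intCast σ₀ σ₁ _ (z + mark α k) ⌊((k + 1 : ℕ) : ℝ) * α⌋, add_assoc z (mark α k),
    mark, Int.fract_add_floor]

theorem cocycle_mark_of_nonneg (h : Separated α (k + 1) δ) (hz : 0 ≤ z) (hzδ : z ≤ δ) :
    cocycle σ₀ σ₁ α (mark α k) (k + 2) z = σ₁ * arcProduct σ₀ σ₁ α k * σ₀ := by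
  obtain ⟨hδ, hδ'⟩ := h.mark_mem_Ioo
  rw [cocycle_mark_add_two σ₀ σ₁ h (by rwa [abs_of_nonneg hz]), step_mark_of_nonneg _ _ h hz hzδ,
    step_of_le_fract]
  rw [Int.fract_eq_self.2 ⟨by linarith, by linarith⟩]
  linarith

theorem cocycle_mark_of_neg (h : Separated α (k + 1) δ) (hz : z < 0) (hzδ : -δ ≤ z) :
    cocycle σ₀ σ₁ α (mark α k) (k + 2) z = σ₀ * arcProduct σ₀ σ₁ α k * σ₁ := by
  obtain ⟨hδ, hδ'⟩ := h.mark_mem_Ioo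
  rw [cocycle_mark_add_two σ₀ σ₁ h (by rw [abs_of_neg hz]; linarith),
    step_mark_of_neg _ _ h hz hzδ, step_of_fract_lt]
  rw [Int.fract_eq_self.2 ⟨by linarith, by linarith⟩]
  linarith

theorem Separated.floor_eq_of_floor_ne (h : Separated α k δ) (hxy : x ≤ y) (hδ : y - x ≤ δ)
    (hne : ⌊x⌋ ≠ ⌊y⌋) {j : ℕ} (hj : 0 < j) (hjk : j ≤ k) : ⌊x - j * α⌋ = ⌊y - j * α⌋ := by
  by_contra hne'
  have crossing {u v : ℝ} (huv : u ≤ v) (hne : ⌊u⌋ ≠ ⌊v⌋) : u < ⌊v⌋ :=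
    Int.floor_lt.1 ((Int.floor_mono huv).lt_of_ne hne)
  have hx := crossing hxy hne
  have hx' := crossing (sub_le_sub_right hxy _) hne'
  have hy := Int.floor_le y
  have hy' := Int.floor_le (y - j * α)
  refine (h.lt_abs_sub (j := j) (by omega) (by simpa using hjk)
    (⌊y⌋ - ⌊y - j * α⌋)).not_ge (abs_le.2 ?_)
  push_cast
  constructor <;> linarith

variable {σ₀ σ₁}

namespace IsResonant

theorem cocycle_add_two_eq (hres : IsResonant σ₀ σ₁ α k) (h : Separated α (k + 1) δ)
    (hxy : x ≤ y) (hδ : y - x ≤ δ) (hne : ⌊x⌋ ≠ ⌊y⌋) :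
    cocycle σ₀ σ₁ α (mark α k) (k + 2) x = cocycle σ₀ σ₁ α (mark α k) (k + 2) y := by
  have hx : x < ⌊y⌋ := Int.floor_lt.1 ((Int.floor_mono hxy).lt_of_ne hne)
  have hy := Int.floor_le y
  rw [← cocycle_add_intCast _ _ _ _ _ x (-⌊y⌋), ← cocycle_add_intCast _ _ _ _ _ y (-⌊y⌋),
    Int.cast_neg, cocycle_mark_of_neg _ _ h (by linarith) (by linarith),
    cocycle_mark_of_nonneg _ _ h (by linarith) (by linarith)]
  exact hres.symm

/-- Strong induction on `n`: either the orbits of `x` and `y` cross no integer at time `n - k - 2`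
and the last steps agree, or they do and the last `k + 2` steps have the same product. -/
theorem cocycle_eq_of_floor_eq (hres : IsResonant σ₀ σ₁ α k) (h : Separated α (k + 1) δ)
    (hxy : x ≤ y) (hδ : y - x ≤ δ)
    (hstart : ∀ j : ℕ, 0 < j → j ≤ k + 1 → ⌊x - j * α⌋ = ⌊y - j * α⌋) (n : ℕ)
    (hend : ∀ j : ℕ, 0 < j → j ≤ k + 1 → ⌊x + n * α - j * α⌋ = ⌊y + n * α - j * α⌋) :
    cocycle σ₀ σ₁ α (mark α k) n x = cocycle σ₀ σ₁ α (mark α k) n y := by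
  induction n using Nat.strong_induction_on with
  | h n ih =>
    rcases n with - | n
    · rfl
    by_cases hlast : ⌊x + n * α - (k + 1 : ℕ) * α⌋ = ⌊y + n * α - (k + 1 : ℕ) * α⌋
    · have hend' (j : ℕ) (hj : j ≤ k) : ⌊x + n * α - j * α⌋ = ⌊y + n * α - j * α⌋ := by
        convert hend (j + 1) j.succ_pos (by omega) using 2 <;> push_cast <;> ring
      rw [cocycle_succ, cocycle_succ, ih n n.lt_succ_self fun j hj hjk => ?_,
        step_mark_eq_of_floor_eq _ _ (by simpa using hend' 0 k.zero_le) hlast]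
      rcases hjk.lt_or_eq with hlt | rfl
      · exact hend' j (by omega)
      · exact hlast
    · have hle : k + 1 ≤ n := by
        by_contra! hlt
        refine hlast ?_
        convert hstart (k + 1 - n) (by omega) (by omega) using 2 <;>
          rw [Nat.cast_sub (by omega)] <;> ring
      obtain ⟨i, rfl⟩ := Nat.exists_eq_add_of_le' hle
      have hcross : ⌊x + i * α⌋ ≠ ⌊y + i * α⌋ := by
        convert hlast using 3 <;> push_cast <;> ring
      have hsplit (z : ℝ) := cocycle_add σ₀ σ₁ α (mark α k) (k + 2) i z
      rw [show i + (k + 1) + 1 = k + 2 + i by omega, hsplit, hsplit,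
        hres.cocycle_add_two_eq h (by linarith) (by linarith) hcross,
        ih i (by omega) fun j hj hjk =>
          h.floor_eq_of_floor_ne (by linarith) (by linarith) hcross hj hjk]

theorem cocycle_eq_of_norm_lt (hres : IsResonant σ₀ σ₁ α k) (h : Separated α (k + 1) δ)
    (hδ : |y - x| ≤ δ) {n : ℕ} (hx : ∀ j : ℕ, 0 < j → j ≤ k + 1 →
      |y - x| + ‖((n * α : ℝ) : UnitAddCircle)‖ < ‖((x - j * α : ℝ) : UnitAddCircle)‖) :
    cocycle σ₀ σ₁ α (mark α k) n x = cocycle σ₀ σ₁ α (mark α k) n y := by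
  have hstart (j : ℕ) (hj : 0 < j) (hjk : j ≤ k + 1) : ⌊y - j * α⌋ = ⌊x - j * α⌋ := by
    refine floor_eq_of_abs_sub_lt_norm ?_
    rw [sub_sub_sub_cancel_right]
    linarith [hx j hj hjk, norm_nonneg ((n * α : ℝ) : UnitAddCircle)]
  have hend (j : ℕ) (hj : 0 < j) (hjk : j ≤ k + 1) :
      ⌊y + n * α - j * α⌋ = ⌊x + n * α - j * α⌋ := by
    refine floor_eq_of_abs_sub_lt_norm ?_
    rw [sub_sub_sub_cancel_right, add_sub_add_right_eq_sub, add_sub_right_comm, AddCircle.coe_add]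
    linarith [hx j hj hjk, norm_le_add_norm_add ((x - j * α : ℝ) : UnitAddCircle) (n * α : ℝ)]
  rcases le_total x y with hxy | hyx
  · exact hres.cocycle_eq_of_floor_eq h hxy ((le_abs_self _).trans hδ)
      (fun j hj hjk => (hstart j hj hjk).symm) n fun j hj hjk => (hend j hj hjk).symm
  · exact (hres.cocycle_eq_of_floor_eq h hyx (by linarith [neg_abs_le (y - x)]) hstart n hend).symm

theorem cocycle_add_zero (hres : IsResonant σ₀ σ₁ α k) (h : Separated α (k + 1) δ) {m n : ℕ}
    (hmn : ‖((m * α : ℝ) : UnitAddCircle)‖ + ‖((n * α : ℝ) : UnitAddCircle)‖ ≤ δ) :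
    cocycle σ₀ σ₁ α (mark α k) (m + n) 0 =
      cocycle σ₀ σ₁ α (mark α k) m 0 * cocycle σ₀ σ₁ α (mark α k) n 0 := by
  have hn : |n * α - round (n * α) - 0| = ‖((n * α : ℝ) : UnitAddCircle)‖ := by
    rw [sub_zero, UnitAddCircle.norm_eq]
  have hm := norm_nonneg ((m * α : ℝ) : UnitAddCircle)
  rw [cocycle_add, zero_add, ← cocycle_add_intCast _ _ _ _ _ (n * α) (-round (n * α)),
    Int.cast_neg, ← sub_eq_add_neg,
    ← hres.cocycle_eq_of_norm_lt h (by linarith) fun j hj hjk => ?_]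
  rw [hn, zero_sub, AddCircle.coe_neg, norm_neg]
  linarith [h j hj hjk]

end IsResonant

end Resonance

section Renormalization

variable {G : Type*} {σ₀ σ₁ : G} {α δ ε : ℝ} {k q : ℕ} {p : ℤ}

theorem mul_sub_intCast_injective (hα : Irrational α) {i j m n : ℤ}
    (h : i * α - m = j * α - n) : i = j := by
  by_contra hij
  refine (hα.intCast_mul (sub_ne_zero.2 hij)).ne_int (m - n) ?_
  push_cast
  linarith

theorem IsBestOneSided.notMem_uIcc (hα : Irrational α) (h : IsBestOneSided α q p) {i : ℕ}
    (hi : 0 < i) (hiq : i < q) (m : ℤ) : i * α - m ∉ uIcc 0 (q * α - p) := by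
  intro hmem
  have ne_zero : i * α - m ≠ 0 := sub_ne_zero.2 ((hα.natCast_mul hi.ne').ne_int m)
  have ne_right : i * α - m ≠ q * α - p := fun heq => by
    have := mul_sub_intCast_injective hα (i := i) (j := q) (by exact_mod_cast heq)
    omega
  refine h.2 i hi hiq m ?_
  simp only [uIcc, uIoo, mem_Icc, mem_Ioo] at hmem ⊢
  grind

theorem mark_add (h : Separated α (k + 1) δ) (hp : |q * α - p| ≤ δ) :
    mark α (k + q) = mark α k + (q * α - p) := by
  obtain ⟨hδ, hδ'⟩ := h.mark_mem_Ioo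
  rw [abs_le] at hp
  rw [← Int.fract_eq_self.2 (show mark α k + (q * α - p) ∈ Ico (0:ℝ) 1 from
    ⟨by linarith, by linarith⟩), mark, mark, Int.fract_eq_fract]
  refine ⟨⌊((k + 1 : ℕ) : ℝ) * α⌋ + p, ?_⟩
  rw [Int.fract]
  push_cast
  ring

theorem step_mark_add_eq (hα : Irrational α) (h : Separated α (k + 1) δ)
    (hq : IsBestOneSided α q p) (hp : |q * α - p| ≤ δ) {j : ℕ} (hj : j ≠ k + 1)
    (hjq : j < k + 1 + q) :
    step σ₀ σ₁ (mark α (k + q)) (j * α) = step σ₀ σ₁ (mark α k) (j * α) := by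
  set z := Int.fract (j * α) - mark α k with hz
  have z_eq : z = (j - (k + 1 : ℕ)) * α - (⌊j * α⌋ - ⌊((k + 1 : ℕ) : ℝ) * α⌋ : ℤ) := by
    rw [hz, mark, Int.fract, Int.fract]
    push_cast
    ring
  have hmem : z ∉ uIcc 0 (q * α - p) := by
    rcases hj.lt_or_gt with hlt | hgt
    · intro hmem
      have hle : |z| ≤ δ := by
        simpa using (abs_sub_left_of_mem_uIcc hmem).trans (by simpa using hp)
      have hgt := h.lt_abs_sub (j := j - (k + 1 : ℕ)) (by omega) (abs_le.2 ⟨by omega, by omega⟩)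
        (⌊j * α⌋ - ⌊((k + 1 : ℕ) : ℝ) * α⌋)
      rw [z_eq] at hle
      push_cast at hle hgt
      exact hgt.not_ge hle
    · have := hq.notMem_uIcc hα (i := j - (k + 1)) (by omega) (by omega)
      rw [Nat.cast_sub hgt.le] at this
      exact z_eq ▸ this _
  rw [uIcc, mem_Icc, not_and_or, not_le, not_le, lt_inf_iff, sup_lt_iff] at hmem
  have lt_iff : Int.fract (j * α) < mark α (k + q) ↔ Int.fract (j * α) < mark α k := by
    rw [mark_add h hp]
    rcases hmem with hmem | hmem
    · exact iff_of_true (by linarith) (by linarith)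
    · exact iff_of_false (by linarith) (by linarith)
  simp only [step, lt_iff]

variable [Group G]

theorem arcProduct_mul (hα : Irrational α) (k : ℕ) :
    arcProduct σ₀ σ₁ α k * σ₀ = cocycle σ₀ σ₁ α (mark α k) (k + 1) 0 := by
  obtain ⟨δ, hδ, h⟩ := exists_separated hα (k + 1)
  rw [cocycle_mark_succ σ₀ σ₁ h (by simpa using hδ.le), step_mark_of_nonneg σ₀ σ₁ h le_rfl hδ.le]

/-- The orbits of length `k + q + 1` of `0` relative to the marked points `mark α k` and
`mark α (k + q)` have the same itinerary, except possibly at time `k + 1`. -/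
theorem exists_arcProduct_add_mul (hα : Irrational α) (h : Separated α (k + 1) δ)
    (hq : IsBestOneSided α q p) (hp : |q * α - p| ≤ δ)
    (hone : cocycle σ₀ σ₁ α (mark α k) q 0 = 1) :
    ∃ g : G, g * σ₁ * (arcProduct σ₀ σ₁ α k * σ₀) =
        arcProduct σ₀ σ₁ α k * step σ₀ σ₁ (mark α k) (q * α - p) ∧
      g * step σ₀ σ₁ (mark α (k + q)) ((k + 1 : ℕ) * α) * (arcProduct σ₀ σ₁ α k * σ₀) =
        arcProduct σ₀ σ₁ α (k + q) * σ₀ := by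
  obtain ⟨n, rfl⟩ : ∃ n, q = n + 1 := Nat.exists_eq_succ_of_ne_zero hq.1.ne'
  refine ⟨cocycle σ₀ σ₁ α (mark α k) n ((k + 1 : ℕ) * α + α), ?_, ?_⟩
  · have step_mark : step σ₀ σ₁ (mark α k) ((k + 1 : ℕ) * α) = σ₁ := step_of_le_fract _ _ le_rfl
    calc _ = cocycle σ₀ σ₁ α (mark α k) (n + 1 + (k + 1)) 0 := by
          rw [cocycle_add, cocycle_succ', zero_add, step_mark, arcProduct_mul hα]
      _ = cocycle σ₀ σ₁ α (mark α k) (k + 1) ((n + 1 : ℕ) * α + (-p : ℤ)) := by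
          rw [add_comm, cocycle_add, hone, mul_one, zero_add, cocycle_add_intCast]
      _ = _ := by
          rw [Int.cast_neg, ← sub_eq_add_neg, cocycle_mark_succ σ₀ σ₁ h hp]
  · have hfirst : cocycle σ₀ σ₁ α (mark α (k + (n + 1))) (k + 1) 0 =
        cocycle σ₀ σ₁ α (mark α k) (k + 1) 0 := cocycle_congr fun i hi => by
      simpa only [zero_add] using step_mark_add_eq hα h hq hp (by omega) (by omega)
    have hlast : cocycle σ₀ σ₁ α (mark α (k + (n + 1))) n ((k + 1 : ℕ) * α + α) =
        cocycle σ₀ σ₁ α (mark α k) n ((k + 1 : ℕ) * α + α) := cocycle_congr fun i hi => by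
      have := step_mark_add_eq hα h hq hp (j := k + 2 + i) (by omega) (by omega)
        (σ₀ := σ₀) (σ₁ := σ₁)
      rwa [show ((k + 2 + i : ℕ) : ℝ) * α = (k + 1 : ℕ) * α + α + i * α by push_cast; ring] at this
    rw [arcProduct_mul hα, arcProduct_mul hα, show k + (n + 1) + 1 = n + 1 + (k + 1) by omega,
      cocycle_add _ _ _ _ (n + 1), cocycle_succ' _ _ _ _ n, zero_add, hfirst, hlast]

theorem IsResonant.add (hα : Irrational α) (hres : IsResonant σ₀ σ₁ α k)
    (h : Separated α (k + 1) δ) (hq : IsBestOneSided α q p) (hp : |q * α - p| ≤ δ)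
    (hone : cocycle σ₀ σ₁ α (mark α k) q 0 = 1) : IsResonant σ₀ σ₁ α (k + q) := by
  have hne : q * α - p ≠ 0 := sub_ne_zero.2 ((hα.natCast_mul hq.1.ne').ne_int p)
  obtain ⟨g, hold, hnew⟩ := exists_arcProduct_add_mul hα h hq hp hone
  rw [IsResonant] at hres ⊢
  set W := arcProduct σ₀ σ₁ α k
  set W' := arcProduct σ₀ σ₁ α (k + q)
  rcases hne.lt_or_gt with hneg | hpos
  · rw [step_mark_of_neg _ _ h hneg (abs_le.1 hp).1] at hold
    rw [step_of_le_fract _ _ ((mark_add h hp).trans_le (add_le_of_nonpos_right hneg.le)),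
      hold] at hnew
    calc σ₁ * W' * σ₀ = σ₁ * W * σ₁ := by rw [mul_assoc, ← hnew, mul_assoc]
      _ = σ₀ * (W * σ₁) * σ₀⁻¹ * σ₁ := by
          rw [← mul_assoc σ₀, ← hres, mul_inv_cancel_right]
      _ = σ₀ * W' * σ₁ := by rw [hnew, ← mul_assoc, mul_inv_cancel_right]
  · rw [step_mark_of_nonneg _ _ h hpos.le (abs_le.1 hp).2, mul_eq_right] at hold
    rw [step_of_fract_lt _ _ ((lt_add_of_pos_right _ hpos).trans_eq (mark_add h hp).symm),
      ← mul_assoc, mul_left_inj] at hnew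
    rw [eq_inv_of_mul_eq_one_left hold] at hnew
    calc σ₁ * W' * σ₀ = σ₀ * (σ₁⁻¹ * (σ₁ * W * σ₀)) := by
          rw [← hnew]
          simp only [mul_assoc, mul_inv_cancel_left, inv_mul_cancel_left]
      _ = σ₀ * W' * σ₁ := by
          rw [hres, ← hnew]
          simp only [mul_assoc]

/-- Any two commuting elements of `G` satisfy one of the four relations `x = 1`, `y = 1`, `xy = 1`
and `x²y = xy² = 1`. -/
def HasShortRelations (G : Type*) [Group G] : Prop :=
  ∀ x y : G, Commute x y → x = 1 ∨ y = 1 ∨ x * y = 1 ∨ (x * (x * y) = 1 ∧ x * y * y = 1)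

theorem hasShortRelations_perm_fin_three : HasShortRelations (Equiv.Perm (Fin 3)) := by
  have : ∀ x y : Equiv.Perm (Fin 3), x * y = y * x →
      x = 1 ∨ y = 1 ∨ x * y = 1 ∨ (x * (x * y) = 1 ∧ x * y * y = 1) := by decide
  exact this

theorem IsResonant.exists_isBestOneSided_cocycle_eq_one (hG : HasShortRelations G)
    (hα : Irrational α) (hres : IsResonant σ₀ σ₁ α k) (hε : 0 < ε) :
    ∃ (q : ℕ) (p : ℤ), IsBestOneSided α q p ∧ |q * α - p| < ε ∧
      cocycle σ₀ σ₁ α (mark α k) q 0 = 1 := by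
  obtain ⟨δ, hδ, hsep⟩ := exists_separated hα (k + 1)
  obtain ⟨q, p, q', p', hF, hq, hq'⟩ :=
    exists_isFareyPair_lt hα (show 0 < min ε δ / 4 by positivity)
  have := min_le_left ε δ
  have := min_le_right ε δ
  have abs_add (m n : ℕ) (a b : ℤ) : |((m + n : ℕ) : ℝ) * α - (a + b : ℤ)| ≤
      |m * α - a| + |n * α - b| := by
    push_cast
    rw [add_mul, add_sub_add_comm]
    exact abs_add_le _ _
  have cocycle_add_zero (m n : ℕ) (a b : ℤ) (h : |m * α - a| + |n * α - b| ≤ δ) :=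
    hres.cocycle_add_zero hsep ((add_le_add (norm_coe_le_abs_sub_intCast (m * α) a)
      (norm_coe_le_abs_sub_intCast (n * α) b)).trans h)
  have abs_q : |q * α - p| < min ε δ / 4 := by rwa [abs_of_pos hF.right_pos]
  have abs_q' : |q' * α - p'| < min ε δ / 4 := by rwa [abs_of_neg hF.left_neg, neg_lt]
  have abs_qq' := abs_add q q' p p'
  have mul_eq := cocycle_add_zero q q' p p' (by linarith)
  have mul_eq' := cocycle_add_zero q' q p' p (by linarith)
  rcases hG _ _ (mul_eq.symm.trans (add_comm q q' ▸ mul_eq')) with hx | hy | hxy | ⟨hxxy, hxyy⟩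
  · exact ⟨q, p, hF.isBestOneSided_right, by linarith, hx⟩
  · exact ⟨q', p', hF.isBestOneSided_left, by linarith, hy⟩
  · exact ⟨q + q', p + p', hF.isBestOneSided_add, by linarith, mul_eq.trans hxy⟩
  rcases hF.add_left_or_add_right hα with hF' | hF'
  · refine ⟨q + q' + q', p + p' + p', hF'.isBestOneSided_add, ?_, ?_⟩
    · linarith [abs_add (q + q') q' (p + p') p']
    · rw [cocycle_add_zero _ _ (p + p') p' (by linarith), mul_eq, hxyy]
  · refine ⟨q + (q + q'), p + (p + p'), hF'.isBestOneSided_add, ?_, ?_⟩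
    · linarith [abs_add q (q + q') p (p + p')]
    · rw [cocycle_add_zero _ _ p (p + p') (by linarith), mul_eq, hxxy]

variable (σ₀ σ₁ α) in
/-- The resonant marked points. The marked point of a rigid system is found among their limits. -/
def resonantMarks : Set ℝ := {β | ∃ k, IsResonant σ₀ σ₁ α k ∧ mark α k = β}

theorem preperfect_resonantMarks (hG : HasShortRelations G) (hα : Irrational α) :
    Preperfect (resonantMarks σ₀ σ₁ α) := by
  rintro _ ⟨k, hres, rfl⟩
  obtain ⟨δ, hδ, hsep⟩ := exists_separated hα (k + 1)
  rw [accPt_iff_nhds]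
  intro U hU
  obtain ⟨ε, hε, hU⟩ := Metric.mem_nhds_iff.1 hU
  obtain ⟨q, p, hq, hp, hone⟩ :=
    hres.exists_isBestOneSided_cocycle_eq_one hG hα (lt_min hε hδ)
  have hpδ := hp.le.trans (min_le_right _ _)
  refine ⟨mark α (k + q), ⟨hU ?_, k + q, hres.add hα hsep hq hpδ hone, rfl⟩, ?_⟩
  · rw [mark_add hsep hpδ, Metric.mem_ball, dist_self_add_left, Real.norm_eq_abs]
    exact hp.trans_le (min_le_left _ _)
  · rw [mark_add hsep hpδ, ne_eq, add_eq_left, sub_eq_zero]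
    exact (hα.natCast_mul hq.1.ne').ne_int p

end Renormalization

section BaseResonance

variable {G : Type*} {σ₀ σ₁ : G} {α : ℝ} {k : ℕ}

theorem step_mark_of_lt (hα : 0 < α) (hk : (k + 1 : ℕ) * α < 1) {j : ℕ} (hj : j < k + 1) :
    step σ₀ σ₁ (mark α k) (j * α) = σ₀ := by
  have hlt : (j : ℝ) * α < (k + 1 : ℕ) * α :=
    mul_lt_mul_of_pos_right (Nat.cast_lt.2 hj) hα
  refine step_of_fract_lt _ _ ?_
  rwa [mark, Int.fract_eq_self.2 ⟨by positivity, hk⟩,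
    Int.fract_eq_self.2 ⟨by positivity, hlt.trans hk⟩]

variable [Group G]

theorem isResonant_add_intCast_iff (m : ℤ) :
    IsResonant σ₀ σ₁ (α + m) k ↔ IsResonant σ₀ σ₁ α k := by
  have hmark : mark (α + m) k = mark α k := by
    rw [mark, mark, mul_add, ← Int.cast_natCast (k + 1), ← Int.cast_mul, Int.fract_add_intCast]
  have harc : arcProduct σ₀ σ₁ (α + m) k = arcProduct σ₀ σ₁ α k := by
    rw [arcProduct, arcProduct, hmark]
    refine cocycle_congr fun i _ => ?_
    rw [show α + m + i * (α + m) = α + i * α + ((i + 1) * m : ℤ) by push_cast; ring,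
      step_add_intCast]
  rw [IsResonant, IsResonant, harc]

/-- The symmetry `x ↦ -x` exchanges the two arcs. -/
theorem arcProduct_neg (hα : Irrational α) (k : ℕ) :
    arcProduct σ₀ σ₁ (-α) k = arcProduct σ₁ σ₀ α k := by
  have fract_neg {j : ℕ} (hj : j ≠ 0) : Int.fract (j * -α) = 1 - Int.fract (j * α) := by
    rw [mul_neg, Int.fract_neg]
    exact Int.fract_ne_zero_iff.2 fun ⟨m, hm⟩ => (hα.natCast_mul hj).ne_int m hm.symm
  refine cocycle_congr fun i hi => ?_
  have hne : Int.fract (((i + 1 : ℕ) : ℝ) * α) ≠ mark α k := fun heq => by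
    obtain ⟨m, hm⟩ := Int.fract_eq_fract.1 heq
    have := mul_sub_intCast_injective hα (i := (i + 1 : ℕ)) (j := (k + 1 : ℕ)) (m := m) (n := 0)
      (by push_cast at *; linarith)
    omega
  have smul_eq (t : ℝ) : t + i * t = (i + 1 : ℕ) * t := by push_cast; ring
  simp only [step, smul_eq, fract_neg (Nat.succ_ne_zero _), mark, sub_lt_sub_iff_left]
  rw [mark] at hne
  rcases hne.lt_or_gt with h | h
  · rw [if_neg h.not_gt, if_pos h]
  · rw [if_pos h, if_neg h.not_gt]

theorem IsResonant.neg (hα : Irrational α) (h : IsResonant σ₁ σ₀ α k) :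
    IsResonant σ₀ σ₁ (-α) k := by
  rw [IsResonant, arcProduct_neg hα]
  exact h.symm

theorem arcProduct_of_lt_one (hα : 0 < α) (hk : (k + 1 : ℕ) * α < 1) :
    arcProduct σ₀ σ₁ α k = σ₀ ^ k := by
  have cocycle_eq_pow (n : ℕ) (hn : n ≤ k) : cocycle σ₀ σ₁ α (mark α k) n α = σ₀ ^ n := by
    induction n with
    | zero => exact (pow_zero σ₀).symm
    | succ n ih =>
      rw [cocycle_succ, ih (by omega), pow_succ',
        show α + n * α = (n + 1 : ℕ) * α by push_cast; ring, step_mark_of_lt hα hk (by omega)]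
  exact cocycle_eq_pow k le_rfl

theorem isResonant_of_pow_eq_one (hα : 0 < α) (hk : (k + 1 : ℕ) * α < 1)
    (hσ : σ₀ ^ (k + 1) = 1) : IsResonant σ₀ σ₁ α k := by
  rw [IsResonant, arcProduct_of_lt_one hα hk, mul_assoc, ← pow_succ, ← pow_succ', hσ, mul_one,
    one_mul]

theorem arcProduct_three (hα : 1 / 3 < α) (hα' : α < 1 / 2) :
    arcProduct σ₀ σ₁ α 3 = σ₀ * σ₁ * σ₀ := by
  have hmark : mark α 3 = 4 * α - 1 := by
    rw [mark, ← Int.fract_sub_one, Int.fract_eq_self.2] <;> norm_num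
    constructor <;> linarith
  have step_one : step σ₀ σ₁ (mark α 3) α = σ₀ := step_of_fract_lt _ _ <| by
    rw [hmark, Int.fract_eq_self.2 ⟨by linarith, by linarith⟩]
    linarith
  have step_two : step σ₀ σ₁ (mark α 3) (α + α) = σ₁ := step_of_le_fract _ _ <| by
    rw [hmark, Int.fract_eq_self.2 ⟨by linarith, by linarith⟩]
    linarith
  have step_three : step σ₀ σ₁ (mark α 3) (α + 2 * α) = σ₀ := step_of_fract_lt _ _ <| by
    rw [hmark, ← Int.fract_sub_one, Int.fract_eq_self.2 ⟨by linarith, by linarith⟩]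
    linarith
  simp [arcProduct, cocycle, step_one, step_two, step_three, mul_assoc]

set_option maxRecDepth 10000 in
theorem sq_eq_one_or_resonance_perm_fin_three : ∀ x y : Equiv.Perm (Fin 3), x ^ 2 = 1 ∨
    (x ^ 3 = 1 ∧ y * (x * y * x) * x = x * (x * y * x) * y) := by
  decide

theorem exists_isResonant_of_lt_half (σ₀ σ₁ : Equiv.Perm (Fin 3)) (hα : 0 < α)
    (hα' : α < 1 / 2) (hne : α ≠ 1 / 3) : ∃ k, IsResonant σ₀ σ₁ α k := by
  rcases sq_eq_one_or_resonance_perm_fin_three σ₀ σ₁ with h2 | ⟨h3, h⟩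
  · exact ⟨1, isResonant_of_pow_eq_one hα (by norm_num; linarith) h2⟩
  rcases hne.lt_or_gt with hlt | hgt
  · exact ⟨2, isResonant_of_pow_eq_one hα (by norm_num; linarith) h3⟩
  · refine ⟨3, ?_⟩
    rwa [IsResonant, arcProduct_three hgt hα']

theorem exists_isResonant (σ₀ σ₁ : Equiv.Perm (Fin 3)) (hα : Irrational α) :
    ∃ k, IsResonant σ₀ σ₁ α k := by
  set a := α - round α
  have ha : Irrational a := hα.sub_intCast _
  have hα_eq : a + round α = α := sub_add_cancel _ _
  have ha_abs : Irrational |a| := by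
    rcases abs_choice a with h | h
    · rwa [h]
    · exact h ▸ ha.neg
  have ne_third : |a| ≠ 1 / 3 := fun h => ha_abs.ne_rat (1 / 3) (by rw [h]; norm_num)
  have abs_lt : |a| < 1 / 2 := (abs_sub_round α).lt_of_ne fun h =>
    ha_abs.ne_rat (1 / 2) (by rw [h]; norm_num)
  rw [← hα_eq]
  simp only [isResonant_add_intCast_iff]
  rcases ha.ne_zero.lt_or_gt with hneg | hpos
  · rw [abs_of_neg hneg] at *
    obtain ⟨k, hk⟩ := exists_isResonant_of_lt_half σ₁ σ₀ (neg_pos.2 hneg) abs_lt ne_third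
    exact ⟨k, neg_neg a ▸ hk.neg ha.neg⟩
  · rw [abs_of_pos hpos] at *
    exact exists_isResonant_of_lt_half σ₀ σ₁ hpos abs_lt ne_third

end BaseResonance

section AlmostPeriods

variable {G : Type*} {σ₀ σ₁ : G} {α β ε ε' δ x : ℝ} {k q Q : ℕ}

theorem volume_biUnion_closedBall_le {ι : Type*} (s : Finset ι) (c : ι → UnitAddCircle)
    (r : ℝ) : volume (⋃ i ∈ s, Metric.closedBall (c i) r) ≤ ENNReal.ofReal (s.card * (2 * r)) :=
  calc _ ≤ ∑ i ∈ s, volume (Metric.closedBall (c i) r) := measure_biUnion_finset_le _ _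
    _ ≤ ∑ _i ∈ s, ENNReal.ofReal (2 * r) := Finset.sum_le_sum fun i _ => by
        rw [AddCircle.volume_closedBall]
        exact ENNReal.ofReal_le_ofReal (min_le_right _ _)
    _ = _ := by
        rw [Finset.sum_const, nsmul_eq_mul, ENNReal.ofReal_mul (Nat.cast_nonneg _),
          ENNReal.ofReal_natCast]

theorem step_eq_of_abs_sub_lt_norm {β' : ℝ} (h : |β' - β| < ‖((x - β : ℝ) : UnitAddCircle)‖) :
    step σ₀ σ₁ β' x = step σ₀ σ₁ β x := by
  refine step_eq_of_floor_eq _ _ rfl (floor_eq_of_abs_sub_lt_norm ?_)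
  rwa [sub_sub_sub_cancel_left, abs_sub_comm]

variable [Group G]

/-- The `Q`-th iterate of the skew product moves the base by less than `ε` and acts trivially on
the fibres over a set of measure at least `1 - ε`. The set of exceptional fibres need not be known
to be measurable: `volume` is here an outer measure. -/
def IsAlmostPeriod (σ₀ σ₁ : G) (α β ε : ℝ) (Q : ℕ) : Prop :=
  ‖((Q * α : ℝ) : UnitAddCircle)‖ < ε ∧
    volume ((↑) '' {x : ℝ | cocycle σ₀ σ₁ α β Q x ≠ 1} : Set UnitAddCircle) ≤ ENNReal.ofReal ε

theorem IsResonant.cocycle_mul_eq_pow (hres : IsResonant σ₀ σ₁ α k) (h : Separated α (k + 1) δ)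
    (hq : ‖((q * α : ℝ) : UnitAddCircle)‖ ≤ δ) (i : ℕ)
    (hx : ∀ j : ℕ, 0 < j → j ≤ k + 1 →
      i * ‖((q * α : ℝ) : UnitAddCircle)‖ < ‖((x - j * α : ℝ) : UnitAddCircle)‖) :
    cocycle σ₀ σ₁ α (mark α k) (i * q) x = cocycle σ₀ σ₁ α (mark α k) q x ^ i := by
  induction i with
  | zero => simp [cocycle]
  | succ i ih =>
    have hnorm := norm_nonneg ((q * α : ℝ) : UnitAddCircle)
    have hshift : |x + (q * α - round (q * α)) - x| = ‖((q * α : ℝ) : UnitAddCircle)‖ := by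
      rw [add_sub_cancel_left, UnitAddCircle.norm_eq]
    have hiq : ‖(((i * q : ℕ) * α : ℝ) : UnitAddCircle)‖ ≤ i * ‖((q * α : ℝ) : UnitAddCircle)‖ := by
      rw [Nat.cast_mul, mul_assoc, ← nsmul_eq_mul, AddCircle.coe_nsmul]
      exact norm_nsmul_le
    push_cast at hx
    have hinv := hres.cocycle_eq_of_norm_lt h (n := i * q) (hshift.trans_le hq)
      fun j hj hjk => by rw [hshift]; linarith [hx j hj hjk]
    rw [← add_sub_assoc, sub_eq_add_neg, ← Int.cast_neg, cocycle_add_intCast] at hinv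
    rw [add_mul, one_mul, cocycle_add, ← hinv, ih fun j hj hjk => by linarith [hx j hj hjk],
      pow_succ]

theorem IsResonant.exists_isAlmostPeriod [Finite G] (hα : Irrational α)
    (hres : IsResonant σ₀ σ₁ α k) (N : ℕ) (hε : 0 < ε) :
    ∃ Q ≥ N, IsAlmostPeriod σ₀ σ₁ α (mark α k) ε Q := by
  obtain ⟨δ, hδ, hsep⟩ := exists_separated hα (k + 1)
  set c := Nat.card G
  have hc : (1 : ℝ) ≤ c := Nat.one_le_cast.2 Nat.card_pos
  set r := ε / (2 * (k + 1 : ℕ)) with hr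
  have : 0 < r := by positivity
  have hrε : (k + 1 : ℕ) * (2 * r) = ε := by rw [hr]; field_simp
  obtain ⟨q, hqN, hq⟩ := exists_lt_norm_mul_lt hα N
    (show 0 < min δ (min ε r) / c from div_pos (by positivity) (by positivity))
  have hcq : c * ‖((q * α : ℝ) : UnitAddCircle)‖ < min δ (min ε r) :=
    (lt_div_iff₀' (by positivity)).1 hq
  rw [lt_min_iff, lt_min_iff] at hcq
  obtain ⟨hcqδ, hcqε, hcqr⟩ := hcq
  refine ⟨c * q, hqN.le.trans (Nat.le_mul_of_pos_left q Nat.card_pos), ?_, ?_⟩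
  · rw [Nat.cast_mul, mul_assoc, ← nsmul_eq_mul, AddCircle.coe_nsmul]
    exact norm_nsmul_le.trans_lt hcqε
  have hsub : (↑) '' {x : ℝ | cocycle σ₀ σ₁ α (mark α k) (c * q) x ≠ 1} ⊆
      ⋃ j ∈ Finset.Icc 1 (k + 1), Metric.closedBall ((j * α : ℝ) : UnitAddCircle) r := by
    rintro _ ⟨x, hx, rfl⟩
    by_contra hfar
    simp only [mem_iUnion, Finset.mem_Icc, Metric.mem_closedBall, not_exists, not_le,
      dist_eq_norm, ← AddCircle.coe_sub] at hfar
    refine hx ?_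
    rw [hres.cocycle_mul_eq_pow hsep ((le_mul_of_one_le_left (norm_nonneg _) hc).trans hcqδ.le) c
      fun j hj hjk => hcqr.trans (hfar j ⟨hj, hjk⟩), pow_card_eq_one']
  calc _ ≤ _ := measure_mono hsub
    _ ≤ _ := volume_biUnion_closedBall_le _ _ _
    _ = _ := by rw [Nat.card_Icc, Nat.add_sub_cancel, hrε]

theorem IsAlmostPeriod.eventually_nhds (h : IsAlmostPeriod σ₀ σ₁ α β ε Q) (hε : ε < ε') :
    ∀ᶠ β' in nhds β, IsAlmostPeriod σ₀ σ₁ α β' ε' Q := by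
  obtain ⟨hQ, hvol⟩ := h
  set r := (ε' - ε) / (2 * (Q + 1 : ℕ)) with hr
  have hr0 : 0 < r := div_pos (sub_pos.2 hε) (by positivity)
  have hrε : Q * (2 * r) ≤ ε' - ε :=
    calc Q * (2 * r) ≤ (Q + 1 : ℕ) * (2 * r) := by gcongr; simp
      _ = ε' - ε := by rw [hr]; field_simp
  filter_upwards [Metric.ball_mem_nhds β hr0] with β' hβ'
  refine ⟨hQ.trans hε, ?_⟩
  have hsub : (↑) '' {x : ℝ | cocycle σ₀ σ₁ α β' Q x ≠ 1} ⊆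
      (↑) '' {x : ℝ | cocycle σ₀ σ₁ α β Q x ≠ 1} ∪
        ⋃ i ∈ Finset.range Q, Metric.closedBall ((β - i * α : ℝ) : UnitAddCircle) r := by
    rintro _ ⟨x, hx, rfl⟩
    by_contra hfar
    simp only [mem_union, mem_iUnion, Finset.mem_range, Metric.mem_closedBall, not_or, not_exists,
      not_le, dist_eq_norm, ← AddCircle.coe_sub] at hfar
    refine hfar.1 ⟨x, fun hone => hx ?_, rfl⟩
    rw [← hone]
    refine cocycle_congr fun i hi => step_eq_of_abs_sub_lt_norm ?_
    rw [← sub_sub_eq_add_sub]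
    exact (mem_ball_iff_norm.1 hβ').trans (hfar.2 i hi)
  calc _ ≤ _ := measure_mono hsub
    _ ≤ _ := measure_union_le _ _
    _ ≤ ENNReal.ofReal ε + ENNReal.ofReal (Q * (2 * r)) :=
        add_le_add hvol ((volume_biUnion_closedBall_le _ _ _).trans_eq (by simp))
    _ ≤ ENNReal.ofReal ε' := by
        rw [← ENNReal.ofReal_add ((norm_nonneg _).trans hQ.le) (by positivity)]
        exact ENNReal.ofReal_le_ofReal (by linarith)

end AlmostPeriods

section Baire

theorem exists_mem_closure_forall_mem_notMem {X : Type*} [MetricSpace X] [CompleteSpace X]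
    {D : Set X} (hD : Preperfect D) (hne : D.Nonempty) {O : ℕ → Set X}
    (hO : ∀ n, ∀ x ∈ D, O n ∈ nhds x) {E : Set X} (hE : E.Countable) :
    ∃ x ∈ closure D, (∀ n, x ∈ O n) ∧ x ∉ E := by
  have : CompleteSpace (closure D) := isClosed_closure.completeSpace_coe
  have : Nonempty (closure D) := hne.closure.to_subtype
  have forall_mem : ∀ᶠ y : closure D in residual _, ∀ n, (y : X) ∈ O n := by
    refine eventually_countable_forall.2 fun n => mem_of_superset (residual_of_dense_open
      (isOpen_interior.preimage continuous_subtype_val) ?_) (preimage_mono interior_subset)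
    have dense_preimage : Dense ((↑) ⁻¹' D : Set (closure D)) := by
      rw [Subtype.dense_iff, Subtype.image_preimage_coe, inter_eq_right.2 subset_closure]
    exact dense_preimage.mono fun y hy => mem_interior_iff_mem_nhds.2 (hO n y hy)
  have notMem : ∀ᶠ y : closure D in residual _, (y : X) ∉ E := by
    have ne_of_mem : ∀ᶠ y : closure D in residual _, ∀ e ∈ E, (y : X) ≠ e := by
      refine (eventually_countable_ball hE).2 fun e _ => residual_of_dense_open
        (isOpen_ne.preimage continuous_subtype_val) (Subtype.dense_iff.2 fun y hy => ?_)
      rcases eq_or_ne y e with rfl | hye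
      · refine mem_closure_iff_nhds.2 fun U hU => ?_
        obtain ⟨z, ⟨hzU, hzD⟩, hzy⟩ := accPt_iff_nhds.1 (hD.perfect_closure.acc y hy) U hU
        exact ⟨z, hzU, ⟨z, hzD⟩, hzy, rfl⟩
      · exact subset_closure ⟨⟨y, hy⟩, hye, rfl⟩
    exact ne_of_mem.mono fun y hy hyE => hy y hyE rfl
  obtain ⟨y, hyO, hyE⟩ := (dense_of_mem_residual (forall_mem.and notMem)).nonempty
  exact ⟨y, y.2, hyO, hyE⟩

end Baire

section MeasurePreserving

theorem measure_image_symmDiff {X : Type*} [MeasurableSpace X] [StandardBorelSpace X]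
    {μ : Measure X} [IsFiniteMeasure μ] {S : X → X} (hS : MeasurePreserving S μ μ)
    (hinj : Function.Injective S) {A : Set X} (hA : MeasurableSet A) :
    μ ((S '' A) ∆ A) = 2 * μ (A \ S ⁻¹' A) := by
  have hSA : MeasurableSet (S '' A) :=
    (hS.measurable.measurableEmbedding hinj).measurableSet_image.2 hA
  have hSA' : MeasurableSet (S ⁻¹' A) := hS.measurable hA
  rw [← hS.measure_preimage (hSA.symmDiff hA).nullMeasurableSet, preimage_symmDiff,
    preimage_image_eq _ hinj, Set.symmDiff_def,
    measure_union disjoint_sdiff_sdiff (hSA'.diff hA),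
    measure_sdiff_symm hSA'.nullMeasurableSet hA.nullMeasurableSet
      (hS.measure_preimage hA.nullMeasurableSet) (measure_ne_top _ _), two_mul]

/-- `A` is approximated by a closed subset, and that one by an open thickening. -/
theorem tendsto_measure_sdiff_preimage {X ι : Type*} [PseudoEMetricSpace X] [MeasurableSpace X]
    [BorelSpace X] {μ : Measure X} [IsFiniteMeasure μ] {S : ι → X → X} {l : Filter ι}
    (hS : ∀ i, MeasurePreserving (S i) μ μ) (h : TendstoInMeasure μ S l id) {A : Set X}
    (hA : MeasurableSet A) : Tendsto (fun i => μ (A \ S i ⁻¹' A)) l (nhds 0) := by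
  refine ENNReal.tendsto_nhds_zero.2 fun ε hε => ?_
  have hε' : ε / 3 ≠ 0 := (ENNReal.div_pos hε.ne' (by simp)).ne'
  obtain ⟨F, hFA, hF, hAF⟩ := hA.exists_isClosed_sdiff_lt (measure_ne_top μ A) hε'
  obtain ⟨r, hUF, hr⟩ : ∃ r : ℝ, μ (Metric.thickening r F \ F) ≤ ε / 3 ∧ 0 < r := by
    have hlim := tendsto_measure_thickening_of_isClosed (μ := μ)
      ⟨1, one_pos, measure_ne_top _ _⟩ hF
    have hlt : μ F < μ F + ε / 3 := ENNReal.lt_add_right (measure_ne_top _ _) hε'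
    obtain ⟨r, hr, hr0 : 0 < r⟩ :=
      ((hlim.eventually_lt_const hlt).and self_mem_nhdsWithin).exists
    refine ⟨r, ?_, hr0⟩
    rw [measure_sdiff (Metric.self_subset_thickening hr0 F) hF.measurableSet.nullMeasurableSet
      (measure_ne_top _ _)]
    exact tsub_le_iff_left.2 hr.le
  filter_upwards [(h (ENNReal.ofReal r) (ENNReal.ofReal_pos.2 hr)).eventually_lt_const
    (pos_iff_ne_zero.2 hε')] with i hi
  have hsub : A \ S i ⁻¹' A ⊆ (A \ F) ∪ ({x | ENNReal.ofReal r ≤ edist (S i x) x} ∪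
      S i ⁻¹' (Metric.thickening r F \ F)) := by
    rintro x ⟨hxA, hxS⟩
    by_cases hxF : x ∈ F
    · rcases le_or_gt (ENNReal.ofReal r) (edist (S i x) x) with hle | hlt
      · exact Or.inr (Or.inl hle)
      · exact Or.inr (Or.inr ⟨(Metric.mem_thickening_iff_exists_edist_lt _ _).2 ⟨x, hxF, hlt⟩,
          fun hxSF => hxS (hFA hxSF)⟩)
    · exact Or.inl ⟨hxA, hxF⟩
  have hUm := (Metric.isOpen_thickening (δ := r) (E := F)).measurableSet.diff hF.measurableSet
  calc μ (A \ S i ⁻¹' A) ≤ ε / 3 + (ε / 3 + ε / 3) := by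
        refine (measure_mono hsub).trans ((measure_union_le _ _).trans
          (add_le_add hAF.le ((measure_union_le _ _).trans (add_le_add hi.le ?_))))
        rwa [(hS i).measure_preimage hUm.nullMeasurableSet]
    _ = ε := by rw [← add_assoc, ENNReal.add_thirds]

theorem rigid_of_tendstoInMeasure {X : Type*} [PseudoEMetricSpace X] [MeasurableSpace X]
    [BorelSpace X] [StandardBorelSpace X] {μ : Measure X} [IsFiniteMeasure μ] {T : X → X}
    (hT : MeasurePreserving T μ μ) (hinj : Function.Injective T) {q : ℕ → ℕ}
    (hq : Tendsto q atTop atTop) (h : TendstoInMeasure μ (fun n => T^[q n]) atTop id) :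
    Rigid T μ := by
  refine ⟨q, hq, fun A hA => ?_⟩
  simp only [fun n => measure_image_symmDiff (hT.iterate (q n)) (hinj.iterate (q n)) hA]
  simpa using ENNReal.Tendsto.const_mul
    (tendsto_measure_sdiff_preimage (fun n => hT.iterate (q n)) h hA) (Or.inr (by simp))

end MeasurePreserving

section UniqueErgodicity

variable {H : Type*} [AddCommGroup H] [TopologicalSpace H] [IsTopologicalAddGroup H]
  [TopologicalSpace.PseudoMetrizableSpace H] [MeasurableSpace H] [BorelSpace H]
  {a : H} {μ : Measure H} [IsProbabilityMeasure μ]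

/-- Both sides of `∫ f (y + x) ∂μ = ∫ f ∂μ` are continuous in `y` and agree on the multiples
of `a`. -/
theorem isAddLeftInvariant_of_denseRange (ha : DenseRange fun n : ℕ => n • a)
    (h : MeasurePreserving (a + ·) μ μ) : μ.IsAddLeftInvariant := by
  have measurePreserving_nsmul (n : ℕ) : MeasurePreserving (n • a + ·) μ μ := by
    simpa only [add_left_iterate] using h.iterate n
  have integral_eq (f : BoundedContinuousFunction H ℝ) (y : H) :
      ∫ x, f (y + x) ∂μ = ∫ x, f x ∂μ := by
    have hcont : Continuous fun y => ∫ x, f (y + x) ∂μ :=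
      continuous_of_dominated (bound := fun _ => ‖f‖)
        (fun y => (f.continuous.comp (continuous_const_add y)).aestronglyMeasurable)
        (fun y => .of_forall fun x => f.norm_coe_le_norm _) (integrable_const _)
        (.of_forall fun x => f.continuous.comp (continuous_add_const x))
    have hconst : Continuous fun _ : H => ∫ x, f x ∂μ := continuous_const
    refine congrFun (ha.equalizer hcont hconst (funext fun n => ?_)) y
    have hn := measurePreserving_nsmul n
    simpa [hn.map_eq] using (integral_map hn.measurable.aemeasurable
      (f.continuous.aestronglyMeasurable (μ := μ.map (n • a + ·)))).symm
  refine ⟨fun y => ?_⟩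
  have hy : Measurable (y + · : H → H) := measurable_const_add y
  have := Measure.isProbabilityMeasure_map (μ := μ) hy.aemeasurable
  refine ext_of_forall_integral_eq_of_IsFiniteMeasure fun f => ?_
  rw [integral_map hy.aemeasurable f.continuous.aestronglyMeasurable, integral_eq]

theorem eq_addHaar_of_denseRange [CompactSpace H] (ha : DenseRange fun n : ℕ => n • a)
    (h : MeasurePreserving (a + ·) μ μ) (ν : Measure H) [ν.IsAddHaarMeasure]
    [IsProbabilityMeasure ν] : μ = ν := by
  have := isAddLeftInvariant_of_denseRange ha h
  have : μ.IsAddHaarMeasure := Measure.isAddHaarMeasure_of_isCompact_nonempty_interior μ univ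
    isCompact_univ (by simp) (by simp) (by simp)
  exact Measure.isAddHaarMeasure_eq_of_isProbabilityMeasure μ ν

end UniqueErgodicity

section SkewProduct

variable {d : ℕ} (σ₀ σ₁ : Equiv.Perm (Fin d)) (α β : ℝ)

theorem vst_coe (x : ℝ) (s : Fin d) :
    VST α ![β] ![σ₀, σ₁] (x, s) = (((x + α : ℝ) : UnitAddCircle), step σ₀ σ₁ β x s) := by
  have circleRepr_coe : circleRepr (x : UnitAddCircle) = Int.fract x := by
    rw [circleRepr, AddCircle.coe_equivIco_mk_apply, div_one, mul_one]
  have sigmaOf_eq : sigmaOf ![β] ![σ₀, σ₁] (Int.fract x) = step σ₀ σ₁ β x := by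
    rcases lt_or_ge (Int.fract x) β with h | h
    · have : atomIdx ![β] (Int.fract x) = 0 := Fin.ext (by simp [atomIdx, h])
      rw [sigmaOf, this, step_of_fract_lt _ _ h, Matrix.cons_val_zero]
    · have : atomIdx ![β] (Int.fract x) = 1 := Fin.ext (by simp [atomIdx, h])
      rw [sigmaOf, this, step_of_le_fract _ _ h, Matrix.cons_val_one, Matrix.cons_val_fin_one]
  rw [VST, rotMap, circleRepr_coe, sigmaOf_eq, AddCircle.coe_add]

theorem iterate_vst_coe (n : ℕ) (x : ℝ) (s : Fin d) :
    (VST α ![β] ![σ₀, σ₁])^[n] (x, s) =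
      (((x + n * α : ℝ) : UnitAddCircle), cocycle σ₀ σ₁ α β n x s) := by
  induction n with
  | zero => simp [cocycle]
  | succ n ih =>
    rw [Function.iterate_succ_apply', ih, vst_coe, cocycle_succ, Equiv.Perm.mul_apply,
      Nat.cast_succ, add_one_mul, add_assoc]

end SkewProduct

section Invariant

variable {r d : ℕ} {α : ℝ} {β : Fin r → ℝ} {σ : Fin (r + 1) → Equiv.Perm (Fin d)}
  {μ : Measure (UnitAddCircle × Fin d)}

theorem vst_injective : Function.Injective (VST α β σ) := by
  rintro ⟨x, s⟩ ⟨y, t⟩ h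
  obtain ⟨hxy, hst⟩ := Prod.mk.inj h
  obtain rfl : x = y := add_right_cancel hxy
  obtain rfl : s = t := (sigmaOf β σ (circleRepr x)).injective hst
  rfl

theorem measurePreserving_fst_of_vst [IsProbabilityMeasure μ] (hα : Irrational α)
    (hT : MeasurePreserving (VST α β σ) μ μ) : MeasurePreserving Prod.fst μ volume := by
  have : IsProbabilityMeasure (volume : Measure UnitAddCircle) :=
    ⟨by rw [AddCircle.measure_univ, ENNReal.ofReal_one]⟩
  have : IsProbabilityMeasure (μ.map Prod.fst) :=
    Measure.isProbabilityMeasure_map measurable_fst.aemeasurable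
  have hrot : Measurable ((α : UnitAddCircle) + ·) := measurable_const_add _
  have semiconj : ((α : UnitAddCircle) + ·) ∘ Prod.fst = Prod.fst ∘ VST α β σ :=
    funext fun p => add_comm _ p.1
  refine ⟨measurable_fst, eq_addHaar_of_denseRange (denseRange_nsmul_coe hα) ⟨hrot, ?_⟩ volume⟩
  rw [Measure.map_map hrot measurable_fst, semiconj, ← Measure.map_map measurable_fst hT.measurable,
    hT.map_eq]

end Invariant

theorem rigid_vst_of_isAlmostPeriod {d : ℕ} {σ₀ σ₁ : Equiv.Perm (Fin d)} {α β : ℝ}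
    (hα : Irrational α)
    (h : ∀ N : ℕ, ∃ Q ≥ N, IsAlmostPeriod σ₀ σ₁ α β (1 / (N + 1)) Q)
    {μ : Measure (UnitAddCircle × Fin d)} [IsProbabilityMeasure μ]
    (hT : MeasurePreserving (VST α ![β] ![σ₀, σ₁]) μ μ) : Rigid (VST α ![β] ![σ₀, σ₁]) μ := by
  let : MetricSpace (Fin d) := TopologicalSpace.metrizableSpaceMetric (Fin d)
  choose Q hQ hper using h
  have hlim : Tendsto (fun n : ℕ => ENNReal.ofReal (1 / (n + 1))) atTop (nhds 0) := by
    simpa using ENNReal.tendsto_ofReal (tendsto_one_div_add_atTop_nhds_zero_nat (𝕜 := ℝ))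
  refine rigid_of_tendstoInMeasure hT vst_injective (tendsto_atTop_mono hQ tendsto_id)
    fun ε hε => ?_
  refine tendsto_of_tendsto_of_tendsto_of_le_of_le' tendsto_const_nhds hlim
    (.of_forall fun _ => zero_le) ?_
  filter_upwards [hlim.eventually_lt_const hε] with n hn
  obtain ⟨hnorm, hvol⟩ := hper n
  calc μ {p | ε ≤ edist ((VST α ![β] ![σ₀, σ₁])^[Q n] p) p}
      ≤ μ (Prod.fst ⁻¹' ((↑) '' {x : ℝ | cocycle σ₀ σ₁ α β (Q n) x ≠ 1})) := by
        refine measure_mono ?_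
        rintro ⟨y, s⟩ (hp : ε ≤ edist _ _)
        obtain ⟨x, rfl⟩ := QuotientAddGroup.mk_surjective y
        refine ⟨x, fun hone => hp.not_gt ?_, rfl⟩
        rw [iterate_vst_coe, hone, Equiv.Perm.one_apply, Prod.edist_eq, edist_self, edist_dist,
          dist_eq_norm, ← AddCircle.coe_sub, add_sub_cancel_left, max_eq_left zero_le]
        exact (ENNReal.ofReal_le_ofReal hnorm.le).trans_lt hn
    _ ≤ volume ((↑) '' {x : ℝ | cocycle σ₀ σ₁ α β (Q n) x ≠ 1} : Set UnitAddCircle) :=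
        (measurePreserving_fst_of_vst hα hT).measure_preimage_le _
    _ ≤ ENNReal.ofReal (1 / (n + 1)) := hvol

theorem countable_zPlusAlphaZ (α : ℝ) : (ZPlusAlphaZ α).Countable := by
  refine (countable_range fun p : ℤ × ℤ => (p.1 : ℝ) + p.2 * α).mono ?_
  rintro _ ⟨m, k, rfl⟩
  exact ⟨(m, k), rfl⟩

theorem exists_forall_isAlmostPeriod {G : Type*} [Group G] [Finite G] (hG : HasShortRelations G)
    {σ₀ σ₁ : G} {α : ℝ} (hα : Irrational α) {k : ℕ} (hk : IsResonant σ₀ σ₁ α k) :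
    ∃ β : ℝ, Irrational β ∧ 0 < β ∧ β < 1 ∧ β ∉ ZPlusAlphaZ α ∧
      ∀ N : ℕ, ∃ Q ≥ N, IsAlmostPeriod σ₀ σ₁ α β (1 / (N + 1)) Q := by
  have hE : (ZPlusAlphaZ α ∪ range ((↑) : ℚ → ℝ)).Countable :=
    (countable_zPlusAlphaZ α).union (countable_range _)
  have hO (N : ℕ) : ∀ β ∈ resonantMarks σ₀ σ₁ α,
      {β | ∃ Q ≥ N, IsAlmostPeriod σ₀ σ₁ α β (1 / (N + 1)) Q} ∈ nhds β := by
    rintro _ ⟨j, hj, rfl⟩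
    have hN : (0 : ℝ) < 1 / (N + 1) := Nat.one_div_pos_of_nat
    obtain ⟨Q, hQN, hQ⟩ := hj.exists_isAlmostPeriod hα N (half_pos hN)
    exact (hQ.eventually_nhds (half_lt_self hN)).mono fun β hβ => ⟨Q, hQN, hβ⟩
  obtain ⟨β, hβcl, hβO, hβE⟩ := exists_mem_closure_forall_mem_notMem
    (preperfect_resonantMarks hG hα) ⟨_, k, hk, rfl⟩ hO hE
  obtain ⟨hβα, hβ⟩ := not_or.1 hβE
  have marks_subset : resonantMarks σ₀ σ₁ α ⊆ Icc 0 1 := by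
    rintro _ ⟨j, _, rfl⟩
    exact ⟨Int.fract_nonneg _, (Int.fract_lt_one _).le⟩
  obtain ⟨hβ0, hβ1⟩ := closure_minimal marks_subset isClosed_Icc hβcl
  exact ⟨β, hβ, hβ0.lt_of_ne (Irrational.ne_zero hβ).symm, hβ1.lt_of_ne (Irrational.ne_one hβ),
    hβα, hβO⟩

end VeechSataev

theorem stmt_15_general (σ₀ σ₁ : Equiv.Perm (Fin 3)) (α : ℝ) (hα : Irrational α) :
    ∃ β : ℝ, Irrational β ∧ 0 < β ∧ β < 1 ∧ β ∉ ZPlusAlphaZ α ∧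
      ∀ μ : Measure (AddCircle (1 : ℝ) × Fin 3), IsProbabilityMeasure μ →
        MeasurePreserving (VST α ![β] ![σ₀, σ₁]) μ μ → Rigid (VST α ![β] ![σ₀, σ₁]) μ := by
  obtain ⟨k, hk⟩ := VeechSataev.exists_isResonant σ₀ σ₁ hα
  obtain ⟨β, hβ, hβ0, hβ1, hβα, hper⟩ :=
    VeechSataev.exists_forall_isAlmostPeriod VeechSataev.hasShortRelations_perm_fin_three hα hk
  exact ⟨β, hβ, hβ0, hβ1, hβα, fun μ _ hT => VeechSataev.rigid_vst_of_isAlmostPeriod hα hper hT⟩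

theorem stmt_15 (σ₀ σ₁ : Equiv.Perm (Fin 3))
    (hperm : (σ₀.IsSwap ∧ σ₁.IsThreeCycle) ∨ (σ₁.IsSwap ∧ σ₀.IsThreeCycle))
    (α : ℝ) (hα : Irrational α) (hα0 : 0 < α) (hα1 : α < 1)
    (hbpq : BoundedPartialQuotients α) :
    ∃ β : ℝ, Irrational β ∧ 0 < β ∧ β < 1 ∧ β ∉ ZPlusAlphaZ α ∧
      ∀ μ : Measure (AddCircle (1 : ℝ) × Fin 3), IsProbabilityMeasure μ →
        MeasurePreserving (VST α ![β] ![σ₀, σ₁]) μ μ → Rigid (VST α ![β] ![σ₀, σ₁]) μ :=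
  stmt_15_general σ₀ σ₁ α hα
end

section
/- Let d = 2 and r = 1, let β ∈ (0,1) be irrational with β ∉ ℤ + αℤ (in particular β ≠ 1 − α), let σ₀ be the exchange of {1, 2} and σ₁ the identity (the Veech 1969 system), and assume α has bounded partial quotients. If the language L' of the rotation with marked point β is linearly recurrent, then for every ergodic T-invariant Borel probability measure μ the system (T, μ) is not rigid; if L' is not linearly recurrent, then for every T-invariant Borel probability measure μ the system (T, μ) is rigid. -/
open MeasureTheory Filter Set
open scoped ENNReal symmDiff Classical

/-!
The `n`-th iterate of the Veech map lies over the rotation by `n α` and exchanges the two points of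
the fibre over `z` when the number `S_n z` of visits of `z, …, R^(n-1) z` to the arc `[0, β)` is
odd. Rigidity and the failure of linear recurrence are both equivalent to the orbits of the marked
points `0`, `β` not being separated, where separation means that `k * ‖k α + x - y‖` is bounded
below for `k > 0` and marked points `x`, `y`.

* Separation makes the arcs of points with a given itinerary of length `m` have length `≫ 1 / m`,
  and every orbit enters such an arc within time `O(m)` because `α` is badly approximable.
  Conversely, if `δ = ‖k α + x - y‖` is much smaller than `1 / k`, some itinerary of length `O(k)`
  recurs only after `j` steps with `‖j α‖ < δ`, and such a `j` is much larger than `k`.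
* Rigidity times are those `n` for which `‖n α‖` is small and `S_n` is even off a small set. The
  parity of `S_n` changes from `z` to `R z` only if `z` is within `‖n α‖` of a marked point. Under
  separation these changes cannot follow each other quickly, and their total frequency is about
  `‖n α‖`, so `{S_n odd}` has measure bounded below.
* Without separation `‖β - k α‖` is much smaller than `1 / |k|` for suitable `k`. Since
  `1_[0,β)(z) = β + {z - β} - {z}`, exchanging the order of summation turns `S_n` into a constant
  plus `|k|` differences `{w + n α} - {w}`, up to a small error. For a suitable `n` this is constant
  off a small set, and `S_(2n) = S_n + S_n ∘ R^n` is then even off a small set.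
-/

/-! ### Badly approximable elements -/

/-- `a` is badly approximable: its multiples `k • a` stay at distance `≫ 1 / k` from `0`.
Negative multiples have the same norm, so positive ones suffice. -/
def IsBadlyApproximable {G : Type*} [SeminormedAddCommGroup G] (a : G) : Prop :=
  ∃ c : ℝ, 0 < c ∧ ∀ k : ℕ, 0 < k → c ≤ k * ‖k • a‖

/-- The Gauss map `x ↦ {1 / x}` of continued fractions. -/
noncomputable def gaussMap (x : ℝ) : ℝ := Int.fract x⁻¹

theorem gaussMap_lt_one (x : ℝ) : gaussMap x < 1 := Int.fract_lt_one _

theorem mul_floor_inv_add_gaussMap {x : ℝ} (hx : x ≠ 0) : x * (⌊x⁻¹⌋ + gaussMap x) = 1 := by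
  rw [gaussMap, Int.floor_add_fract, mul_inv_cancel₀ hx]

theorem one_le_floor_inv {x : ℝ} (hx0 : 0 < x) (hx1 : x < 1) : (1 : ℝ) ≤ ⌊x⁻¹⌋ := by
  exact_mod_cast Int.le_floor.mpr (by simpa using (one_le_inv₀ hx0).mpr hx1.le)

theorem abs_mul_sub_eq_mul_abs_gaussMap {x : ℝ} (hx : 0 < x) (v u : ℝ) :
    |v * x - u| = x * |u * gaussMap x - (v - u * ⌊x⁻¹⌋)| := by
  rw [← abs_neg, ← abs_of_pos hx, ← abs_mul, abs_of_pos hx]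
  congr 1
  linear_combination (-u) * mul_floor_inv_add_gaussMap hx.ne'

theorem mul_gaussMap_le_one_sub {x : ℝ} (hx0 : 0 < x) (hx1 : x < 1) :
    x * gaussMap x ≤ 1 - x := by
  nlinarith [mul_floor_inv_add_gaussMap hx0.ne', one_le_floor_inv hx0 hx1]

theorem sub_mul_floor_inv_le {x u v : ℝ} (hx0 : 0 < x) (hx1 : x < 1) (h : v * x ≤ u) :
    v - u * ⌊x⁻¹⌋ ≤ v * x * gaussMap x := by
  have : (0 : ℝ) ≤ ⌊x⁻¹⌋ := zero_le_one.trans (one_le_floor_inv hx0 hx1)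
  calc v - u * ⌊x⁻¹⌋ ≤ v - v * x * ⌊x⁻¹⌋ := by gcongr
    _ = v * x * gaussMap x := by linear_combination -v * mul_floor_inv_add_gaussMap hx0.ne'

theorem mul_gaussMap_le_mul_abs_of_notMem_Ioo {x : ℝ} (hx0 : 0 < x) (hx1 : x < 1) {v : ℕ}
    (hv : 0 < v) {u : ℤ} (hu : u ∉ Ioo 0 (v : ℤ)) : x * gaussMap x ≤ v * |v * x - u| := by
  have hv1 : (1 : ℝ) ≤ v := by exact_mod_cast hv
  suffices x * gaussMap x ≤ |v * x - u| by nlinarith [abs_nonneg (v * x - u)]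
  rcases le_or_gt u 0 with hu0 | hu0
  · have : (u : ℝ) ≤ 0 := by exact_mod_cast hu0
    exact le_trans (by nlinarith [gaussMap_lt_one x]) (le_abs_self _)
  · have : (v : ℝ) ≤ u := by exact_mod_cast not_lt.mp fun h => hu ⟨hu0, h⟩
    exact le_trans (by nlinarith [mul_gaussMap_le_one_sub hx0 hx1]) (neg_le_abs _)

-- Descent along the Gauss map: if `u / v ≤ x`, one step replaces the denominator `v` by `u`;
-- if `u / v > x`, two steps replace it by `v - u * ⌊x⁻¹⌋`. Neither increases `v * |v * x - u|`.
theorem sq_le_mul_abs_mul_sub {δ : ℝ} (hδ : 0 < δ) {v : ℕ} (hv : 0 < v) {x : ℝ} (hx1 : x < 1)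
    (hx : ∀ n, δ ≤ gaussMap^[n] x) (u : ℤ) : δ ^ 2 ≤ v * |v * x - u| := by
  induction v using Nat.strong_induction_on generalizing x u with
  | _ v ih =>
  have hx0 : 0 < x := hδ.trans_le (hx 0)
  have hy0 : 0 < gaussMap x := hδ.trans_le (hx 1)
  have hδxy : δ ^ 2 ≤ x * gaussMap x := by
    rw [sq]; exact mul_le_mul (hx 0) (hx 1) hδ.le hx0.le
  by_cases huv : u ∈ Ioo 0 (v : ℤ)
  swap
  · exact hδxy.trans (mul_gaussMap_le_mul_abs_of_notMem_Ioo hx0 hx1 hv huv)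
  lift u to ℕ using huv.1.le
  obtain ⟨hu, huv⟩ : 0 < u ∧ u < v := by simpa using huv
  rw [Int.cast_natCast, abs_mul_sub_eq_mul_abs_gaussMap hx0, ← mul_assoc]
  rcases le_or_gt (u : ℝ) (v * x) with hle | hlt
  · have := ih u huv hu (gaussMap_lt_one x) (fun n => hx (n + 1)) (v - u * ⌊x⁻¹⌋)
    push_cast at this
    exact this.trans (by gcongr)
  obtain ⟨w, hw⟩ : ∃ w : ℤ, (v : ℝ) - u * ⌊x⁻¹⌋ = w := ⟨v - u * ⌊x⁻¹⌋, by push_cast; rfl⟩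
  have hw_le := sub_mul_floor_inv_le hx0 hx1 hlt.le
  rw [hw] at hw_le ⊢
  rcases le_or_gt w 0 with hw0 | hw0
  · have hv1 : (1 : ℝ) ≤ v := by exact_mod_cast hv
    have hu1 : (1 : ℝ) ≤ u := by exact_mod_cast hu
    have hw0 : (w : ℝ) ≤ 0 := by exact_mod_cast hw0
    calc δ ^ 2 ≤ 1 * x * gaussMap x := by rwa [one_mul]
      _ ≤ v * x * |u * gaussMap x - w| := by
        gcongr
        exact le_trans (by nlinarith) (le_abs_self _)
  · lift w to ℕ using hw0.le
    rw [Int.cast_natCast] at hw_le ⊢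
    have hwv : w < v := by
      rw [← Nat.cast_lt (α := ℝ)]
      calc (w : ℝ) ≤ v * x * gaussMap x := hw_le
        _ < v * 1 * 1 := by gcongr; exact gaussMap_lt_one x
        _ = v := by ring
    have := ih w hwv (by lia) (gaussMap_lt_one _) (fun n => hx (n + 2)) (u - w * ⌊(gaussMap x)⁻¹⌋)
    push_cast at this
    rw [abs_mul_sub_eq_mul_abs_gaussMap hy0, ← mul_assoc]
    exact this.trans (by gcongr)

theorem isBadlyApproximable_coe_of_le_iterate_gaussMap {δ : ℝ} (hδ : 0 < δ) {x : ℝ} (hx1 : x < 1)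
    (hx : ∀ n, δ ≤ gaussMap^[n] x) : IsBadlyApproximable (x : AddCircle (1 : ℝ)) := by
  refine ⟨δ ^ 2, by positivity, fun k hk => ?_⟩
  rw [← AddCircle.coe_nsmul, nsmul_eq_mul, UnitAddCircle.norm_eq]
  exact sq_le_mul_abs_mul_sub hδ hk hx1 hx _

theorem irrational_gaussMap {x : ℝ} (hx : Irrational x) : Irrational (gaussMap x) :=
  hx.inv.sub_intCast _

theorem irrational_and_pos_iterate_gaussMap {x : ℝ} (hx : Irrational x) (hx0 : 0 < x) (n : ℕ) :
    Irrational (gaussMap^[n] x) ∧ 0 < gaussMap^[n] x := by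
  induction n with
  | zero => exact ⟨hx, hx0⟩
  | succ n ih =>
    rw [Function.iterate_succ_apply']
    have irrational := irrational_gaussMap ih.1
    exact ⟨irrational, (Int.fract_nonneg _).lt_of_ne' irrational.ne_zero⟩

theorem cfPair_snd_div_fst {α : ℝ} (hα : Irrational α) (hα0 : 0 < α) (n : ℕ) :
    0 < (cfPair α n).1 ∧ (cfPair α n).2 / (cfPair α n).1 = gaussMap^[n] α := by
  induction n with
  | zero => simp [cfPair]
  | succ n ih =>
    obtain ⟨hpos, hdiv⟩ := ih
    have hsnd : 0 < (cfPair α n).2 := by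
      have := (irrational_and_pos_iterate_gaussMap hα hα0 n).2
      rwa [← hdiv, div_pos_iff_of_pos_right hpos] at this
    refine ⟨hsnd, ?_⟩
    rw [Function.iterate_succ_apply', ← hdiv, gaussMap, inv_div, Int.fract, cfPair, sub_div,
      mul_div_cancel_right₀ _ hsnd.ne']

theorem pq_succ {α : ℝ} (hα : Irrational α) (hα0 : 0 < α) (n : ℕ) :
    pq α (n + 1) = ⌊(gaussMap^[n] α)⁻¹⌋.toNat := by
  rw [pq, Nat.add_sub_cancel, ← (cfPair_snd_div_fst hα hα0 n).2, inv_div]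

theorem BoundedPartialQuotients.isBadlyApproximable {α : ℝ} (h : BoundedPartialQuotients α)
    (hα : Irrational α) (hα0 : 0 < α) (hα1 : α < 1) :
    IsBadlyApproximable (α : AddCircle (1 : ℝ)) := by
  obtain ⟨C, hC⟩ := h
  refine isBadlyApproximable_coe_of_le_iterate_gaussMap (δ := 1 / (C + 1)) (by positivity) hα1
    fun n => ?_
  have floor_le : ⌊(gaussMap^[n] α)⁻¹⌋ ≤ C := by
    have := hC (n + 1) (by lia)
    rw [pq_succ hα hα0] at this
    lia
  have inv_lt : (gaussMap^[n] α)⁻¹ < C + 1 := by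
    exact_mod_cast Int.floor_lt.mp (Int.lt_add_one_of_le floor_le)
  rw [one_div]
  exact (inv_lt_of_inv_lt₀ (irrational_and_pos_iterate_gaussMap hα hα0 n).2 inv_lt).le

theorem norm_coe_le_abs (x : ℝ) : ‖(x : AddCircle (1 : ℝ))‖ ≤ |x| :=
  QuotientAddGroup.norm_mk_le_norm

theorem norm_coe_le_abs_sub_intCast (x : ℝ) (m : ℤ) : ‖(x : AddCircle (1 : ℝ))‖ ≤ |x - m| := by
  rw [UnitAddCircle.norm_eq]
  exact round_le x m

theorem exists_nat_lt_dvd_mul_sub {u : ℤ} {v : ℕ} (hv : 0 < v) (huv : IsCoprime u v) (m : ℤ) :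
    ∃ j : ℕ, j < v ∧ (v : ℤ) ∣ j * u - m := by
  obtain ⟨b, c, hbc⟩ := huv
  have hv' : (v : ℤ) ≠ 0 := by lia
  lift m * b % v to ℕ using Int.emod_nonneg _ hv' with j hj
  refine ⟨j, by have := Int.emod_lt_of_pos (m * b) (by lia : (0 : ℤ) < v); lia, ?_⟩
  rw [hj, Int.emod_def]
  exact ⟨-(m * b / v * u) - m * c, by linear_combination m * hbc⟩

theorem exists_nsmul_coe_near (α : ℝ) (q : ℚ) (w : AddCircle (1 : ℝ)) :
    ∃ j < q.den, ‖j • (α : AddCircle (1 : ℝ)) - w‖ ≤ q.den * |α - q| + 1 / q.den := by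
  induction w using QuotientAddGroup.induction_on with | H ω => ?_
  have hq0 : (0 : ℝ) < q.den := by exact_mod_cast q.den_pos
  obtain ⟨j, hj, t, ht⟩ := exists_nat_lt_dvd_mul_sub q.den_pos
    (Int.isCoprime_iff_gcd_eq_one.mpr q.reduced) ⌊ω * q.den⌋
  refine ⟨j, hj, ?_⟩
  have hjq : j * (q : ℝ) - t = ⌊ω * q.den⌋ / q.den := by
    have : (j : ℝ) * q.num - ⌊ω * q.den⌋ = q.den * t := by exact_mod_cast ht
    rw [Rat.cast_def, eq_div_iff hq0.ne', sub_mul, mul_assoc, div_mul_cancel₀ _ hq0.ne']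
    linear_combination this
  have floor_near : |⌊ω * q.den⌋ / q.den - ω| ≤ 1 / q.den := by
    rw [← mul_le_mul_iff_left₀ hq0, ← abs_of_pos hq0, ← abs_mul, abs_of_pos hq0, sub_mul,
      div_mul_cancel₀ _ hq0.ne', div_mul_cancel₀ _ hq0.ne', abs_sub_comm, Int.self_sub_floor,
      Int.abs_fract]
    exact (Int.fract_lt_one _).le
  calc ‖j • (α : AddCircle (1 : ℝ)) - (ω : AddCircle (1 : ℝ))‖
      = ‖((j * α - ω : ℝ) : AddCircle (1 : ℝ))‖ := by
        rw [AddCircle.coe_sub, ← nsmul_eq_mul, AddCircle.coe_nsmul]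
    _ ≤ |j * α - ω - t| := norm_coe_le_abs_sub_intCast _ _
    _ = |j * (α - q) + (⌊ω * q.den⌋ / q.den - ω)| := by rw [← hjq]; ring_nf
    _ ≤ j * |α - q| + |⌊ω * q.den⌋ / q.den - ω| := by
        simpa [abs_mul] using abs_add_le (j * (α - q)) (⌊ω * q.den⌋ / q.den - ω)
    _ ≤ q.den * |α - q| + 1 / q.den := by gcongr

-- A rational approximation `q` of `a` with `|a - q| ≤ 1 / (n * q.den)` and `q.den ≤ n` has
-- `q.den ≫ n` since `a` is badly approximable.
theorem IsBadlyApproximable.exists_nsmul_near {a : AddCircle (1 : ℝ)} (ha : IsBadlyApproximable a) :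
    ∃ D : ℝ, 0 < D ∧ ∀ n : ℕ, 0 < n → ∀ w : AddCircle (1 : ℝ), ∃ j < n, ‖j • a - w‖ ≤ D / n := by
  obtain ⟨c, hc, hca⟩ := ha
  refine ⟨1 + 1 / c, by positivity, fun n hn w => ?_⟩
  induction a using QuotientAddGroup.induction_on with | H α => ?_
  obtain ⟨q, hq, hqn⟩ := Real.exists_rat_abs_sub_le_and_den_le α hn
  have hq0 : (0 : ℝ) < q.den := by exact_mod_cast q.den_pos
  have hn0 : (0 : ℝ) < n := by exact_mod_cast hn
  have approx : q.den * |α - q| ≤ 1 / n := calc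
    q.den * |α - q| ≤ q.den * (1 / ((n + 1) * q.den)) := by gcongr
    _ = 1 / (n + 1) := by field_simp
    _ ≤ 1 / n := by gcongr; linarith
  have norm_le : ‖q.den • (α : AddCircle (1 : ℝ))‖ ≤ q.den * |α - q| := by
    rw [← AddCircle.coe_nsmul, nsmul_eq_mul, ← abs_of_pos hq0, ← abs_mul, mul_sub, abs_of_pos hq0,
      mul_comm _ (q : ℝ), ← Rat.cast_natCast, ← Rat.cast_mul, Rat.mul_den_eq_num]
    exact_mod_cast norm_coe_le_abs_sub_intCast _ _
  have den_ge : c * n ≤ q.den := by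
    have : c ≤ q.den * (1 / n) :=
      (hca _ q.den_pos).trans (mul_le_mul_of_nonneg_left (norm_le.trans approx) hq0.le)
    rwa [mul_one_div, le_div_iff₀ hn0] at this
  obtain ⟨j, hj, hjw⟩ := exists_nsmul_coe_near α q w
  refine ⟨j, hj.trans_le hqn, hjw.trans ?_⟩
  calc q.den * |α - q| + 1 / q.den ≤ 1 / n + 1 / (c * n) := by gcongr
    _ = (1 + 1 / c) / n := by field_simp

/-! ### The arc `[0, β)` -/

theorem coe_intCast_eq_zero (m : ℤ) : ((m : ℝ) : AddCircle (1 : ℝ)) = 0 :=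
  (AddCircle.coe_eq_zero_iff 1).mpr ⟨m, by simp⟩

theorem exists_coe_eq_and_abs_eq_norm (z : AddCircle (1 : ℝ)) :
    ∃ u : ℝ, (u : AddCircle (1 : ℝ)) = z ∧ |u| = ‖z‖ := by
  induction z using QuotientAddGroup.induction_on with | H x => ?_
  refine ⟨x - round x, ?_, UnitAddCircle.norm_eq.symm⟩
  rw [AddCircle.coe_sub, coe_intCast_eq_zero, sub_zero]

theorem circleRepr_coe (x : ℝ) : circleRepr (x : AddCircle (1 : ℝ)) = Int.fract x := by
  simp [circleRepr, AddCircle.coe_equivIco_mk_apply]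

theorem coe_circleRepr (z : AddCircle (1 : ℝ)) : (circleRepr z : AddCircle (1 : ℝ)) = z :=
  AddCircle.coe_equivIco

theorem circleRepr_mem_Ico (z : AddCircle (1 : ℝ)) : circleRepr z ∈ Ico (0 : ℝ) 1 := by
  simpa [circleRepr] using (AddCircle.equivIco 1 0 z).2

theorem measurable_circleRepr : Measurable circleRepr :=
  measurable_subtype_coe.comp (AddCircle.measurableEquivIco 1 0).measurable

theorem circleRepr_add_coe {z : AddCircle (1 : ℝ)} {s : ℝ} (hs : |s| < ‖z‖) :
    circleRepr (z + s) = circleRepr z + s := by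
  obtain ⟨hz0, hz1⟩ := circleRepr_mem_Ico z
  have norm_le (m : ℤ) : ‖z‖ ≤ |circleRepr z - m| := by
    simpa only [coe_circleRepr] using norm_coe_le_abs_sub_intCast (circleRepr z) m
  have h0 := norm_le 0
  have h1 := norm_le 1
  rw [Int.cast_zero, sub_zero, abs_of_nonneg hz0] at h0
  rw [Int.cast_one, abs_of_neg (by linarith)] at h1
  nth_rw 1 [← coe_circleRepr z]
  rw [← AddCircle.coe_add, circleRepr_coe, Int.fract_eq_self]
  constructor <;> linarith [abs_lt.mp hs]

/-- The indicator function of the arc `[0, β)`. -/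
noncomputable def arcIndicator (β : ℝ) (z : AddCircle (1 : ℝ)) : ℤ :=
  if circleRepr z < β then 1 else 0

/-- The endpoints `0` and `β` of the arc `[0, β)`. -/
def markedPoints (β : ℝ) : Set (AddCircle (1 : ℝ)) := {0, (β : AddCircle (1 : ℝ))}

theorem arcIndicator_eq_zero_or_one (β : ℝ) (z : AddCircle (1 : ℝ)) :
    arcIndicator β z = 0 ∨ arcIndicator β z = 1 := by
  unfold arcIndicator
  split_ifs <;> simp

theorem measurable_arcIndicator (β : ℝ) : Measurable (arcIndicator β) :=
  Measurable.ite (measurable_circleRepr measurableSet_Iio) measurable_const measurable_const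

theorem cast_arcIndicator {β : ℝ} (hβ : β ∈ Ioo (0 : ℝ) 1) (z : AddCircle (1 : ℝ)) :
    (arcIndicator β z : ℝ) = β + circleRepr (z - β) - circleRepr z := by
  obtain ⟨hβ0, hβ1⟩ := hβ
  obtain ⟨hz0, hz1⟩ := circleRepr_mem_Ico z
  nth_rw 2 [← coe_circleRepr z]
  rw [← AddCircle.coe_sub, circleRepr_coe]
  unfold arcIndicator
  split_ifs with h
  · rw [← Int.fract_add_one, Int.fract_eq_self.mpr ⟨by linarith, by linarith⟩]
    push_cast; ring
  · rw [Int.fract_eq_self.mpr ⟨by linarith, by linarith⟩]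
    push_cast; ring

theorem arcIndicator_add_coe {β : ℝ} (hβ : β ∈ Ioo (0 : ℝ) 1) {z : AddCircle (1 : ℝ)} {s : ℝ}
    (hs : ∀ c ∈ markedPoints β, |s| < ‖z - c‖) : arcIndicator β (z + s) = arcIndicator β z := by
  have h0 : |s| < ‖z‖ := by simpa using hs 0 (by simp [markedPoints])
  have h1 : |s| < ‖z - β‖ := hs β (by simp [markedPoints])
  have : (arcIndicator β (z + s) : ℝ) = arcIndicator β z := by
    rw [cast_arcIndicator hβ, cast_arcIndicator hβ, add_sub_right_comm z, circleRepr_add_coe h0,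
      circleRepr_add_coe h1]
    ring
  exact_mod_cast this

theorem exists_markedPoint_near_of_arcIndicator_ne {β : ℝ} (hβ : β ∈ Ioo (0 : ℝ) 1)
    {z t : AddCircle (1 : ℝ)} (h : arcIndicator β (z + t) ≠ arcIndicator β z) :
    ∃ c ∈ markedPoints β, ‖z - c‖ ≤ ‖t‖ := by
  obtain ⟨s, rfl, hs⟩ := exists_coe_eq_and_abs_eq_norm t
  contrapose! h
  exact arcIndicator_add_coe hβ (by simpa only [hs] using h)

theorem norm_coe_pos {β : ℝ} (hβ : β ∈ Ioo (0 : ℝ) 1) : 0 < ‖(β : AddCircle (1 : ℝ))‖ := by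
  rw [norm_pos_iff, Ne, AddCircle.coe_eq_zero_iff_of_mem_Ico (by simpa using ⟨hβ.1.le, hβ.2⟩)]
  exact hβ.1.ne'

theorem norm_coe_le_self {β : ℝ} (hβ : β ∈ Ioo (0 : ℝ) 1) : ‖(β : AddCircle (1 : ℝ))‖ ≤ β := by
  simpa only [abs_of_pos hβ.1] using norm_coe_le_abs β

theorem norm_coe_le_one_sub {β : ℝ} (hβ : β ∈ Ioo (0 : ℝ) 1) :
    ‖(β : AddCircle (1 : ℝ))‖ ≤ 1 - β := by
  have := norm_coe_le_abs_sub_intCast β 1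
  rwa [Int.cast_one, abs_of_neg (sub_neg.mpr hβ.2), neg_sub] at this

theorem arcIndicator_coe {β : ℝ} (hβ : β ∈ Ioo (0 : ℝ) 1) {y : ℝ}
    (hy : |y| < ‖(β : AddCircle (1 : ℝ))‖) : arcIndicator β y = if 0 ≤ y then 1 else 0 := by
  obtain ⟨hy0, hy1⟩ := abs_lt.mp hy
  have := norm_coe_le_self hβ
  have := norm_coe_le_one_sub hβ
  rw [arcIndicator, circleRepr_coe]
  split_ifs with h h' h'
  · rfl
  · rw [← Int.fract_add_one, Int.fract_eq_self.mpr ⟨by linarith, by linarith⟩] at h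
    linarith
  · rw [Int.fract_eq_self.mpr ⟨by linarith, by linarith⟩] at h
    linarith
  · rfl

theorem arcIndicator_coe_add {β : ℝ} (hβ : β ∈ Ioo (0 : ℝ) 1) {y : ℝ}
    (hy : |y| < ‖(β : AddCircle (1 : ℝ))‖) : arcIndicator β (β + y) = if 0 ≤ y then 0 else 1 := by
  obtain ⟨hy0, hy1⟩ := abs_lt.mp hy
  have := norm_coe_le_self hβ
  have := norm_coe_le_one_sub hβ
  rw [arcIndicator, ← AddCircle.coe_add, circleRepr_coe,
    Int.fract_eq_self.mpr ⟨by linarith, by linarith⟩]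
  simp only [← not_le, ite_not, le_add_iff_nonneg_right]

theorem arcIndicator_add_eq_iff {β : ℝ} (hβ : β ∈ Ioo (0 : ℝ) 1) {c : AddCircle (1 : ℝ)}
    (hc : c ∈ markedPoints β) {y y' : ℝ} (hy : |y| < ‖(β : AddCircle (1 : ℝ))‖)
    (hy' : |y'| < ‖(β : AddCircle (1 : ℝ))‖) :
    arcIndicator β (c + y) = arcIndicator β (c + y') ↔ (0 ≤ y ↔ 0 ≤ y') := by
  rcases hc with rfl | rfl
  · rw [zero_add, zero_add, arcIndicator_coe hβ hy, arcIndicator_coe hβ hy']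
    split_ifs <;> simp [*]
  · rw [arcIndicator_coe_add hβ hy, arcIndicator_coe_add hβ hy']
    split_ifs <;> simp [*]

theorem arcIndicator_ne_of_mul_neg {β : ℝ} (hβ : β ∈ Ioo (0 : ℝ) 1) {c : AddCircle (1 : ℝ)}
    (hc : c ∈ markedPoints β) {y y' : ℝ} (hy : |y| < ‖(β : AddCircle (1 : ℝ))‖)
    (hy' : |y'| < ‖(β : AddCircle (1 : ℝ))‖) (hneg : y * y' < 0) :
    arcIndicator β (c + y) ≠ arcIndicator β (c + y') := by
  rw [Ne, arcIndicator_add_eq_iff hβ hc hy hy']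
  intro h
  rcases mul_neg_iff.mp hneg with ⟨h1, h2⟩ | ⟨h1, h2⟩
  · linarith [h.mp h1.le]
  · linarith [h.mpr h2.le]

theorem arcIndicator_coe_ne_add_coe {β : ℝ} (hβ : β ∈ Ioo (0 : ℝ) 1) {s u : ℝ}
    (hu : |u| < ‖(β : AddCircle (1 : ℝ))‖) (hs : |s + u / 2| < |u| / 2) :
    arcIndicator β s ≠ arcIndicator β (s + u) := by
  rw [← abs_two, ← abs_div, ← sq_lt_sq] at hs
  have abs_lt_of_sq_le {y : ℝ} (hy : y ^ 2 ≤ u ^ 2) : |y| < ‖(β : AddCircle (1 : ℝ))‖ :=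
    (sq_le_sq.mp hy).trans_lt hu
  rw [← AddCircle.coe_add, ← zero_add (s : AddCircle (1 : ℝ)),
    ← zero_add ((s + u : ℝ) : AddCircle (1 : ℝ))]
  refine arcIndicator_ne_of_mul_neg hβ (mem_insert _ _) (abs_lt_of_sq_le ?_) (abs_lt_of_sq_le ?_) ?_
  all_goals nlinarith [sq_nonneg (s + u), sq_nonneg s]

-- `arcIndicator β` jumps up at `0` only, so it has no upward jump near a point `t` away from `0`.
theorem arcIndicator_add_eq_zero_or_eq_one {β : ℝ} (hβ : β ∈ Ioo (0 : ℝ) 1)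
    {t : AddCircle (1 : ℝ)} {ρ : ℝ} (hρ : 2 * ρ ≤ ‖(β : AddCircle (1 : ℝ))‖) (ht : ρ ≤ ‖t‖) :
    (∀ s : ℝ, 0 < s → s < ρ → arcIndicator β (s + t) = 0) ∨
      ∀ s : ℝ, -ρ < s → s < 0 → arcIndicator β (s + t) = 1 := by
  by_cases htβ : ‖t - β‖ < ρ
  · obtain ⟨u, hut, hu⟩ := exists_coe_eq_and_abs_eq_norm (t - (β : AddCircle (1 : ℝ)))
    rw [← hu, abs_lt] at htβ
    have add_eq (s : ℝ) : (s + t : AddCircle (1 : ℝ)) = β + ((s + u : ℝ) : AddCircle (1 : ℝ)) := by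
      rw [AddCircle.coe_add, hut]; abel
    rcases le_or_gt 0 u with hu0 | hu0
    · refine .inl fun s hs0 hs1 => ?_
      rw [add_eq, arcIndicator_coe_add hβ (by rw [abs_lt]; constructor <;> linarith),
        if_pos (by linarith)]
    · refine .inr fun s hs0 hs1 => ?_
      rw [add_eq, arcIndicator_coe_add hβ (by rw [abs_lt]; constructor <;> linarith),
        if_neg (by linarith)]
  · have arc_eq {s : ℝ} (hs : |s| < ρ) : arcIndicator β (s + t) = arcIndicator β t := by
      rw [add_comm]
      refine arcIndicator_add_coe hβ ?_
      rintro c (rfl | rfl)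
      · rw [sub_zero]; exact hs.trans_le ht
      · exact hs.trans_le (not_lt.mp htβ)
    rcases arcIndicator_eq_zero_or_one β t with h | h
    · exact .inl fun s hs0 hs1 => by rw [arc_eq (abs_lt.mpr ⟨by linarith, hs1⟩), h]
    · exact .inr fun s hs0 hs1 => by rw [arc_eq (abs_lt.mpr ⟨hs0, by linarith⟩), h]

theorem exists_interval_arcIndicator_ne {β : ℝ} (hβ : β ∈ Ioo (0 : ℝ) 1) (t : AddCircle (1 : ℝ)) :
    ∃ w : ℝ, ∀ s : ℝ, |s - w| < min ‖t‖ (‖(β : AddCircle (1 : ℝ))‖ / 2) / 2 →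
      arcIndicator β s ≠ arcIndicator β (s + t) := by
  set ρ := ‖(β : AddCircle (1 : ℝ))‖ / 2 with hρ
  rcases lt_or_ge ‖t‖ ρ with ht | ht
  · obtain ⟨u, rfl, hu⟩ := exists_coe_eq_and_abs_eq_norm t
    refine ⟨-(u / 2), fun s hs => ?_⟩
    rw [min_eq_left ht.le, ← hu, sub_neg_eq_add] at hs
    exact arcIndicator_coe_ne_add_coe hβ (by linarith [norm_nonneg (β : AddCircle (1 : ℝ))]) hs
  rw [min_eq_right ht]
  have near_zero {s : ℝ} (hs : |s| < ρ) : arcIndicator β s = if 0 ≤ s then 1 else 0 :=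
    arcIndicator_coe hβ (by linarith [abs_nonneg s])
  rcases arcIndicator_add_eq_zero_or_eq_one hβ (by linarith) ht with h | h
  · refine ⟨ρ / 2, fun s hs => ?_⟩
    obtain ⟨hs0, hs1⟩ := abs_lt.mp hs
    rw [h s (by linarith) (by linarith), near_zero (abs_lt.mpr ⟨by linarith, by linarith⟩),
      if_pos (by linarith)]
    exact one_ne_zero
  · refine ⟨-(ρ / 2), fun s hs => ?_⟩
    obtain ⟨hs0, hs1⟩ := abs_lt.mp hs
    rw [h s (by linarith) (by linarith), near_zero (abs_lt.mpr ⟨by linarith, by linarith⟩),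
      if_neg (by linarith)]
    exact zero_ne_one

theorem exists_ball_arcIndicator_ne {β : ℝ} (hβ : β ∈ Ioo (0 : ℝ) 1) (t : AddCircle (1 : ℝ)) :
    ∃ w, ∀ z ∈ Metric.ball w (min ‖t‖ (‖(β : AddCircle (1 : ℝ))‖ / 2) / 2),
      arcIndicator β z ≠ arcIndicator β (z + t) := by
  obtain ⟨w, hw⟩ := exists_interval_arcIndicator_ne hβ t
  refine ⟨w, fun z hz => ?_⟩
  obtain ⟨s, hs, hs_norm⟩ := exists_coe_eq_and_abs_eq_norm (z - w)
  obtain rfl : z = ((s + w : ℝ) : AddCircle (1 : ℝ)) := by rw [AddCircle.coe_add, hs]; abel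
  refine hw _ ?_
  rwa [add_sub_cancel_right, hs_norm, ← mem_ball_iff_norm]

/-! ### Linear recurrence and separation of orbits -/

/-- The forward orbits of the points of `S` under translation by `a` are separated: after `k`
steps they stay at distance `≫ 1 / k` from `S`. -/
def OrbitSeparated {G : Type*} [SeminormedAddCommGroup G] (a : G) (S : Set G) : Prop :=
  ∃ c : ℝ, 0 < c ∧ ∀ k : ℕ, 0 < k → ∀ x ∈ S, ∀ y ∈ S, c ≤ k * ‖k • a + x - y‖

theorem OrbitSeparated.isBadlyApproximable {G : Type*} [SeminormedAddCommGroup G] {a : G}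
    {S : Set G} (h : OrbitSeparated a S) (hS : S.Nonempty) : IsBadlyApproximable a := by
  obtain ⟨c, hc, hsep⟩ := h
  obtain ⟨x, hx⟩ := hS
  exact ⟨c, hc, fun k hk => by simpa using hsep k hk x hx x hx⟩

theorem le_mul_norm_sub_of_ne {G : Type*} [SeminormedAddCommGroup G] {a : G} {S : Set G} {c : ℝ}
    (hsep : ∀ k : ℕ, 0 < k → ∀ x ∈ S, ∀ y ∈ S, c ≤ k * ‖k • a + x - y‖) {m i j : ℕ} (hi : i < m)
    (hj : j < m) (hij : i ≠ j) {x y : G} (hx : x ∈ S) (hy : y ∈ S) (z : G) :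
    c ≤ m * ‖(z + i • a - x) - (z + j • a - y)‖ := by
  wlog hlt : i < j generalizing i j x y
  · rw [norm_sub_rev]
    exact this hj hi hij.symm hy hx (by lia)
  obtain ⟨k, rfl⟩ := Nat.exists_eq_add_of_lt hlt
  calc c ≤ (k + 1 : ℕ) * ‖(k + 1) • a + x - y‖ := hsep _ k.succ_pos x hx y hy
    _ ≤ m * ‖(k + 1) • a + x - y‖ := by gcongr; lia
    _ = m * ‖(z + i • a - x) - (z + (i + k + 1) • a - y)‖ := by
        rw [norm_sub_rev, add_assoc i, add_nsmul a i]
        congr 2; abel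

theorem isFactor_iff_isInfix {A : Type*} {w v : List A} : IsFactor w v ↔ w <:+: v :=
  exists_congr fun _ => exists_congr fun _ => eq_comm

theorem linearlyRecurrent_prefixes_iff {X A : Type*} (u : X → ℕ → A) :
    LinearlyRecurrent {w : List A | ∃ x, ∀ i : Fin w.length, w.get i = u x i} ↔
      ∃ K, 1 ≤ K ∧ ∀ x y m n, K * m ≤ n → ∃ j, j + m ≤ n ∧ ∀ i < m, u x i = u y (j + i) := by
  have factor_iff {w v : List A} {x y : X} (hw : ∀ i : Fin w.length, w.get i = u x i)
      (hv : ∀ i : Fin v.length, v.get i = u y i) : IsFactor w v ↔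
        ∃ j, j + w.length ≤ v.length ∧ ∀ i < w.length, u x i = u y (j + i) := by
    rw [isFactor_iff_isInfix, List.infix_iff_getElem?]
    refine exists_congr fun j => ?_
    rw [add_comm]
    refine and_congr_right fun hj => forall₂_congr fun i hi => ?_
    have hwi := hw ⟨i, hi⟩
    have hvi := hv ⟨j + i, by lia⟩
    rw [List.get_eq_getElem] at hwi hvi
    rw [add_comm i j, List.getElem?_eq_getElem (by lia), Option.some_inj, hwi, hvi, eq_comm]
  refine exists_congr fun K => and_congr_right fun _ => ⟨fun h x y m n hmn => ?_, ?_⟩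
  · have hx (z : X) (m : ℕ) (i : Fin (List.ofFn fun i : Fin m => u z i).length) :
        (List.ofFn fun i : Fin m => u z i).get i = u z i := by simp
    have := h _ ⟨x, hx x m⟩ _ ⟨y, hx y n⟩ (by simpa using hmn)
    simpa only [List.length_ofFn] using (factor_iff (hx x m) (hx y n)).mp this
  · rintro h w ⟨x, hx⟩ v ⟨y, hy⟩ hwv
    exact (factor_iff hx hy).mpr (h x y _ _ hwv)

theorem atomIdx_singleton (β x : ℝ) : atomIdx ![β] x = if x < β then 0 else 1 := by
  apply Fin.ext
  rw [atomIdx]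
  split_ifs with h
  · simp [h]
  · simp [not_lt.mp h]

theorem iterate_rotMap (α : ℝ) (n : ℕ) (z : AddCircle (1 : ℝ)) :
    (rotMap α)^[n] z = z + n • (α : AddCircle (1 : ℝ)) :=
  congrFun (add_right_iterate (α : AddCircle (1 : ℝ)) n) z

theorem rotCode_eq_rotCode_iff {α β : ℝ} {x y : AddCircle (1 : ℝ)} {i j : ℕ} :
    rotCode α ![β] x i = rotCode α ![β] y j ↔
      arcIndicator β (x + i • (α : AddCircle (1 : ℝ))) =
        arcIndicator β (y + j • (α : AddCircle (1 : ℝ))) := by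
  rw [rotCode, rotCode, atomIdx_singleton, atomIdx_singleton, iterate_rotMap, iterate_rotMap,
    arcIndicator, arcIndicator]
  split_ifs <;> simp

theorem linearlyRecurrent_LRot_iff (α β : ℝ) : LinearlyRecurrent (LRot α ![β]) ↔
    ∃ K, 1 ≤ K ∧ ∀ (x y : AddCircle (1 : ℝ)) (m n : ℕ), K * m ≤ n → ∃ j, j + m ≤ n ∧ ∀ i < m,
      arcIndicator β (x + i • (α : AddCircle (1 : ℝ))) =
        arcIndicator β (y + (j + i) • (α : AddCircle (1 : ℝ))) := by
  simp only [← rotCode_eq_rotCode_iff]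
  exact linearlyRecurrent_prefixes_iff _

theorem exists_abs_eq_nonneg_add_iff (s η : ℝ) :
    ∃ σ : ℝ, |σ| = |η| ∧ ∀ v, |v| < |η| → (0 ≤ s + (σ + v) ↔ 0 ≤ s) := by
  rcases le_or_gt 0 s with hs | hs
  · exact ⟨|η|, abs_abs η, fun v hv => iff_of_true (by linarith [abs_lt.mp hv]) hs⟩
  · refine ⟨-|η|, by rw [abs_neg, abs_abs], fun v hv => iff_of_false ?_ hs.not_ge⟩
    linarith [abs_lt.mp hv]

-- By separation no other `x + j • a` with `j < m` is close to a marked point, and the ball is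
-- chosen on the side of `x` away from `e - i • a`.
theorem exists_ball_arcIndicator_eq_of_near {a : AddCircle (1 : ℝ)} {β c η : ℝ}
    (hβ : β ∈ Ioo (0 : ℝ) 1) (hsep : ∀ k : ℕ, 0 < k → ∀ x ∈ markedPoints β, ∀ y ∈ markedPoints β,
      c ≤ k * ‖k • a + x - y‖) (hη : 0 < η) (hηβ : 4 * η ≤ ‖(β : AddCircle (1 : ℝ))‖) {m i : ℕ}
    (hmη : m * (4 * η) ≤ c) (hi : i < m) {x e : AddCircle (1 : ℝ)} (he : e ∈ markedPoints β)
    (hxe : ‖x + i • a - e‖ < 2 * η) :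
    ∃ w, ∀ y ∈ Metric.ball w η, ∀ j < m,
      arcIndicator β (y + j • a) = arcIndicator β (x + j • a) := by
  obtain ⟨s, hs, hs_norm⟩ := exists_coe_eq_and_abs_eq_norm (x + i • a - e)
  obtain ⟨σ, hσ, hsign⟩ := exists_abs_eq_nonneg_add_iff s η
  refine ⟨x + σ, fun y hy j hj => ?_⟩
  obtain ⟨v, hv, hv_norm⟩ := exists_coe_eq_and_abs_eq_norm (y - (x + σ))
  rw [mem_ball_iff_norm, ← hv_norm] at hy
  have hσv : |σ + v| < 2 * η := by linarith [abs_add_le σ v, abs_of_pos hη]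
  obtain rfl : y = x + ((σ + v : ℝ) : AddCircle (1 : ℝ)) := by
    rw [AddCircle.coe_add, hv]; abel
  rcases eq_or_ne i j with rfl | hij
  · rw [← hs_norm] at hxe
    obtain rfl : x = e + s - i • a := by rw [hs]; abel
    rw [sub_add_cancel, add_right_comm, sub_add_cancel, add_assoc, ← AddCircle.coe_add,
      arcIndicator_add_eq_iff hβ he (by linarith [abs_add_le s (σ + v)])
        (by linarith [abs_nonneg s])]
    exact hsign v (by rwa [abs_of_pos hη])
  · by_contra hne
    rw [add_right_comm] at hne
    obtain ⟨e', he', hje'⟩ := exists_markedPoint_near_of_arcIndicator_ne hβ hne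
    have := norm_coe_le_abs (σ + v)
    have := le_mul_norm_sub_of_ne hsep hi hj hij he he' x
    have := norm_sub_le (x + i • a - e) (x + j • a - e')
    nlinarith [Nat.cast_pos (α := ℝ).2 (Nat.zero_lt_of_lt hi)]

theorem exists_ball_arcIndicator_eq {a : AddCircle (1 : ℝ)} {β : ℝ} (hβ : β ∈ Ioo (0 : ℝ) 1)
    (h : OrbitSeparated a (markedPoints β)) :
    ∃ κ : ℝ, 0 < κ ∧ ∀ m : ℕ, 0 < m → ∀ x, ∃ w, ∀ y ∈ Metric.ball w (κ / m), ∀ i < m,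
      arcIndicator β (y + i • a) = arcIndicator β (x + i • a) := by
  obtain ⟨c, hc, hsep⟩ := h
  set b := min c ‖(β : AddCircle (1 : ℝ))‖
  have hb : 0 < b := lt_min hc (norm_coe_pos hβ)
  refine ⟨b / 4, by positivity, fun m hm x => ?_⟩
  have hm1 : (1 : ℝ) ≤ m := by exact_mod_cast hm
  set η := b / 4 / m with hη
  have hη0 : 0 < η := by positivity
  have hmη : m * (4 * η) = b := by rw [hη]; field_simp
  by_cases hnear : ∃ i < m, ∃ e ∈ markedPoints β, ‖x + i • a - e‖ < 2 * η
  · obtain ⟨i, hi, e, he, hxe⟩ := hnear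
    have hηβ : 4 * η ≤ ‖(β : AddCircle (1 : ℝ))‖ := by
      nlinarith [min_le_right c ‖(β : AddCircle (1 : ℝ))‖]
    exact exists_ball_arcIndicator_eq_of_near hβ hsep hη0 hηβ (hmη.le.trans (min_le_left _ _)) hi
      he hxe
  · refine ⟨x, fun y hy j hj => by_contra fun hne => hnear ⟨j, hj, ?_⟩⟩
    rw [mem_ball_iff_norm] at hy
    rw [← add_sub_cancel x y, add_right_comm] at hne
    obtain ⟨e, he, hle⟩ := exists_markedPoint_near_of_arcIndicator_ne hβ hne
    exact ⟨e, he, by linarith⟩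

theorem OrbitSeparated.linearlyRecurrent {α β : ℝ} (hβ : β ∈ Ioo (0 : ℝ) 1)
    (h : OrbitSeparated (α : AddCircle (1 : ℝ)) (markedPoints β)) :
    LinearlyRecurrent (LRot α ![β]) := by
  obtain ⟨D, hD, hdense⟩ := (h.isBadlyApproximable (insert_nonempty _ _)).exists_nsmul_near
  obtain ⟨κ, hκ, hball⟩ := exists_ball_arcIndicator_eq hβ h
  obtain ⟨P, hP⟩ := exists_nat_gt (D / κ)
  have hP0 : 0 < P := by exact_mod_cast (div_pos hD hκ).trans hP
  refine (linearlyRecurrent_LRot_iff α β).mpr ⟨P + 1, by lia, fun x y m n hmn => ?_⟩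
  rcases m.eq_zero_or_pos with rfl | hm
  · exact ⟨0, by lia, by simp⟩
  obtain ⟨w, hw⟩ := hball m hm x
  obtain ⟨j, hj, hjw⟩ := hdense (P * m) (by positivity) (w - y)
  refine ⟨j, by lia, fun i hi => ?_⟩
  rw [add_nsmul, ← add_assoc]
  refine (hw _ ?_ i hi).symm
  have : D / (P * m : ℕ) < κ / m := by
    have : (0 : ℝ) < m := by exact_mod_cast hm
    rw [Nat.cast_mul, ← div_div]
    gcongr
    rw [div_lt_iff₀ (by exact_mod_cast hP0)]
    rwa [div_lt_iff₀ hκ, mul_comm] at hP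
  rw [mem_ball_iff_norm, show y + j • (α : AddCircle (1 : ℝ)) - w = j • ↑α - (w - y) by abel]
  exact hjw.trans_lt this

theorem IsBadlyApproximable.exists_nat_norm_lt_of_arcIndicator_eq {a : AddCircle (1 : ℝ)}
    (ha : IsBadlyApproximable a) {β : ℝ} (hβ : β ∈ Ioo (0 : ℝ) 1) :
    ∃ L : ℕ, 1 < L ∧ ∀ x t, (∀ i < L, arcIndicator β (x + i • a) = arcIndicator β (x + t + i • a)) →
      ‖t‖ < ‖(β : AddCircle (1 : ℝ))‖ / 2 := by
  obtain ⟨D, -, hdense⟩ := ha.exists_nsmul_near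
  have hβ0 := norm_coe_pos hβ
  obtain ⟨L, hL⟩ := exists_nat_gt (max 1 (D / (‖(β : AddCircle (1 : ℝ))‖ / 4)))
  obtain ⟨hL1, hLD⟩ := max_lt_iff.mp hL
  have hL1' : 1 < L := by exact_mod_cast hL1
  refine ⟨L, hL1', fun x t h => ?_⟩
  contrapose! h
  obtain ⟨w, hw⟩ := exists_ball_arcIndicator_ne hβ t
  obtain ⟨i, hi, hiw⟩ := hdense L (by lia) (w - x)
  refine ⟨i, hi, ?_⟩
  rw [add_right_comm]
  refine hw _ ?_
  rw [min_eq_right h, mem_ball_iff_norm, add_sub_right_comm, ← neg_sub w x, neg_add_eq_sub]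
  rw [div_lt_iff₀ (by positivity), mul_comm, ← div_lt_iff₀ (by linarith)] at hLD
  linarith

theorem zsmul_coe_ne_coe {α β : ℝ} (hβ : β ∉ ZPlusAlphaZ α) (k : ℤ) :
    k • (α : AddCircle (1 : ℝ)) ≠ (β : AddCircle (1 : ℝ)) := by
  intro h
  rw [← AddCircle.coe_zsmul, eq_comm, ← sub_eq_zero, ← AddCircle.coe_sub,
    AddCircle.coe_eq_zero_iff] at h
  obtain ⟨m, hm⟩ := h
  simp only [zsmul_eq_mul, mul_one] at hm
  exact hβ ⟨m, k, by linarith⟩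

theorem nsmul_add_ne_of_mem_markedPoints {α β : ℝ}
    (hα : IsBadlyApproximable (α : AddCircle (1 : ℝ))) (hβ : β ∉ ZPlusAlphaZ α) {k : ℕ}
    (hk : 0 < k) {c e : AddCircle (1 : ℝ)} (hc : c ∈ markedPoints β) (he : e ∈ markedPoints β) :
    k • (α : AddCircle (1 : ℝ)) + c ≠ e := by
  have hk0 : k • (α : AddCircle (1 : ℝ)) ≠ 0 := by
    obtain ⟨b, hb, hbα⟩ := hα
    intro h
    have := hbα k hk
    rw [h, norm_zero, mul_zero] at this
    linarith
  rcases hc with rfl | rfl <;> rcases he with rfl | rfl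
  · rwa [add_zero]
  · rw [add_zero, ← natCast_zsmul]
    exact zsmul_coe_ne_coe hβ k
  · rw [Ne, add_eq_zero_iff_neg_eq, ← natCast_zsmul, ← neg_zsmul]
    exact zsmul_coe_ne_coe hβ _
  · rwa [Ne, add_eq_right]

theorem abs_lt_abs_of_nonneg_iff {δ τ : ℝ} (hδ : δ ≠ 0) (h : 0 ≤ min 0 δ ↔ 0 ≤ min 0 δ + τ)
    (h' : 0 ≤ min 0 δ - δ ↔ 0 ≤ min 0 δ - δ + τ) : |τ| < |δ| := by
  rcases lt_or_gt_of_ne hδ with hδ0 | hδ0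
  · rw [min_eq_right hδ0.le] at h h'
    have hτ : 0 ≤ τ := by simpa using h'
    rw [abs_of_neg hδ0, abs_of_nonneg hτ]
    linarith [not_le.mp (mt h.mpr hδ0.not_ge)]
  · rw [min_eq_left hδ0.le] at h h'
    have hτ : 0 ≤ τ := by simpa using h
    rw [abs_of_pos hδ0, abs_of_nonneg hτ]
    linarith [not_le.mp (mt h'.mpr (by linarith))]

theorem abs_lt_abs_of_arcIndicator_eq {β : ℝ} (hβ : β ∈ Ioo (0 : ℝ) 1)
    {c e : AddCircle (1 : ℝ)} (hc : c ∈ markedPoints β) (he : e ∈ markedPoints β) {δ τ : ℝ}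
    (hδ : δ ≠ 0) (hδβ : |δ| < ‖(β : AddCircle (1 : ℝ))‖ / 2)
    (hτβ : |τ| < ‖(β : AddCircle (1 : ℝ))‖ / 2)
    (h : arcIndicator β (c + (min 0 δ : ℝ)) = arcIndicator β (c + (min 0 δ : ℝ) + τ))
    (h' : arcIndicator β (e + (min 0 δ - δ : ℝ)) = arcIndicator β (e + (min 0 δ - δ : ℝ) + τ)) :
    |τ| < |δ| := by
  have hmin : |min 0 δ| ≤ |δ| := by rcases min_choice 0 δ with h | h <;> simp [h]
  have hmin' : |min 0 δ - δ| ≤ |δ| := by rcases min_choice 0 δ with h | h <;> simp [h]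
  rw [add_assoc, ← AddCircle.coe_add] at h h'
  refine abs_lt_abs_of_nonneg_iff hδ ((arcIndicator_add_eq_iff hβ hc ?_ ?_).mp h)
    ((arcIndicator_add_eq_iff hβ he ?_ ?_).mp h')
  · linarith [norm_coe_pos hβ]
  · linarith [abs_add_le (min 0 δ) τ]
  · linarith [norm_coe_pos hβ]
  · linarith [abs_add_le (min 0 δ - δ) τ]

-- The itinerary of length `L * k` of a point that is a marked point at time `0` or `k`, and close
-- to one at the other time, recurs within `O(k)` steps. The returning point lies on the same side
-- of the marked points at both times, which bounds its displacement.
theorem exists_return_lt {α β : ℝ} (hα : IsBadlyApproximable (α : AddCircle (1 : ℝ)))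
    (hβ : β ∈ Ioo (0 : ℝ) 1) (h : LinearlyRecurrent (LRot α ![β])) :
    ∃ M : ℕ, 0 < M ∧ ∀ k : ℕ, 0 < k → ∀ c ∈ markedPoints β, ∀ e ∈ markedPoints β,
      k • (α : AddCircle (1 : ℝ)) + c ≠ e →
      ‖k • (α : AddCircle (1 : ℝ)) + c - e‖ < ‖(β : AddCircle (1 : ℝ))‖ / 2 →
      ∃ j : ℕ, 0 < j ∧ j ≤ M * k ∧
        ‖j • (α : AddCircle (1 : ℝ))‖ < ‖k • (α : AddCircle (1 : ℝ)) + c - e‖ := by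
  obtain ⟨K, hK, hrec⟩ := (linearlyRecurrent_LRot_iff α β).mp h
  obtain ⟨L, hL, hcode⟩ := hα.exists_nat_norm_lt_of_arcIndicator_eq hβ
  refine ⟨K * L, by positivity, fun k hk c hc e he hne hlt => ?_⟩
  obtain ⟨δ, hδ, hδ_norm⟩ := exists_coe_eq_and_abs_eq_norm (e - (k • (α : AddCircle (1 : ℝ)) + c))
  rw [norm_sub_rev] at hδ_norm
  set x : AddCircle (1 : ℝ) := c + (min 0 δ : ℝ) with hx
  have hxk : x + k • (α : AddCircle (1 : ℝ)) = e + (min 0 δ - δ : ℝ) := by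
    rw [AddCircle.coe_sub, hδ, hx]; abel
  obtain ⟨j, hj, hjx⟩ :=
    hrec x (x + (α : AddCircle (1 : ℝ))) (L * k) (K * L * k) (by rw [mul_assoc])
  have hLk : L ≤ L * k := Nat.le_mul_of_pos_right L hk
  have hkL : k < L * k := lt_mul_left hk hL
  refine ⟨j + 1, j.succ_pos, by lia, ?_⟩
  obtain ⟨τ, hτ, hτ_norm⟩ := exists_coe_eq_and_abs_eq_norm ((j + 1) • (α : AddCircle (1 : ℝ)))
  have same_code (i : ℕ) (hi : i < L * k) : arcIndicator β (x + i • (α : AddCircle (1 : ℝ))) =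
      arcIndicator β (x + i • (α : AddCircle (1 : ℝ)) + τ) := by
    rw [hjx i hi, hτ]
    congr 1
    simp only [add_nsmul, one_nsmul]; abel
  have hτβ : |τ| < ‖(β : AddCircle (1 : ℝ))‖ / 2 := by
    rw [hτ_norm]
    refine hcode x _ fun i hi => ?_
    rw [same_code i (by lia), hτ, add_right_comm]
  rw [← hτ_norm, ← hδ_norm]
  rw [← hδ_norm] at hlt
  refine abs_lt_abs_of_arcIndicator_eq hβ hc he ?_ hlt hτβ ?_ ?_
  · rw [← abs_pos, hδ_norm, norm_pos_iff]
    exact sub_ne_zero.mpr hne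
  · simpa [hx] using same_code 0 (by lia)
  · rw [← hxk, same_code k hkL]

theorem orbitSeparated_of_linearlyRecurrent {α β : ℝ}
    (hα : IsBadlyApproximable (α : AddCircle (1 : ℝ))) (hβ : β ∈ Ioo (0 : ℝ) 1)
    (hβα : β ∉ ZPlusAlphaZ α) (h : LinearlyRecurrent (LRot α ![β])) :
    OrbitSeparated (α : AddCircle (1 : ℝ)) (markedPoints β) := by
  obtain ⟨M, hM, hreturn⟩ := exists_return_lt hα hβ h
  obtain ⟨b, hb, hbα⟩ := hα
  refine ⟨min (b / M) (‖(β : AddCircle (1 : ℝ))‖ / 2),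
    lt_min (by positivity) (half_pos (norm_coe_pos hβ)), fun k hk c hc e he => ?_⟩
  have hk1 : (1 : ℝ) ≤ k := by exact_mod_cast hk
  set r := ‖k • (α : AddCircle (1 : ℝ)) + c - e‖
  rcases lt_or_ge r (‖(β : AddCircle (1 : ℝ))‖ / 2) with hr | hr
  · obtain ⟨j, hj, hjM, hjr⟩ := hreturn k hk c hc e he
      (nsmul_add_ne_of_mem_markedPoints ⟨b, hb, hbα⟩ hβα hk hc he) hr
    refine (min_le_left _ _).trans ?_
    rw [div_le_iff₀ (by positivity)]
    calc b ≤ j * ‖j • (α : AddCircle (1 : ℝ))‖ := hbα j hj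
      _ ≤ (M * k : ℕ) * r := by gcongr
      _ = k * r * M := by push_cast; ring
  · calc _ ≤ 1 * (‖(β : AddCircle (1 : ℝ))‖ / 2) := by rw [one_mul]; exact min_le_right _ _
      _ ≤ k * r := by gcongr

theorem linearlyRecurrent_iff_orbitSeparated {α β : ℝ}
    (hα : IsBadlyApproximable (α : AddCircle (1 : ℝ))) (hβ : β ∈ Ioo (0 : ℝ) 1)
    (hβα : β ∉ ZPlusAlphaZ α) : LinearlyRecurrent (LRot α ![β]) ↔
      OrbitSeparated (α : AddCircle (1 : ℝ)) (markedPoints β) :=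
  ⟨orbitSeparated_of_linearlyRecurrent hα hβ hβα, OrbitSeparated.linearlyRecurrent hβ⟩

/-! ### Rigidity and Birkhoff sums -/

theorem isAddLeftInvariant_of_measurePreserving_add_right {G : Type*} [AddCommGroup G]
    [TopologicalSpace G] [IsTopologicalAddGroup G] [MeasurableSpace G] [BorelSpace G]
    [HasOuterApproxClosed G] [FirstCountableTopology G] {ν : Measure G} [IsFiniteMeasure ν] {a : G}
    (h : MeasurePreserving (· + a) ν ν) (ha : DenseRange fun n : ℤ => n • a) :
    ν.IsAddLeftInvariant := by
  refine ⟨fun t => ?_⟩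
  refine ext_of_forall_integral_eq_of_IsFiniteMeasure fun f => ?_
  rw [integral_map (measurable_const_add t).aemeasurable f.continuous.aestronglyMeasurable]
  have hcont : Continuous fun s => ∫ x, f (s + x) ∂ν :=
    continuous_of_dominated (bound := fun _ => ‖f‖)
      (fun s => (f.continuous.comp (continuous_const_add s)).aestronglyMeasurable)
      (fun s => .of_forall fun x => f.norm_coe_le_norm _) (integrable_const _)
      (.of_forall fun x => f.continuous.comp (continuous_add_const x))
  have hstep (s : G) : ∫ x, f (s + a + x) ∂ν = ∫ x, f (s + x) ∂ν := by
    rw [← h.integral_comp (MeasurableEquiv.addRight a).measurableEmbedding fun x => f (s + x)]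
    simp only [add_assoc, add_comm a]
  have hmul (n : ℤ) : ∫ x, f (n • a + x) ∂ν = ∫ x, f x ∂ν := by
    induction n using Int.induction_on with
    | zero => simp only [zero_zsmul, zero_add]
    | succ n ih => rw [add_zsmul, one_zsmul, hstep, ih]
    | pred n ih => rw [← ih, ← hstep, sub_zsmul, one_zsmul, neg_add_cancel_right]
  exact congrFun (ha.equalizer hcont continuous_const (funext hmul)) t

theorem eq_volume_of_measurePreserving_rotMap {α : ℝ} (hα : Irrational α)
    {ν : Measure (AddCircle (1 : ℝ))} [IsProbabilityMeasure ν]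
    (h : MeasurePreserving (rotMap α) ν ν) : ν = volume := by
  have := isAddLeftInvariant_of_measurePreserving_add_right h
    (AddCircle.denseRange_zsmul_coe_iff.mpr (by simpa using hα))
  have : ν.IsAddHaarMeasure := Measure.isAddHaarMeasure_of_isCompact_nonempty_interior ν univ
    isCompact_univ (by simp) (by simp) (by simp)
  have : IsProbabilityMeasure (volume : Measure (AddCircle (1 : ℝ))) := ⟨by simp⟩
  exact Measure.isAddHaarMeasure_eq_of_isProbabilityMeasure ν volume

/-- The Veech 1969 system. -/
noncomputable abbrev veechMap (α β : ℝ) : AddCircle (1 : ℝ) × Fin 2 → AddCircle (1 : ℝ) × Fin 2 :=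
  VST α ![β] ![Equiv.swap 0 1, 1]

/-- `arcVisits α β n z` is the number of visits of `z, Rz, …, R^(n-1) z` to the arc `[0, β)`. -/
noncomputable abbrev arcVisits (α β : ℝ) : ℕ → AddCircle (1 : ℝ) → ℤ :=
  birkhoffSum (rotMap α) (arcIndicator β)

theorem measurePreserving_fst_of_veechMap {α β : ℝ} (hα : Irrational α)
    {μ : Measure (AddCircle (1 : ℝ) × Fin 2)} [IsProbabilityMeasure μ]
    (h : MeasurePreserving (veechMap α β) μ μ) : MeasurePreserving Prod.fst μ volume := by
  refine ⟨measurable_fst, ?_⟩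
  have := Measure.isProbabilityMeasure_map (μ := μ) measurable_fst.aemeasurable
  have hrot : Measurable (rotMap α) := measurable_add_const _
  refine eq_volume_of_measurePreserving_rotMap hα ⟨hrot, ?_⟩
  rw [Measure.map_map hrot measurable_fst]
  change μ.map (Prod.fst ∘ veechMap α β) = _
  rw [← Measure.map_map measurable_fst h.measurable, h.map_eq]

theorem iterate_veechMap (α β : ℝ) (n : ℕ) (z : AddCircle (1 : ℝ)) (s : Fin 2) :
    (veechMap α β)^[n] (z, s) =
      (z + n • (α : AddCircle (1 : ℝ)), (Equiv.swap 0 1 ^ arcVisits α β n z) s) := by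
  rw [← iterate_rotMap]
  induction n with
  | zero => simp [arcVisits]
  | succ n ih =>
    rw [Function.iterate_succ_apply', ih, arcVisits, birkhoffSum_succ, zpow_add, zpow_mul_comm,
      Function.iterate_succ_apply']
    simp only [VST, sigmaOf, atomIdx_singleton, arcIndicator]
    split_ifs <;> simp

theorem swap_zpow_apply_eq_self_iff (n : ℤ) (s : Fin 2) :
    ((Equiv.swap 0 1 : Equiv.Perm (Fin 2)) ^ n) s = s ↔ Even n := by
  obtain ⟨m, rfl | rfl⟩ := n.even_or_odd'
  · simp [zpow_mul, zpow_ofNat, pow_two]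
  · rw [zpow_add, zpow_mul, zpow_ofNat, pow_two, Equiv.swap_mul_self, one_zpow, one_mul, zpow_one]
    refine iff_of_false ?_ (Int.not_even_two_mul_add_one m)
    fin_cases s <;> simp

theorem measurable_arcVisits (α β : ℝ) (n : ℕ) : Measurable (arcVisits α β n) := by
  unfold arcVisits birkhoffSum
  simp only [iterate_rotMap]
  exact Finset.measurable_sum _ fun j _ =>
    (measurable_arcIndicator β).comp (measurable_add_const _)

theorem measurableSet_odd_arcVisits (α β : ℝ) (n : ℕ) :
    MeasurableSet {z | Odd (arcVisits α β n z)} :=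
  measurable_arcVisits α β n (MeasurableSet.of_discrete (s := {m | Odd m}))

theorem measure_image_symmDiff_eq {X : Type*} [MeasurableSpace X] {μ : Measure X} {T : X → X}
    (h : MeasurePreserving T μ μ) (hT : MeasurableEmbedding T) {A : Set X} (hA : MeasurableSet A) :
    μ ((T '' A) ∆ A) = μ (A ∆ (T ⁻¹' A)) := by
  rw [← h.measure_preimage (((hT.measurableSet_image' hA)).symmDiff hA).nullMeasurableSet,
    preimage_symmDiff, preimage_image_eq _ hT.injective]

theorem measurableEmbedding_iterate_veechMap {α β : ℝ} (hT : Measurable (veechMap α β)) (n : ℕ) :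
    MeasurableEmbedding (veechMap α β)^[n] := by
  refine (hT.iterate n).measurableEmbedding fun x y hxy => ?_
  obtain ⟨⟨z, s⟩, z', s'⟩ := x, y
  rw [iterate_veechMap, iterate_veechMap, Prod.mk.injEq] at hxy
  obtain ⟨rfl, h⟩ := And.imp_left add_right_cancel hxy
  rw [(Equiv.injective _) h]

theorem rigid_veechMap_iff_preimage {α β : ℝ} {μ : Measure (AddCircle (1 : ℝ) × Fin 2)}
    (h : MeasurePreserving (veechMap α β) μ μ) : Rigid (veechMap α β) μ ↔
      ∃ q : ℕ → ℕ, Tendsto q atTop atTop ∧ ∀ A, MeasurableSet A →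
        Tendsto (fun n => μ (A ∆ ((veechMap α β)^[q n] ⁻¹' A))) atTop (nhds 0) := by
  refine exists_congr fun q => and_congr_right fun _ => forall₂_congr fun A hA => ?_
  simp only [measure_image_symmDiff_eq (h.iterate _)
    (measurableEmbedding_iterate_veechMap h.measurable _) hA]

theorem tendsto_measure_symmDiff_preimage_add_right {G : Type*} [AddCommGroup G]
    [TopologicalSpace G] [IsTopologicalAddGroup G] [MeasurableSpace G] [BorelSpace G]
    (ν : Measure G) [ν.IsAddRightInvariant] [ν.InnerRegularCompactLTTop] [IsLocallyFiniteMeasure ν]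
    {s : Set G} (hs : NullMeasurableSet s ν) (hνs : ν s ≠ ∞) :
    Tendsto (fun t => ν (((· + t) ⁻¹' s) ∆ s)) (nhds 0) (nhds 0) := by
  let addition : C(G × G, G) := ⟨fun p => p.2 + p.1, by fun_prop⟩
  have tendsto_curry : Tendsto addition.curry (nhds 0) (nhds (ContinuousMap.id G)) := by
    convert addition.curry.continuous.tendsto 0
    exact ContinuousMap.ext fun x => (add_zero x).symm
  have := tendsto_measure_symmDiff_preimage_nhds_zero (μ := ν) (ν := ν) tendsto_curry
    (.of_forall fun t => measurePreserving_add_right ν t) (.id ν) hs hνs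
  exact this

theorem min_le_measureReal_arcIndicator_ne {β : ℝ} (hβ : β ∈ Ioo (0 : ℝ) 1)
    (t : AddCircle (1 : ℝ)) : min ‖t‖ (‖(β : AddCircle (1 : ℝ))‖ / 2) ≤
      volume.real {z | arcIndicator β z ≠ arcIndicator β (z + t)} := by
  obtain ⟨w, hw⟩ := exists_ball_arcIndicator_ne hβ t
  set r := min ‖t‖ (‖(β : AddCircle (1 : ℝ))‖ / 2)
  have hr0 : 0 ≤ r := le_min (norm_nonneg _) (by positivity)
  have hr1 : r ≤ 1 := by
    have := AddCircle.norm_le_half_period 1 one_ne_zero (x := t)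
    rw [abs_one] at this
    exact (min_le_left _ _).trans (by linarith)
  calc r = volume.real (Metric.ball w (r / 2)) := by
        rw [measureReal_congr (AddCircle.closedBall_ae_eq_ball).symm, measureReal_def,
          AddCircle.volume_closedBall, mul_div_cancel₀ _ two_ne_zero, min_eq_right hr1,
          ENNReal.toReal_ofReal hr0]
    _ ≤ _ := measureReal_mono hw

theorem symmDiff_preimage_iterate_veechMap_snd (α β : ℝ) (n : ℕ) :
    (Prod.snd ⁻¹' {0}) ∆ ((veechMap α β)^[n] ⁻¹' (Prod.snd ⁻¹' {0})) =
      Prod.fst ⁻¹' {z | Odd (arcVisits α β n z)} := by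
  ext ⟨z, s⟩
  have hs := swap_zpow_apply_eq_self_iff (arcVisits α β n z) s
  simp only [mem_symmDiff, mem_preimage, mem_singleton_iff, mem_ofPred_eq, iterate_veechMap,
    ← Int.not_even_iff_odd, ← hs]
  generalize (Equiv.swap (0 : Fin 2) 1 ^ arcVisits α β n z) s = s'
  lia

theorem symmDiff_preimage_iterate_veechMap_fst (α β : ℝ) (n : ℕ) :
    (Prod.fst ⁻¹' (arcIndicator β ⁻¹' {1})) ∆
        ((veechMap α β)^[n] ⁻¹' (Prod.fst ⁻¹' (arcIndicator β ⁻¹' {1}))) =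
      Prod.fst ⁻¹' {z | arcIndicator β z ≠ arcIndicator β (z + n • (α : AddCircle (1 : ℝ)))} := by
  ext ⟨z, s⟩
  have h₁ := arcIndicator_eq_zero_or_one β z
  have h₂ := arcIndicator_eq_zero_or_one β (z + n • (α : AddCircle (1 : ℝ)))
  simp only [mem_symmDiff, mem_preimage, mem_singleton_iff, mem_ofPred_eq, iterate_veechMap]
  lia

theorem measurableSet_arcIndicator_ne (β : ℝ) (t : AddCircle (1 : ℝ)) :
    MeasurableSet {z | arcIndicator β z ≠ arcIndicator β (z + t)} :=
  (measurableSet_eq_fun (measurable_arcIndicator β)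
    ((measurable_arcIndicator β).comp (measurable_add_const t))).compl

theorem Rigid.frequently_norm_nsmul_lt_and_measureReal_odd_lt {α β : ℝ}
    {μ : Measure (AddCircle (1 : ℝ) × Fin 2)} (hrigid : Rigid (veechMap α β) μ)
    (h : MeasurePreserving (veechMap α β) μ μ) (hfst : MeasurePreserving Prod.fst μ volume)
    (hβ : β ∈ Ioo (0 : ℝ) 1) {ε : ℝ} (hε : 0 < ε) :
    ∃ᶠ n : ℕ in atTop, ‖n • (α : AddCircle (1 : ℝ))‖ < ε ∧
      volume.real {z | Odd (arcVisits α β n z)} < ε := by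
  obtain ⟨q, hq, hrigid⟩ := (rigid_veechMap_iff_preimage h).1 hrigid
  have hodd := hrigid (Prod.snd ⁻¹' {0}) (measurable_snd (measurableSet_singleton _))
  have hne := hrigid (Prod.fst ⁻¹' (arcIndicator β ⁻¹' {1}))
    (measurable_fst (measurable_arcIndicator β (measurableSet_singleton _)))
  simp only [symmDiff_preimage_iterate_veechMap_snd, symmDiff_preimage_iterate_veechMap_fst,
    hfst.measure_preimage (measurableSet_odd_arcVisits α β _).nullMeasurableSet,
    hfst.measure_preimage (measurableSet_arcIndicator_ne β _).nullMeasurableSet] at hodd hne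
  replace hodd := (ENNReal.tendsto_toReal ENNReal.zero_ne_top).comp hodd
  replace hne := (ENNReal.tendsto_toReal ENNReal.zero_ne_top).comp hne
  have hβ' := norm_coe_pos hβ
  refine hq.frequently (Eventually.frequently ?_)
  filter_upwards [hodd.eventually_lt_const hε,
    hne.eventually_lt_const (lt_min hε (half_pos hβ'))] with n hn_odd hn_ne
  refine ⟨?_, hn_odd⟩
  have := (min_le_measureReal_arcIndicator_ne hβ _).trans_lt hn_ne
  exact (lt_min_iff.1 ((min_lt_iff.1 this).resolve_right fun h => (lt_min_iff.1 h).2.false)).1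

theorem measure_symmDiff_preimage_iterate_veechMap_le {α β : ℝ}
    {μ : Measure (AddCircle (1 : ℝ) × Fin 2)} (hfst : MeasurePreserving Prod.fst μ volume)
    {A : Set (AddCircle (1 : ℝ) × Fin 2)} (hA : MeasurableSet A) (n : ℕ) :
    μ (A ∆ ((veechMap α β)^[n] ⁻¹' A)) ≤ volume {z | Odd (arcVisits α β n z)} +
      ∑ s, volume (((· + n • (α : AddCircle (1 : ℝ))) ⁻¹' ((·, s) ⁻¹' A)) ∆ ((·, s) ⁻¹' A)) := by
  have hsection (s : Fin 2) :
      MeasurableSet ((fun z : AddCircle (1 : ℝ) => (z, s)) ⁻¹' A) := measurable_prodMk_right hA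
  simp_rw [← hfst.measure_preimage (measurableSet_odd_arcVisits α β n).nullMeasurableSet,
    ← hfst.measure_preimage
      (((measurable_add_const _) (hsection _)).symmDiff (hsection _)).nullMeasurableSet]
  refine (measure_mono ?_).trans ((measure_union_le _ _).trans
    (add_le_add_right (measure_biUnion_finset_le Finset.univ _) _))
  rintro ⟨z, s⟩ hp
  rw [mem_union, or_iff_not_imp_left]
  intro heven
  rw [mem_preimage, mem_ofPred_eq, Int.not_odd_iff_even, ← swap_zpow_apply_eq_self_iff _ s]
    at heven
  refine mem_biUnion (Finset.mem_univ s) ?_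
  rwa [symmDiff_comm, mem_symmDiff, mem_preimage, iterate_veechMap, heven] at hp

theorem rigid_veechMap_of_frequently {α β : ℝ} {μ : Measure (AddCircle (1 : ℝ) × Fin 2)}
    (h : MeasurePreserving (veechMap α β) μ μ) (hfst : MeasurePreserving Prod.fst μ volume)
    (hreturn : ∀ ε > 0, ∃ᶠ n : ℕ in atTop, ‖n • (α : AddCircle (1 : ℝ))‖ < ε ∧
      volume.real {z | Odd (arcVisits α β n z)} < ε) : Rigid (veechMap α β) μ := by
  choose q hq hnorm hodd using fun n : ℕ =>
    (hreturn (1 / (n + 1)) Nat.one_div_pos_of_nat).forall_exists_of_atTop n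
  have hnorm : Tendsto (fun n => q n • (α : AddCircle (1 : ℝ))) atTop (nhds 0) :=
    squeeze_zero_norm (fun n => (hnorm n).le) tendsto_one_div_add_atTop_nhds_zero_nat
  have hodd : Tendsto (fun n => volume {z | Odd (arcVisits α β (q n) z)}) atTop (nhds 0) := by
    rw [← ENNReal.tendsto_toReal_iff (fun _ => measure_ne_top _ _) ENNReal.zero_ne_top]
    exact squeeze_zero (fun n => measureReal_nonneg) (fun n => (hodd n).le)
      tendsto_one_div_add_atTop_nhds_zero_nat
  refine (rigid_veechMap_iff_preimage h).2 ⟨q, tendsto_atTop_mono hq tendsto_id, fun A hA => ?_⟩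
  refine tendsto_of_tendsto_of_tendsto_of_le_of_le tendsto_const_nhds ?_ (fun _ => zero_le)
    fun n => measure_symmDiff_preimage_iterate_veechMap_le hfst hA (q n)
  have hsection (s : Fin 2) := (tendsto_measure_symmDiff_preimage_add_right volume
    (measurable_prodMk_right (y := s) hA).nullMeasurableSet (measure_ne_top _ _)).comp hnorm
  simpa only [Finset.sum_const_zero, add_zero, Function.comp_apply] using
    hodd.add (tendsto_finsetSum Finset.univ fun s _ => hsection s)

theorem mem_of_iterate_mem_of_disjoint_symmDiff {X : Type*} {R : X → X} {E : Set X} {N : ℕ}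
    (hdisj : ∀ j, 0 < j → j < N → Disjoint (E ∆ (R ⁻¹' E)) (R^[j] ⁻¹' (E ∆ (R ⁻¹' E))))
    {j : ℕ} (hj : j < N) {x : X} (hx : R^[j] x ∈ E \ R ⁻¹' E) : x ∈ E := by
  induction j generalizing x with
  | zero => exact hx.1
  | succ j ih =>
    by_contra hxE
    exact (hdisj (j + 1) j.succ_pos hj).le_bot ⟨.inr ⟨ih (by lia) hx, hxE⟩, .inl hx⟩

-- Between two visits to `E ∆ R⁻¹E` an orbit stays on one side of `E`, so the first `N` preimages
-- of `E \ R⁻¹E` are disjoint and contained in `E`.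
theorem mul_measureReal_symmDiff_preimage_le {X : Type*} [MeasurableSpace X] {μ : Measure X}
    [IsFiniteMeasure μ] {R : X → X} (hR : MeasurePreserving R μ μ) {E : Set X}
    (hE : MeasurableSet E) {N : ℕ}
    (hdisj : ∀ j, 0 < j → j < N → Disjoint (E ∆ (R ⁻¹' E)) (R^[j] ⁻¹' (E ∆ (R ⁻¹' E)))) :
    N * μ.real (E ∆ (R ⁻¹' E)) ≤ 2 * μ.real E := by
  have hRE : MeasurableSet (R ⁻¹' E) := hR.measurable hE
  have hsymm : μ.real (E ∆ (R ⁻¹' E)) = 2 * μ.real (E \ R ⁻¹' E) := by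
    rw [measureReal_symmDiff_eq (μ := μ) hE hRE, two_mul,
      measureReal_def, measureReal_def, measure_sdiff_symm hE.nullMeasurableSet
        hRE.nullMeasurableSet (hR.measure_preimage hE.nullMeasurableSet).symm (measure_ne_top _ _)]
  have hpairwise : (Finset.range N : Set ℕ).PairwiseDisjoint
      fun j => R^[j] ⁻¹' (E \ R ⁻¹' E) := by
    intro i hi j hj hij
    wlog hlt : i < j generalizing i j
    · exact (this hj hi hij.symm (by lia)).symm
    obtain ⟨k, rfl⟩ := Nat.exists_eq_add_of_lt hlt
    rw [Finset.coe_range, mem_Iio] at hj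
    have := (hdisj (k + 1) k.succ_pos (by lia)).preimage R^[i]
    rw [← preimage_comp, ← Function.iterate_add, add_comm (k + 1), ← add_assoc] at this
    exact this.mono (preimage_mono subset_union_left) (preimage_mono subset_union_left)
  have hsum : ∑ j ∈ Finset.range N, μ.real (R^[j] ⁻¹' (E \ R ⁻¹' E)) ≤ μ.real E := by
    rw [← measureReal_biUnion_finset hpairwise fun j _ =>
      (hR.measurable.iterate j) (hE.diff hRE)]
    refine measureReal_mono (iUnion₂_subset fun j hj x hx => ?_)
    exact mem_of_iterate_mem_of_disjoint_symmDiff hdisj (Finset.mem_range.1 hj) hx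
  simp only [(hR.iterate _).measureReal_preimage (hE.diff hRE).nullMeasurableSet,
    Finset.sum_const, Finset.card_range, nsmul_eq_mul] at hsum
  rw [hsymm]
  linarith

theorem symmDiff_preimage_rotMap_odd_arcVisits (α β : ℝ) (n : ℕ) :
    {z | Odd (arcVisits α β n z)} ∆ (rotMap α ⁻¹' {z | Odd (arcVisits α β n z)}) =
      {z | arcIndicator β z ≠ arcIndicator β (z + n • (α : AddCircle (1 : ℝ)))} := by
  ext z
  have hdiff := birkhoffSum_apply_sub_birkhoffSum (rotMap α) (arcIndicator β) n z
  rw [iterate_rotMap] at hdiff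
  have h₁ := arcIndicator_eq_zero_or_one β z
  have h₂ := arcIndicator_eq_zero_or_one β (z + n • (α : AddCircle (1 : ℝ)))
  simp only [mem_symmDiff, mem_preimage, mem_ofPred_eq, arcVisits]
  grind

theorem disjoint_preimage_arcIndicator_ne {α β c : ℝ} (hβ : β ∈ Ioo (0 : ℝ) 1)
    (hsep : ∀ k : ℕ, 0 < k → ∀ x ∈ markedPoints β, ∀ y ∈ markedPoints β,
      c ≤ k * ‖k • (α : AddCircle (1 : ℝ)) + x - y‖) {t : AddCircle (1 : ℝ)} {j N : ℕ}
    (hj₀ : 0 < j) (hj : j < N) (hN : N * (2 * ‖t‖) < c) :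
    Disjoint {z | arcIndicator β z ≠ arcIndicator β (z + t)}
      ((rotMap α)^[j] ⁻¹' {z | arcIndicator β z ≠ arcIndicator β (z + t)}) := by
  refine disjoint_left.2 fun z hz hzj => hN.not_ge ?_
  rw [mem_preimage, iterate_rotMap] at hzj
  obtain ⟨x, hx, hzx⟩ := exists_markedPoint_near_of_arcIndicator_ne hβ (Ne.symm hz)
  obtain ⟨y, hy, hzy⟩ := exists_markedPoint_near_of_arcIndicator_ne hβ (Ne.symm hzj)
  calc c ≤ N * ‖(z + 0 • (α : AddCircle (1 : ℝ)) - x) - (z + j • (α : AddCircle (1 : ℝ)) - y)‖ :=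
        le_mul_norm_sub_of_ne hsep (by lia) hj hj₀.ne hx hy z
    _ ≤ N * (2 * ‖t‖) := by
        gcongr
        rw [zero_nsmul, add_zero, two_mul]
        exact (norm_sub_le _ _).trans (add_le_add hzx hzy)

theorem OrbitSeparated.exists_le_measureReal_odd_arcVisits {α β : ℝ} (hβ : β ∈ Ioo (0 : ℝ) 1)
    (hsep : OrbitSeparated (α : AddCircle (1 : ℝ)) (markedPoints β)) :
    ∃ ε > 0, ∀ n : ℕ, 0 < n → ‖n • (α : AddCircle (1 : ℝ))‖ < ε →
      ε ≤ volume.real {z | Odd (arcVisits α β n z)} := by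
  obtain ⟨c, hc, hsep⟩ := hsep
  have hβ₀ := norm_coe_pos hβ
  refine ⟨min (c / 16) (‖(β : AddCircle (1 : ℝ))‖ / 2), by positivity, fun n hn hnorm => ?_⟩
  obtain ⟨hnorm_c, hnorm_β⟩ := lt_min_iff.1 hnorm
  set t := n • (α : AddCircle (1 : ℝ))
  set N := ⌊c / (4 * ‖t‖)⌋₊
  have ht : 0 < ‖t‖ := by
    have := hsep n hn 0 (.inl rfl) 0 (.inl rfl)
    rw [add_zero, sub_zero] at this
    exact pos_of_mul_pos_right (hc.trans_le this) n.cast_nonneg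
  have hN_le : N * (4 * ‖t‖) ≤ c := (le_div_iff₀ (by positivity)).1 (Nat.floor_le (by positivity))
  have hN_gt : c < (N + 1) * (4 * ‖t‖) := (div_lt_iff₀ (by positivity)).1 (Nat.lt_floor_add_one _)
  have hjump := symmDiff_preimage_rotMap_odd_arcVisits α β n
  have hrot : MeasurePreserving (rotMap α) volume volume := measurePreserving_add_right volume _
  have hmul := mul_measureReal_symmDiff_preimage_le hrot (measurableSet_odd_arcVisits α β n)
    (N := N) (hjump ▸ fun j hj₀ hj => disjoint_preimage_arcIndicator_ne hβ hsep hj₀ hj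
      (by linarith))
  have hjump_ge : ‖t‖ ≤ volume.real {z | arcIndicator β z ≠ arcIndicator β (z + t)} := by
    simpa only [min_eq_left hnorm_β.le] using min_le_measureReal_arcIndicator_ne hβ t
  rw [hjump] at hmul
  refine (min_le_left _ _).trans ?_
  have := mul_le_mul_of_nonneg_left hjump_ge N.cast_nonneg
  linarith

theorem birkhoffSum_iterate_sub_birkhoffSum_comm {X G : Type*} [AddCommGroup G] (f : X → X)
    (g : X → G) (m n : ℕ) (x : X) :
    birkhoffSum f g m (f^[n] x) - birkhoffSum f g m x =
      birkhoffSum f g n (f^[m] x) - birkhoffSum f g n x := by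
  rw [sub_eq_sub_iff_add_eq_add, add_comm, ← birkhoffSum_add, add_comm n, birkhoffSum_add, add_comm]

theorem birkhoffSum_circleRepr_add_coe {α s : ℝ} {n : ℕ} {z : AddCircle (1 : ℝ)}
    (hs : ∀ j < n, |s| < ‖z + j • (α : AddCircle (1 : ℝ))‖) :
    birkhoffSum (rotMap α) circleRepr n (z + (s : AddCircle (1 : ℝ))) =
      birkhoffSum (rotMap α) circleRepr n z + n * s := by
  simp only [birkhoffSum, iterate_rotMap, add_right_comm z]
  rw [Finset.sum_congr rfl fun j hj => circleRepr_add_coe (hs j (Finset.mem_range.1 hj)),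
    Finset.sum_add_distrib, Finset.sum_const, Finset.card_range, nsmul_eq_mul]

theorem birkhoffSum_circleRepr_add_zsmul {α d : ℝ} {n : ℕ}
    (hd : (d : AddCircle (1 : ℝ)) = n • (α : AddCircle (1 : ℝ))) {l : ℤ} {z : AddCircle (1 : ℝ)}
    (hz : ∀ i ∈ Finset.Icc (-|l|) |l|, |d| < ‖z + i • (α : AddCircle (1 : ℝ))‖) :
    birkhoffSum (rotMap α) circleRepr n (z + l • (α : AddCircle (1 : ℝ))) =
      birkhoffSum (rotMap α) circleRepr n z + l * d := by
  have hswap (m : ℕ) (w : AddCircle (1 : ℝ))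
      (hw : ∀ j < m, |d| < ‖w + j • (α : AddCircle (1 : ℝ))‖) :
      birkhoffSum (rotMap α) circleRepr n (w + m • (α : AddCircle (1 : ℝ))) =
        birkhoffSum (rotMap α) circleRepr n w + m * d := by
    have := birkhoffSum_iterate_sub_birkhoffSum_comm (rotMap α) circleRepr n m w
    rw [iterate_rotMap, iterate_rotMap, ← hd, birkhoffSum_circleRepr_add_coe hw] at this
    linarith
  obtain ⟨m, rfl | rfl⟩ := l.eq_nat_or_neg
  · simpa only [natCast_zsmul, Int.cast_natCast] using hswap m z fun j hj => by
      simpa only [natCast_zsmul] using hz j (by grind)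
  · have := hswap m (z + (-m : ℤ) • (α : AddCircle (1 : ℝ))) fun j hj => by
      simpa only [add_assoc, ← natCast_zsmul, ← add_zsmul] using hz (-m + j) (by grind)
    rw [← natCast_zsmul, add_assoc, ← add_zsmul, neg_add_cancel, zero_zsmul, add_zero] at this
    push_cast
    linarith

theorem cast_arcVisits_eq {α β δ d : ℝ} (hβ : β ∈ Ioo (0 : ℝ) 1) {n : ℕ} {k : ℤ}
    (hd : (d : AddCircle (1 : ℝ)) = n • (α : AddCircle (1 : ℝ)))
    (hδ : (δ : AddCircle (1 : ℝ)) = β - k • (α : AddCircle (1 : ℝ))) {z : AddCircle (1 : ℝ)}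
    (hz : ∀ i ∈ Finset.Icc (-|k|) |k|, |d| < ‖z + i • (α : AddCircle (1 : ℝ))‖)
    (hz' : ∀ i ∈ Finset.Ico (-k) (n - k), |δ| < ‖z + i • (α : AddCircle (1 : ℝ))‖) :
    (arcVisits α β n z : ℝ) = n * (β - δ) - k * d := by
  have hsum : (arcVisits α β n z : ℝ) = n * β +
      (birkhoffSum (rotMap α) circleRepr n (z - (β : AddCircle (1 : ℝ))) -
        birkhoffSum (rotMap α) circleRepr n z) := by
    simp only [birkhoffSum, Int.cast_sum, cast_arcIndicator hβ, iterate_rotMap, sub_add_eq_add_sub,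
      Finset.sum_sub_distrib, Finset.sum_add_distrib, Finset.sum_const, Finset.card_range,
      nsmul_eq_mul]
    ring
  have hsub : z - (β : AddCircle (1 : ℝ)) =
      z + (-k) • (α : AddCircle (1 : ℝ)) + ((-δ : ℝ) : AddCircle (1 : ℝ)) := by
    rw [AddCircle.coe_neg, hδ, neg_zsmul]; abel
  have hshift (j : ℕ) (hj : j < n) :
      |-δ| < ‖z + (-k) • (α : AddCircle (1 : ℝ)) + j • (α : AddCircle (1 : ℝ))‖ := by
    rw [abs_neg, add_assoc, ← natCast_zsmul, ← add_zsmul]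
    exact hz' _ (Finset.mem_Ico.2 (by lia))
  rw [hsum, hsub, birkhoffSum_circleRepr_add_coe hshift,
    birkhoffSum_circleRepr_add_zsmul hd (by simpa only [abs_neg] using hz)]
  push_cast
  ring

/-- The points which come within `r` of `0` when translated by `i • a`, for some `i ∈ s`. -/
def translatesNearZero {G : Type*} [SeminormedAddCommGroup G] (a : G) (s : Finset ℤ) (r : ℝ) :
    Set G :=
  ⋃ i ∈ s, Metric.closedBall (-(i • a)) r

theorem notMem_translatesNearZero_iff {G : Type*} [SeminormedAddCommGroup G] {a : G}
    {s : Finset ℤ} {r : ℝ} {z : G} :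
    z ∉ translatesNearZero a s r ↔ ∀ i ∈ s, r < ‖z + i • a‖ := by
  simp only [translatesNearZero, mem_iUnion, mem_closedBall_iff_norm, sub_neg_eq_add, exists_prop,
    not_exists, not_and, not_le]

theorem measurableSet_translatesNearZero {G : Type*} [SeminormedAddCommGroup G] [MeasurableSpace G]
    [OpensMeasurableSpace G] (a : G) (s : Finset ℤ) (r : ℝ) :
    MeasurableSet (translatesNearZero a s r) :=
  s.measurableSet_biUnion fun _ _ => measurableSet_closedBall

theorem measureReal_translatesNearZero_le (a : AddCircle (1 : ℝ)) (s : Finset ℤ) {r : ℝ}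
    (hr : 0 ≤ r) : volume.real (translatesNearZero a s r) ≤ s.card * (2 * r) := by
  rw [← nsmul_eq_mul]
  refine (measureReal_biUnion_finset_le _ _).trans (Finset.sum_le_card_nsmul _ _ _ fun i _ => ?_)
  rw [measureReal_def, AddCircle.volume_closedBall]
  exact ENNReal.toReal_le_of_le_ofReal (by positivity) (ENNReal.ofReal_le_ofReal (min_le_right _ _))

theorem measureReal_union_translatesNearZero_le (a : AddCircle (1 : ℝ)) (k : ℤ) (n : ℕ)
    {r r' : ℝ} (hr : 0 ≤ r) (hr' : 0 ≤ r') :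
    volume.real (translatesNearZero a (Finset.Icc (-|k|) |k|) r ∪
      translatesNearZero a (Finset.Ico (-k) (n - k)) r') ≤ 2 * ((2 * |k| + 1) * r + n * r') := by
  have hIcc : ((Finset.Icc (-|k|) |k|).card : ℝ) = 2 * |k| + 1 := by
    rw [← Int.cast_natCast, Int.card_Icc_of_le _ _ (by have := abs_nonneg k; lia)]
    push_cast
    ring
  have hIco : ((Finset.Ico (-k) (n - k)).card : ℝ) = n := by
    rw [Int.card_Ico, Nat.cast_inj]; lia
  have h_le := measureReal_translatesNearZero_le a (Finset.Icc (-|k|) |k|) hr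
  have h_le' := measureReal_translatesNearZero_le a (Finset.Ico (-k) (n - k)) hr'
  rw [hIcc] at h_le
  rw [hIco] at h_le'
  refine (measureReal_union_le _ _).trans ?_
  linarith

-- The two halves of a Birkhoff sum of length `2 n` are equal off the exceptional set, so their sum
-- is even there.
theorem measureReal_odd_arcVisits_two_mul_le {α β : ℝ} (hβ : β ∈ Ioo (0 : ℝ) 1) (n : ℕ) (k : ℤ) :
    volume.real {z | Odd (arcVisits α β (2 * n) z)} ≤
      4 * ((2 * |k| + 1) * ‖n • (α : AddCircle (1 : ℝ))‖ +
        n * ‖(β : AddCircle (1 : ℝ)) - k • (α : AddCircle (1 : ℝ))‖) := by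
  obtain ⟨d, hd, hd_abs⟩ := exists_coe_eq_and_abs_eq_norm (n • (α : AddCircle (1 : ℝ)))
  obtain ⟨δ, hδ, hδ_abs⟩ :=
    exists_coe_eq_and_abs_eq_norm ((β : AddCircle (1 : ℝ)) - k • (α : AddCircle (1 : ℝ)))
  rw [← hd_abs, ← hδ_abs]
  set bad := translatesNearZero (α : AddCircle (1 : ℝ)) (Finset.Icc (-|k|) |k|) |d| ∪
    translatesNearZero (α : AddCircle (1 : ℝ)) (Finset.Ico (-k) (n - k)) |δ| with hbad
  have hbad_meas : MeasurableSet bad :=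
    (measurableSet_translatesNearZero _ _ _).union (measurableSet_translatesNearZero _ _ _)
  have hbad_le := measureReal_union_translatesNearZero_le (α : AddCircle (1 : ℝ)) k n
    (abs_nonneg d) (abs_nonneg δ)
  have hvisits (z) (hz : z ∉ bad) : (arcVisits α β n z : ℝ) = n * (β - δ) - k * d := by
    rw [hbad, mem_union, not_or, notMem_translatesNearZero_iff, notMem_translatesNearZero_iff] at hz
    exact cast_arcVisits_eq hβ hd hδ hz.1 hz.2
  have hsub : {z | Odd (arcVisits α β (2 * n) z)} ⊆ bad ∪ (rotMap α)^[n] ⁻¹' bad := by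
    intro z hodd
    by_contra hz
    rw [mem_union, not_or] at hz
    rw [mem_ofPred_eq, arcVisits, two_mul, birkhoffSum_add] at hodd
    have := (hvisits z hz.1).trans (hvisits _ hz.2).symm
    rw [Int.cast_inj] at this
    grind
  have hrot : MeasurePreserving (rotMap α) volume volume := measurePreserving_add_right volume _
  refine (measureReal_mono hsub).trans ((measureReal_union_le _ _).trans ?_)
  rw [(hrot.iterate n).measureReal_preimage hbad_meas.nullMeasurableSet]
  linarith

theorem exists_int_mul_norm_sub_zsmul_lt {α β : ℝ}
    (hα : IsBadlyApproximable (α : AddCircle (1 : ℝ)))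
    (hsep : ¬ OrbitSeparated (α : AddCircle (1 : ℝ)) (markedPoints β)) {ε : ℝ} (hε : 0 < ε) :
    ∃ k : ℤ, k ≠ 0 ∧
      |k| * ‖(β : AddCircle (1 : ℝ)) - k • (α : AddCircle (1 : ℝ))‖ < ε := by
  obtain ⟨c, hc, hα⟩ := hα
  simp only [OrbitSeparated, not_exists, not_and, not_forall, not_le] at hsep
  obtain ⟨k, hk, x, hx, y, hy, hlt⟩ := hsep (min c ε) (lt_min hc hε)
  obtain ⟨hlt_c, hlt_ε⟩ := lt_min_iff.1 hlt
  have hk' : (k : ℤ) ≠ 0 := by lia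
  have hne : x ≠ y := by
    rintro rfl
    rw [add_sub_cancel_right] at hlt_c
    exact (hα k hk).not_gt hlt_c
  rcases hx with rfl | rfl <;> rcases hy with rfl | rfl
  · exact absurd rfl hne
  · refine ⟨k, hk', ?_⟩
    rwa [norm_sub_rev, natCast_zsmul, Nat.abs_cast, Int.cast_natCast, ← add_zero (k • _)]
  · refine ⟨-k, neg_ne_zero.2 hk', ?_⟩
    rwa [neg_zsmul, sub_neg_eq_add, add_comm, natCast_zsmul, abs_neg, Nat.abs_cast,
      Int.cast_natCast, ← sub_zero (k • _ + _)]
  · exact absurd rfl hne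

theorem exists_nat_mul_le_and_mul_norm_nsmul_le (a : AddCircle (1 : ℝ)) {η K : ℝ} (hη : 0 < η)
    (hηK : η ≤ K) : ∃ n : ℕ, 0 < n ∧ n * η ≤ K ∧ K * ‖n • a‖ ≤ η := by
  have hK : 0 < K := hη.trans_le hηK
  have hN : 0 < ⌊K / η⌋₊ := Nat.floor_pos.2 ((one_le_div hη).2 hηK)
  obtain ⟨n, ⟨hn, hnN⟩, hnorm⟩ := AddCircle.exists_norm_nsmul_le a hN
  refine ⟨n, hn, ?_, ?_⟩
  · exact (le_div_iff₀ hη).1 ((Nat.cast_le.2 hnN).trans (Nat.floor_le (by positivity)))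
  · rw [← le_div_iff₀' hK]
    refine hnorm.trans ((div_le_iff₀ (by positivity)).2 ?_)
    rw [div_mul_eq_mul_div, one_le_div hK, Nat.cast_add_one]
    exact ((div_lt_iff₀' hη).1 (Nat.lt_floor_add_one _)).le

theorem frequently_norm_nsmul_lt_and_measureReal_odd_lt {α β : ℝ}
    (hα : IsBadlyApproximable (α : AddCircle (1 : ℝ))) (hβ : β ∈ Ioo (0 : ℝ) 1)
    (hsep : ¬ OrbitSeparated (α : AddCircle (1 : ℝ)) (markedPoints β)) {ε : ℝ} (hε : 0 < ε) :
    ∃ᶠ n : ℕ in atTop, ‖n • (α : AddCircle (1 : ℝ))‖ < ε ∧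
      volume.real {z | Odd (arcVisits α β n z)} < ε := by
  refine frequently_atTop.2 fun m => ?_
  obtain ⟨c, hc, hbad⟩ := id hα
  obtain ⟨η, hη, hηlt⟩ := exists_between (show 0 < min (ε / 16) (min 1 (c / (m + 1))) by positivity)
  simp only [lt_min_iff, lt_div_iff₀ (Nat.cast_add_one_pos (α := ℝ) m)] at hηlt
  obtain ⟨hη_ε, hη_one, hη_m⟩ := hηlt
  obtain ⟨k, hk, hkβ⟩ := exists_int_mul_norm_sub_zsmul_lt hα hsep (ε := η ^ 2) (by positivity)
  have hk_one : (1 : ℝ) ≤ |k| := by exact_mod_cast Int.one_le_abs hk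
  obtain ⟨n, hn, hn_le, hn_norm⟩ := exists_nat_mul_le_and_mul_norm_nsmul_le
    (α : AddCircle (1 : ℝ)) hη (hη_one.le.trans hk_one)
  set θ := ‖n • (α : AddCircle (1 : ℝ))‖
  set δ := ‖(β : AddCircle (1 : ℝ)) - k • (α : AddCircle (1 : ℝ))‖
  have hθ_le : θ ≤ η := (le_mul_of_one_le_left (norm_nonneg _) hk_one).trans hn_norm
  have hmn : (m : ℝ) < n := by
    have : c ≤ n * η := (hbad n hn).trans (by gcongr)
    nlinarith
  have hδ_lt : n * δ < η := by
    have : n * δ * η ≤ |k| * δ := by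
      calc n * δ * η = n * η * δ := by ring
        _ ≤ |k| * δ := by gcongr
    nlinarith
  refine ⟨2 * n, by have := Nat.cast_lt.1 hmn; lia, ?_, ?_⟩
  · rw [mul_nsmul']
    calc ‖2 • n • (α : AddCircle (1 : ℝ))‖ ≤ 2 * θ := by simpa using norm_nsmul_le (n := 2)
      _ < ε := by linarith
  · refine (measureReal_odd_arcVisits_two_mul_le hβ n k).trans_lt ?_
    linarith

theorem rigid_veechMap_iff_not_orbitSeparated {α β : ℝ} (hα : Irrational α)
    (hbad : IsBadlyApproximable (α : AddCircle (1 : ℝ))) (hβ : β ∈ Ioo (0 : ℝ) 1)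
    {μ : Measure (AddCircle (1 : ℝ) × Fin 2)} [IsProbabilityMeasure μ]
    (h : MeasurePreserving (veechMap α β) μ μ) :
    Rigid (veechMap α β) μ ↔ ¬ OrbitSeparated (α : AddCircle (1 : ℝ)) (markedPoints β) := by
  have hfst := measurePreserving_fst_of_veechMap hα h
  refine ⟨fun hrigid hsep => ?_, fun hsep => rigid_veechMap_of_frequently h hfst fun ε hε =>
    frequently_norm_nsmul_lt_and_measureReal_odd_lt hbad hβ hsep hε⟩
  obtain ⟨ε, hε, hodd⟩ := hsep.exists_le_measureReal_odd_arcVisits hβ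
  obtain ⟨n, ⟨hnorm, hlt⟩, hn⟩ :=
    ((hrigid.frequently_norm_nsmul_lt_and_measureReal_odd_lt h hfst hβ hε).and_eventually
      (eventually_gt_atTop 0)).exists
  exact (hodd n hn hnorm).not_gt hlt

theorem stmt_16_general {α β : ℝ} (hα : Irrational α) (hα0 : 0 < α) (hα1 : α < 1)
    (hbpq : BoundedPartialQuotients α) (hβ0 : 0 < β) (hβ1 : β < 1) (hβz : β ∉ ZPlusAlphaZ α)
    (μ : Measure (AddCircle (1 : ℝ) × Fin 2)) [IsProbabilityMeasure μ]
    (h : MeasurePreserving (VST α ![β] ![Equiv.swap (0 : Fin 2) 1, 1]) μ μ) :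
    Rigid (VST α ![β] ![Equiv.swap (0 : Fin 2) 1, 1]) μ ↔ ¬ LinearlyRecurrent (LRot α ![β]) := by
  have hbad := hbpq.isBadlyApproximable hα hα0 hα1
  have hβ : β ∈ Ioo (0 : ℝ) 1 := ⟨hβ0, hβ1⟩
  rw [linearlyRecurrent_iff_orbitSeparated hbad hβ hβz]
  exact rigid_veechMap_iff_not_orbitSeparated hα hbad hβ h

theorem stmt_16 (α : ℝ) (hα : Irrational α) (hα0 : 0 < α) (hα1 : α < 1)
    (hbpq : BoundedPartialQuotients α)
    (β : ℝ) (hβirr : Irrational β) (hβ0 : 0 < β) (hβ1 : β < 1)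
    (hβz : β ∉ ZPlusAlphaZ α) :
    (LinearlyRecurrent (LRot α ![β]) →
      ∀ μ : Measure (AddCircle (1 : ℝ) × Fin 2), IsProbabilityMeasure μ →
        Ergodic (VST α ![β] ![Equiv.swap (0 : Fin 2) 1, 1]) μ →
          ¬ Rigid (VST α ![β] ![Equiv.swap (0 : Fin 2) 1, 1]) μ) ∧
    (¬ LinearlyRecurrent (LRot α ![β]) →
      ∀ μ : Measure (AddCircle (1 : ℝ) × Fin 2), IsProbabilityMeasure μ →
        MeasurePreserving (VST α ![β] ![Equiv.swap (0 : Fin 2) 1, 1]) μ μ →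
          Rigid (VST α ![β] ![Equiv.swap (0 : Fin 2) 1, 1]) μ) :=
  ⟨fun hL μ _ hT hrigid =>
      (stmt_16_general hα hα0 hα1 hbpq hβ0 hβ1 hβz μ hT.toMeasurePreserving).1 hrigid hL,
    fun hL μ _ hT => (stmt_16_general hα hα0 hα1 hbpq hβ0 hβ1 hβz μ hT).2 hL⟩
end
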